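/- arXiv:0903.4637 — 4 statements merged into one kernel-verified Lean document; each statement's English description precedes it below -/
import Mathlib

section
/- Let C be a convex body in E^d that is symmetric about the origin (C = −C), and let n ≥ 1. Suppose C is sliced by n−1 hyperplane cuts H_i = {x : ⟨x, u_i⟩ = t_i} (i = 1, ..., n−1, with each u_i a unit vector), the pieces being the sets C ∩ ⋂_{i} {x : ε_i(⟨x,u_i⟩ − t_i) ≥ 0} over all choices of signs ε ∈ {+1,−1}^{n−1}. Then there exists a choice of signs ε and a translation vector v such that v + (1/n)·C is contained in the corresponding piece. -/
open scoped RealInnerProductSpace Pointwise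

/-!
Bang's argument handles a symmetric matrix: given a symmetric `H` and targets `μ`, a sign vector `x`
maximising `⟪x, H x⟫ - 2⟪x, μ⟫` cannot be improved by flipping one sign, which says exactly that
`(H x) i` is at distance at least `H i i` from `μ i`.

Ball reduces the matrix `A i j = f i (x j)` of a general symmetric body, where `x i ∈ C` maximises
`f i`, to this case. Among the contractions `U` choose one maximising `∏ |(A * U) i i| ^ w i`, let
`θ i = 1 / (A * U) i i` and `B = diagonal (w * θ) * A`. The first-order condition at `U` says that
`H = B * U` is positive semidefinite and `B = H * Uᴴ`. With `D = diagonal θ`, expanding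
`0 ≤ tr ((D - U) * H * (D - U)ᴴ)` then gives `∑ w i * θ i ^ 2 ≤ ∑ w i`. Bang's argument applied to
`H` yields `y = U x` with `∑ y i ^ 2 ≤ ∑ w i` and every `(A y) i` at distance at least `√(w i)` from
its target; rescaling `A` and the Cauchy–Schwarz inequality turn `y` into coefficients `l` with
`∑ |l i| ≤ ∑ w i`, and the translation vector is `∑ l j • x j`.
-/

namespace BallPlank

open Filter Matrix Metric Set
open scoped Topology NNReal InnerProduct Matrix.Norms.L2Operator

section Contraction

theorem mem_posTangentConeAt_closedBall_of_norm_add_smul_sq_le {E : Type*} [NormedAddCommGroup E]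
    [NormedSpace ℝ E] {x y : E} {c : ℝ} (hc : 0 ≤ c)
    (h : ∀ τ : ℝ, 0 < τ → ‖x + τ • y‖ ^ 2 ≤ 1 + c * τ ^ 2) :
    y ∈ posTangentConeAt (closedBall 0 1) x := by
  -- Rescaling `x + τ • y` into the ball costs only second order in `τ`.
  let d : ℝ≥0 → E := fun τ ↦ (1 + c * τ ^ 2)⁻¹ • (x + (τ : ℝ) • y) - x
  have hden (τ : ℝ≥0) : 1 ≤ 1 + c * (τ : ℝ) ^ 2 := le_add_of_nonneg_right (by positivity)
  have hcont : Continuous fun τ : ℝ≥0 ↦ (1 + c * (τ : ℝ) ^ 2)⁻¹ :=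
    Continuous.inv₀ (by fun_prop) fun τ ↦ (zero_lt_one.trans_le (hden τ)).ne'
  have hpos : ∀ᶠ τ : ℝ≥0 in 𝓝[>] 0, 0 < τ := self_mem_nhdsWithin
  refine mem_tangentConeAt_of_seq (𝓝[>] (0 : ℝ≥0)) (fun τ ↦ τ⁻¹) d ?_ ?_ ?_
  · have hd : Continuous d := by fun_prop
    simpa [d] using (hd.tendsto 0).mono_left nhdsWithin_le_nhds
  · filter_upwards [hpos] with τ hτ
    have hk : 0 < 1 + c * (τ : ℝ) ^ 2 := zero_lt_one.trans_le (hden τ)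
    have hnorm : ‖x + (τ : ℝ) • y‖ ≤ 1 + c * (τ : ℝ) ^ 2 :=
      le_of_sq_le_sq ((h τ hτ).trans (le_self_pow₀ (hden τ) two_ne_zero)) hk.le
    rw [add_sub_cancel, mem_closedBall_zero_iff, norm_smul, norm_inv, Real.norm_of_nonneg hk.le]
    exact inv_mul_le_one_of_le₀ hnorm hk.le
  · let g : ℝ≥0 → E := fun τ ↦ (1 + c * τ ^ 2)⁻¹ • (y - (c * τ) • x)
    have hg : Continuous g := by fun_prop
    have hlim : Tendsto g (𝓝[>] 0) (𝓝 y) := by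
      simpa [g] using (hg.tendsto 0).mono_left nhdsWithin_le_nhds
    refine hlim.congr' ?_
    filter_upwards [hpos] with τ hτ
    have hτ' : (τ : ℝ) ≠ 0 := NNReal.coe_ne_zero.2 hτ.ne'
    have hk : 1 + c * (τ : ℝ) ^ 2 ≠ 0 := (zero_lt_one.trans_le (hden τ)).ne'
    rw [NNReal.smul_def, NNReal.coe_inv]
    match_scalars <;> field_simp
    ring

variable {E : Type*} [NormedAddCommGroup E] [InnerProductSpace ℝ E]

theorem opNorm_sq_le_of_forall_norm_sq_le {T : E →L[ℝ] E} {c : ℝ} (hc : 0 ≤ c)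
    (h : ∀ x, ‖T x‖ ^ 2 ≤ c * ‖x‖ ^ 2) : ‖T‖ ^ 2 ≤ c := by
  rw [← Real.le_sqrt (norm_nonneg _) hc]
  refine T.opNorm_le_bound (Real.sqrt_nonneg c) fun x ↦ le_of_sq_le_sq ?_ (by positivity)
  rw [mul_pow, Real.sq_sqrt hc]
  exact h x

theorem norm_one_add_smul_sq_le {X : E →L[ℝ] E} (hX : ∀ x, ⟪x, X x⟫ ≤ 0) {τ : ℝ} (hτ : 0 ≤ τ) :
    ‖1 + τ • X‖ ^ 2 ≤ 1 + ‖X‖ ^ 2 * τ ^ 2 := by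
  refine opNorm_sq_le_of_forall_norm_sq_le (by positivity) fun x ↦ ?_
  have hXx : ‖X x‖ ^ 2 ≤ (‖X‖ * ‖x‖) ^ 2 := by gcongr; exact X.le_opNorm x
  calc ‖(1 + τ • X) x‖ ^ 2 = ‖x‖ ^ 2 + 2 * τ * ⟪x, X x⟫ + τ ^ 2 * ‖X x‖ ^ 2 := by
        simp [norm_add_sq_real, inner_smul_right, norm_smul, mul_pow, mul_assoc]
    _ ≤ ‖x‖ ^ 2 + 0 + τ ^ 2 * (‖X‖ * ‖x‖) ^ 2 := by
        gcongr
        exact mul_nonpos_of_nonneg_of_nonpos (by positivity) (hX x)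
    _ = (1 + ‖X‖ ^ 2 * τ ^ 2) * ‖x‖ ^ 2 := by ring

variable [CompleteSpace E]

theorem norm_one_sub_mul_star_apply_sq_le {U : E →L[ℝ] E} (hU : ‖U‖ ≤ 1) (y : E) :
    ‖(1 - U * star U) y‖ ^ 2 ≤ ‖y‖ ^ 2 - ‖star U y‖ ^ 2 := by
  have hUy : ‖U (star U y)‖ ≤ ‖star U y‖ :=
    (U.le_of_opNorm_le hU _).trans_eq (one_mul _)
  have hin : ⟪y, U (star U y)⟫ = ‖star U y‖ ^ 2 := by
    rw [← real_inner_self_eq_norm_sq, ContinuousLinearMap.star_eq_adjoint,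
      ContinuousLinearMap.adjoint_inner_left]
  have : ‖U (star U y)‖ ^ 2 ≤ ‖star U y‖ ^ 2 := by gcongr
  simp only [_root_.sub_apply, one_apply_eq_self, mul_apply_eq_comp, norm_sub_sq_real, hin]
  linarith

theorem norm_add_smul_one_sub_mul_star_mul_sq_le {U X : E →L[ℝ] E} (hU : ‖U‖ ≤ 1) {τ : ℝ}
    (hτ : 0 ≤ τ) :
    ‖U + τ • ((1 - U * star U) * X)‖ ^ 2 ≤
      1 + (‖X * star U‖ ^ 2 + ‖(1 - U * star U) * X‖ ^ 2) * τ ^ 2 := by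
  set P := 1 - U * star U with hP
  have hPs : star P = P := by simp [hP]
  rw [← norm_star, ← norm_star (P * X)]
  refine opNorm_sq_le_of_forall_norm_sq_le (by positivity) fun y ↦ ?_
  have hcross : ⟪star U y, star (P * X) y⟫ ≤ ‖(X * star U) y‖ * ‖P y‖ := by
    rw [star_mul, hPs, mul_apply_eq_comp, ContinuousLinearMap.star_eq_adjoint X,
      ContinuousLinearMap.adjoint_inner_right]
    exact real_inner_le_norm _ _
  have hdef := norm_one_sub_mul_star_apply_sq_le hU y
  have hXU : ‖(X * star U) y‖ ^ 2 ≤ (‖X * star U‖ * ‖y‖) ^ 2 := by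
    gcongr; exact (X * star U).le_opNorm y
  have hPX : ‖star (P * X) y‖ ^ 2 ≤ (‖star (P * X)‖ * ‖y‖) ^ 2 := by
    gcongr; exact (star (P * X)).le_opNorm y
  calc ‖star (U + τ • (P * X)) y‖ ^ 2
      = ‖star U y‖ ^ 2 + 2 * τ * ⟪star U y, star (P * X) y⟫ + τ ^ 2 * ‖star (P * X) y‖ ^ 2 := by
        rw [star_add, star_smul, star_trivial τ]
        simp [norm_add_sq_real, inner_smul_right, norm_smul, mul_pow, mul_assoc]
    _ ≤ ‖star U y‖ ^ 2 + 2 * τ * (‖(X * star U) y‖ * ‖P y‖) +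
          τ ^ 2 * ‖star (P * X) y‖ ^ 2 := by gcongr
    _ ≤ ‖star U y‖ ^ 2 + (‖P y‖ ^ 2 + τ ^ 2 * ‖(X * star U) y‖ ^ 2) +
          τ ^ 2 * ‖star (P * X) y‖ ^ 2 := by
        linarith [two_mul_le_add_sq ‖P y‖ (τ * ‖(X * star U) y‖)]
    _ ≤ ‖y‖ ^ 2 + τ ^ 2 * (‖X * star U‖ * ‖y‖) ^ 2 + τ ^ 2 * (‖star (P * X)‖ * ‖y‖) ^ 2 := by
        linarith [mul_le_mul_of_nonneg_left hXU (sq_nonneg τ),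
          mul_le_mul_of_nonneg_left hPX (sq_nonneg τ)]
    _ = (1 + (‖X * star U‖ ^ 2 + ‖star (P * X)‖ ^ 2) * τ ^ 2) * ‖y‖ ^ 2 := by ring

end Contraction

section LogMaximum

variable {ι : Type*} [Fintype ι] {w : ι → ℝ}

/-- The `f i` may be negative: `Real.log` is `log |·|`. -/
theorem exists_forall_sum_mul_log_le {X : Type*} [TopologicalSpace X] {K : Set X}
    (hK : IsCompact K) {f : ι → X → ℝ} (hf : ∀ i, ContinuousOn (f i) K) (hw : ∀ i, 0 < w i)
    (hne : ∃ x ∈ K, ∀ i, f i x ≠ 0) :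
    ∃ x ∈ K, (∀ i, f i x ≠ 0) ∧
      ∀ y ∈ K, (∀ i, f i y ≠ 0) → ∑ i, w i * Real.log (f i y) ≤ ∑ i, w i * Real.log (f i x) := by
  let F : X → ℝ := fun x ↦ ∏ i, |f i x| ^ w i
  have hFpos {x} (hx : ∀ i, f i x ≠ 0) : 0 < F x :=
    Finset.prod_pos fun i _ ↦ Real.rpow_pos_of_pos (abs_pos.2 (hx i)) _
  have hlog {x} (hx : ∀ i, f i x ≠ 0) : Real.log (F x) = ∑ i, w i * Real.log (f i x) := by
    rw [Real.log_prod fun i _ ↦ (Real.rpow_pos_of_pos (abs_pos.2 (hx i)) _).ne']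
    exact Finset.sum_congr rfl fun i _ ↦ by
      rw [Real.log_rpow (abs_pos.2 (hx i)), Real.log_abs]
  have hFcont : ContinuousOn F K :=
    continuousOn_finsetProd _ fun i _ ↦ (hf i).abs.rpow_const fun _ _ ↦ .inr (hw i).le
  obtain ⟨x₀, hx₀K, hx₀⟩ := hne
  obtain ⟨x, hxK, hmax⟩ := hK.exists_isMaxOn ⟨x₀, hx₀K⟩ hFcont
  have hx : ∀ i, f i x ≠ 0 := fun i hi ↦ by
    have hF : F x = 0 := Finset.prod_eq_zero (Finset.mem_univ i) (by simp [hi, (hw i).ne'])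
    exact ((hFpos hx₀).trans_le (hmax hx₀K)).ne' hF
  refine ⟨x, hxK, hx, fun y hyK hy ↦ ?_⟩
  rw [← hlog hy, ← hlog hx]
  exact Real.log_le_log (hFpos hy) (hmax hyK)

theorem exists_forall_posTangentConeAt_sum_mul_div_nonpos {E : Type*}
    [NormedAddCommGroup E] [NormedSpace ℝ E] {K : Set E} (hK : IsCompact K) (f : ι → E →L[ℝ] ℝ)
    (hw : ∀ i, 0 < w i) (hne : ∃ x ∈ K, ∀ i, f i x ≠ 0) :
    ∃ x ∈ K, (∀ i, f i x ≠ 0) ∧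
      ∀ y ∈ posTangentConeAt K x, ∑ i, w i * (f i y / f i x) ≤ 0 := by
  obtain ⟨x, hxK, hx, hmax⟩ :=
    exists_forall_sum_mul_log_le hK (fun i ↦ (f i).continuous.continuousOn) hw hne
  refine ⟨x, hxK, hx, fun y hy ↦ ?_⟩
  have hlocal : IsLocalMaxOn (fun z ↦ ∑ i, w i * Real.log (f i z)) K x := by
    have hnear : ∀ᶠ z in 𝓝[K] x, ∀ i, f i z ≠ 0 :=
      nhdsWithin_le_nhds <|
        eventually_all.2 fun i ↦ (f i).continuous.continuousAt.eventually_ne (hx i)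
    filter_upwards [hnear, self_mem_nhdsWithin] with z hz hzK using hmax z hzK hz
  have hderiv : HasFDerivWithinAt (fun z ↦ ∑ i, w i * Real.log (f i z))
      (∑ i, w i • (f i x)⁻¹ • f i) K x :=
    HasFDerivWithinAt.fun_sum fun i _ ↦
      (((f i).hasFDerivWithinAt).log (hx i)).const_mul (w i)
  simpa [div_eq_inv_mul] using hlocal.hasFDerivWithinAt_nonpos hderiv hy

end LogMaximum

section PolarDecomposition

variable {ι : Type*} [Fintype ι]

theorem isHermitian_of_forall_trace_mul_nonpos {H : Matrix ι ι ℝ}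
    (h : ∀ X : Matrix ι ι ℝ, (∀ x, x ⬝ᵥ X *ᵥ x ≤ 0) → (H * X).trace ≤ 0) : H.IsHermitian := by
  have hskew : ∀ x, x ⬝ᵥ (Hᴴ - H) *ᵥ x ≤ 0 := fun x ↦ by
    rw [sub_mulVec, dotProduct_sub, conjTranspose_eq_transpose_of_trivial, mulVec_transpose,
      dotProduct_comm, ← dotProduct_mulVec, sub_self]
  have hexp : ((Hᴴ - H)ᴴ * (Hᴴ - H)).trace = 2 * (H * (Hᴴ - H)).trace := by
    have htr : (Hᴴ * Hᴴ).trace = (H * H).trace := by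
      rw [← conjTranspose_mul, trace_conjTranspose, star_trivial]
    simp only [conjTranspose_sub, conjTranspose_conjTranspose, sub_mul, mul_sub, trace_sub, htr,
      trace_mul_comm Hᴴ H]
    ring
  have hzero : ((Hᴴ - H)ᴴ * (Hᴴ - H)).trace = 0 :=
    le_antisymm (by linarith [h _ hskew]) (posSemidef_conjTranspose_mul_self _).trace_nonneg
  exact sub_eq_zero.1 (trace_conjTranspose_mul_self_eq_zero_iff.1 hzero)

theorem posSemidef_of_forall_trace_mul_nonpos {H : Matrix ι ι ℝ}
    (h : ∀ X : Matrix ι ι ℝ, (∀ x, x ⬝ᵥ X *ᵥ x ≤ 0) → (H * X).trace ≤ 0) : H.PosSemidef := by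
  refine .of_dotProduct_mulVec_nonneg (isHermitian_of_forall_trace_mul_nonpos h) fun v ↦ ?_
  have hv := h (-vecMulVec v v) fun x ↦ by
    rw [neg_mulVec, vecMulVec_mulVec, dotProduct_neg, dotProduct_comm v x]
    simpa using mul_self_nonneg (x ⬝ᵥ v)
  rw [mul_neg, trace_neg, neg_nonpos, mul_vecMulVec, trace_vecMulVec] at hv
  rwa [star_trivial, dotProduct_comm]

variable {B U : Matrix ι ι ℝ}

theorem two_mul_trace_mul_le_trace_add_trace (hH : (B * U).PosSemidef) (hB : B * U * Uᴴ = B)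
    (X : Matrix ι ι ℝ) :
    2 * (B * X).trace ≤ (X * (B * U) * Xᴴ).trace + (B * U).trace := by
  have hB' : U * (B * U) = Bᴴ := by
    conv_rhs => rw [← hB]
    rw [conjTranspose_mul, conjTranspose_conjTranspose, hH.isHermitian.eq]
  have hexp : (X - U) * (B * U) * (X - U)ᴴ =
      X * (B * U) * Xᴴ - X * B - (X * B)ᴴ + U * B := by
    rw [sub_mul, hB', conjTranspose_sub, sub_mul, mul_sub, mul_sub, mul_assoc X (B * U) Uᴴ, hB,
      ← hB', mul_assoc U (B * U) Uᴴ, hB, hB', conjTranspose_mul]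
    abel
  have hsq := (hH.mul_mul_conjTranspose_same (X - U)).trace_nonneg
  rw [hexp, trace_add, trace_sub, trace_sub, trace_conjTranspose, star_trivial,
    trace_mul_comm X B, trace_mul_comm U B] at hsq
  linarith

variable [DecidableEq ι]

theorem mul_mem_posTangentConeAt_closedBall (hU : ‖U‖ ≤ 1) {X : Matrix ι ι ℝ}
    (hX : ∀ x, x ⬝ᵥ X *ᵥ x ≤ 0) : U * X ∈ posTangentConeAt (closedBall 0 1) U := by
  refine mem_posTangentConeAt_closedBall_of_norm_add_smul_sq_le (sq_nonneg ‖X‖) fun τ hτ ↦ ?_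
  have hXin (x : EuclideanSpace ℝ ι) : ⟪x, toEuclideanCLM (𝕜 := ℝ) X x⟫ ≤ 0 := by
    rw [real_inner_comm]
    exact hX x
  have hnorm : ‖1 + τ • X‖ ^ 2 ≤ 1 + ‖X‖ ^ 2 * τ ^ 2 := by
    simpa only [cstar_norm_def, map_add, map_one, map_smul] using
      norm_one_add_smul_sq_le hXin hτ.le
  calc ‖U + τ • (U * X)‖ ^ 2 = ‖U * (1 + τ • X)‖ ^ 2 := by rw [mul_add, mul_one, mul_smul_comm]
    _ ≤ ‖1 + τ • X‖ ^ 2 := by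
        gcongr
        exact (norm_mul_le _ _).trans (mul_le_of_le_one_left (norm_nonneg _) hU)
    _ ≤ 1 + ‖X‖ ^ 2 * τ ^ 2 := hnorm

theorem one_sub_mul_conjTranspose_mul_mem_posTangentConeAt_closedBall (hU : ‖U‖ ≤ 1)
    (X : Matrix ι ι ℝ) :
    (1 - U * Uᴴ) * X ∈ posTangentConeAt (closedBall 0 1) U := by
  refine mem_posTangentConeAt_closedBall_of_norm_add_smul_sq_le
    (c := ‖X * Uᴴ‖ ^ 2 + ‖(1 - U * Uᴴ) * X‖ ^ 2) (by positivity) fun τ hτ ↦ ?_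
  simpa only [cstar_norm_def, map_add, map_sub, map_mul, map_one, map_smul, ← star_eq_conjTranspose,
    map_star] using
    norm_add_smul_one_sub_mul_star_mul_sq_le (U := toEuclideanCLM (𝕜 := ℝ) U)
      (X := toEuclideanCLM (𝕜 := ℝ) X) hU hτ.le

theorem posSemidef_mul_of_forall_posTangentConeAt (hU : ‖U‖ ≤ 1)
    (h : ∀ G ∈ posTangentConeAt (closedBall 0 1) U, (B * G).trace ≤ 0) : (B * U).PosSemidef :=
  posSemidef_of_forall_trace_mul_nonpos fun X hX ↦ by
    rw [mul_assoc]
    exact h _ (mul_mem_posTangentConeAt_closedBall hU hX)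

theorem mul_mul_conjTranspose_eq_of_forall_posTangentConeAt (hU : ‖U‖ ≤ 1)
    (h : ∀ G ∈ posTangentConeAt (closedBall 0 1) U, (B * G).trace ≤ 0) : B * U * Uᴴ = B := by
  set P := 1 - U * Uᴴ with hP
  have htrace : (B * P * (B * P)ᴴ).trace ≤ 0 := by
    have := h _ (one_sub_mul_conjTranspose_mul_mem_posTangentConeAt_closedBall hU (B * P)ᴴ)
    rwa [← mul_assoc] at this
  have hzero : B * P = 0 := trace_mul_conjTranspose_self_eq_zero_iff.1
    (htrace.antisymm (posSemidef_self_mul_conjTranspose _).trace_nonneg)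
  rw [hP, mul_sub, mul_one, sub_eq_zero] at hzero
  rw [mul_assoc, ← hzero]

end PolarDecomposition

section UnitDiagonal

variable {ι : Type*} [Fintype ι] [DecidableEq ι] {A : Matrix ι ι ℝ} {w : ι → ℝ}

theorem trace_diagonal_mul_mul (a : ι → ℝ) (A X : Matrix ι ι ℝ) :
    (diagonal a * A * X).trace = ∑ i, a i * (A * X) i i := by
  simp only [trace, diag_apply, mul_assoc, diagonal_mul]

theorem exists_forall_posTangentConeAt_trace_diagonal_mul_mul_nonpos (hA : ∀ i, A i i = 1)
    (hw : ∀ i, 0 < w i) :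
    ∃ (U : Matrix ι ι ℝ) (θ : ι → ℝ), ‖U‖ ≤ 1 ∧ (∀ i, θ i * (A * U) i i = 1) ∧
      ∀ G ∈ posTangentConeAt (closedBall 0 1) U, (diagonal (w * θ) * A * G).trace ≤ 0 := by
  let f (i : ι) : Matrix ι ι ℝ →L[ℝ] ℝ :=
    (entryLinearMap ℝ ℝ i i ∘ₗ LinearMap.mulLeft ℝ A).toContinuousLinearMap
  have hone : (1 : Matrix ι ι ℝ) ∈ closedBall 0 1 := by
    rw [mem_closedBall_zero_iff, cstar_norm_def, map_one]
    exact ContinuousLinearMap.norm_id_le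
  have : ProperSpace (Matrix ι ι ℝ) := FiniteDimensional.proper_real _
  obtain ⟨U, hU, hfU, hopt⟩ := exists_forall_posTangentConeAt_sum_mul_div_nonpos
    (isCompact_closedBall (0 : Matrix ι ι ℝ) 1) f hw ⟨1, hone, fun i ↦ by simp [f, hA]⟩
  refine ⟨U, fun i ↦ ((A * U) i i)⁻¹, mem_closedBall_zero_iff.1 hU,
    fun i ↦ inv_mul_cancel₀ (hfU i), fun G hG ↦ ?_⟩
  rw [trace_diagonal_mul_mul]
  refine (Finset.sum_congr rfl fun i _ ↦ ?_).trans_le (hopt G hG)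
  simp [f, div_eq_inv_mul, mul_assoc]

theorem exists_norm_le_one_isSymm_diagonal_mul_mul (hA : ∀ i, A i i = 1) (hw : ∀ i, 0 < w i) :
    ∃ (U : Matrix ι ι ℝ) (θ : ι → ℝ), ‖U‖ ≤ 1 ∧ (∀ i, θ i ≠ 0) ∧
      (diagonal (w * θ) * A * U).IsSymm ∧ (∀ i, (diagonal (w * θ) * A * U) i i = w i) ∧
      ∑ i, w i * θ i ^ 2 ≤ ∑ i, w i := by
  obtain ⟨U, θ, hU, hθU, hcone⟩ :=
    exists_forall_posTangentConeAt_trace_diagonal_mul_mul_nonpos hA hw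
  have hH := posSemidef_mul_of_forall_posTangentConeAt hU hcone
  have hdiag (i : ι) : (diagonal (w * θ) * A * U) i i = w i := by
    rw [mul_assoc, diagonal_mul, Pi.mul_apply, mul_assoc, hθU, mul_one]
  refine ⟨U, θ, hU, fun i ↦ left_ne_zero_of_mul_eq_one (hθU i), hH.isHermitian, hdiag, ?_⟩
  have hBD : (diagonal (w * θ) * A * diagonal θ).trace = ∑ i, w i * θ i ^ 2 := by
    rw [trace_diagonal_mul_mul]
    simp [hA, sq, mul_assoc]
  have hDHD : (diagonal θ * (diagonal (w * θ) * A * U) * (diagonal θ)ᴴ).trace =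
      ∑ i, w i * θ i ^ 2 := by
    simp only [diagonal_conjTranspose, star_trivial, trace, diag_apply, mul_diagonal,
      diagonal_mul (d := θ), hdiag]
    exact Finset.sum_congr rfl fun i _ ↦ by ring
  have hHtr : (diagonal (w * θ) * A * U).trace = ∑ i, w i := by simp only [trace, diag_apply, hdiag]
  linarith [two_mul_trace_mul_le_trace_add_trace hH
    (mul_mul_conjTranspose_eq_of_forall_posTangentConeAt hU hcone) (diagonal θ)]

end UnitDiagonal

section MatrixPlank

variable {ι : Type*} [Fintype ι] {A : Matrix ι ι ℝ} {w : ι → ℝ}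

theorem dotProduct_mulVec_add_smul_single [DecidableEq ι] {H : Matrix ι ι ℝ} (hH : H.IsSymm)
    (x : ι → ℝ) (a : ℝ) (i : ι) :
    (x + a • Pi.single i 1) ⬝ᵥ H *ᵥ (x + a • Pi.single i 1) =
      x ⬝ᵥ H *ᵥ x + 2 * a * (H *ᵥ x) i + a ^ 2 * H i i := by
  have hsymm : x ⬝ᵥ H.col i = (H *ᵥ x) i := by
    rw [dotProduct_comm]
    exact congrArg (· ⬝ᵥ x) (congrFun hH i)
  simp only [mulVec_add, mulVec_smul, add_dotProduct, dotProduct_add, smul_dotProduct,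
    dotProduct_smul, smul_eq_mul, mulVec_single_one, hsymm, single_one_dotProduct, col_apply]
  ring

theorem exists_abs_eq_forall_mul_le_abs_mulVec_sub {H : Matrix ι ι ℝ} (hH : H.IsSymm) (μ : ι → ℝ)
    {s : ι → ℝ} (hs : ∀ i, 0 ≤ s i) :
    ∃ x : ι → ℝ, (∀ i, |x i| = s i) ∧ ∀ i, H i i * s i ≤ |(H *ᵥ x) i - μ i| := by
  classical
  let q : (ι → ℝ) → ℝ := fun x ↦ x ⬝ᵥ H *ᵥ x - 2 * x ⬝ᵥ μ
  let S : Finset (ι → ℝ) := Fintype.piFinset fun i ↦ {s i, -s i}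
  have hS {x} : x ∈ S ↔ ∀ i, |x i| = s i := by
    simp [S, abs_eq (hs _)]
  obtain ⟨x, hxS, hmax⟩ := S.exists_max_image q ⟨s, hS.2 fun i ↦ abs_of_nonneg (hs i)⟩
  refine ⟨x, hS.1 hxS, fun i ↦ ?_⟩
  rcases (hs i).eq_or_lt with hi | hi
  · simp [← hi]
  have hflip : q (x + (-2 * x i) • Pi.single i 1) =
      q x - 4 * (x i * ((H *ᵥ x) i - μ i) - x i ^ 2 * H i i) := by
    simp only [q, dotProduct_mulVec_add_smul_single hH, add_dotProduct, smul_dotProduct,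
      single_one_dotProduct, smul_eq_mul]
    ring
  have hflipS : x + (-2 * x i) • Pi.single i 1 ∈ S := by
    refine hS.2 fun j ↦ ?_
    rcases eq_or_ne j i with rfl | hj
    · have hneg : (x + (-2 * x j) • Pi.single j 1 : ι → ℝ) j = -x j := by
        simp only [Pi.add_apply, Pi.smul_apply, Pi.single_eq_same, smul_eq_mul]
        ring
      rw [hneg, abs_neg, hS.1 hxS]
    · simpa [hj] using hS.1 hxS j
  have hle : x i ^ 2 * H i i ≤ x i * ((H *ᵥ x) i - μ i) := by
    linarith [hmax _ hflipS]
  refine le_of_mul_le_mul_left ?_ hi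
  calc s i * (H i i * s i) = x i ^ 2 * H i i := by rw [← sq_abs (x i), hS.1 hxS i]; ring
    _ ≤ |x i * ((H *ᵥ x) i - μ i)| := hle.trans (le_abs_self _)
    _ = s i * |(H *ᵥ x) i - μ i| := by rw [abs_mul, hS.1 hxS i]

theorem exists_sum_sq_le_forall_le_abs_mulVec_sub (hA : ∀ i, A i i = 1)
    {c : ι → ℝ} (hc : ∀ i, 0 < c i) (m : ι → ℝ) :
    ∃ y : ι → ℝ, ∑ i, y i ^ 2 ≤ ∑ i, c i ^ 2 ∧ ∀ i, c i ≤ |(A *ᵥ y) i - m i| := by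
  classical
  obtain ⟨U, θ, hU, hθ0, hsymm, hdiag, hθ⟩ := exists_norm_le_one_isSymm_diagonal_mul_mul hA
    (w := fun i ↦ c i ^ 2) fun i ↦ pow_pos (hc i) 2
  set H := diagonal ((fun i ↦ c i ^ 2) * θ) * A * U with hH
  have hθpos (i : ι) : 0 < |θ i| := abs_pos.2 (hθ0 i)
  obtain ⟨x, hx, hHx⟩ := exists_abs_eq_forall_mul_le_abs_mulVec_sub hsymm
    (fun i ↦ c i ^ 2 * θ i * m i) fun i ↦ (mul_pos (hc i) (hθpos i)).le
  refine ⟨U *ᵥ x, ?_, fun i ↦ ?_⟩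
  · have hUx : ‖WithLp.toLp 2 (U *ᵥ x)‖ ≤ ‖WithLp.toLp 2 x‖ :=
      (l2_opNorm_mulVec U (WithLp.toLp 2 x)).trans (mul_le_of_le_one_left (norm_nonneg _) hU)
    calc ∑ i, (U *ᵥ x) i ^ 2 = ‖WithLp.toLp 2 (U *ᵥ x)‖ ^ 2 := by
          simp [EuclideanSpace.norm_sq_eq]
      _ ≤ ‖WithLp.toLp 2 x‖ ^ 2 := by gcongr
      _ = ∑ i, c i ^ 2 * θ i ^ 2 := by
          simp only [EuclideanSpace.norm_sq_eq, Real.norm_eq_abs, hx, mul_pow, sq_abs]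
      _ ≤ ∑ i, c i ^ 2 := hθ
  · have hrow : (H *ᵥ x) i - c i ^ 2 * θ i * m i =
        c i ^ 2 * θ i * ((A *ᵥ (U *ᵥ x)) i - m i) := by
      rw [hH, mul_assoc, ← mulVec_mulVec, ← mulVec_mulVec, mulVec_diagonal, Pi.mul_apply, mul_sub]
    have hi := hHx i
    rw [hdiag, hrow, abs_mul, abs_mul, abs_sq, mul_comm (c i) |θ i|, ← mul_assoc] at hi
    exact le_of_mul_le_mul_left hi (mul_pos (pow_pos (hc i) 2) (hθpos i))

theorem exists_sum_abs_le_forall_le_abs_mulVec_sub (hA : ∀ i, A i i = 1)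
    (hw : ∀ i, 0 < w i) (m : ι → ℝ) :
    ∃ l : ι → ℝ, ∑ i, |l i| ≤ ∑ i, w i ∧ ∀ i, w i ≤ |(A *ᵥ l) i - m i| := by
  classical
  let c (i : ι) := √(w i)
  have hc (i : ι) : 0 < c i := Real.sqrt_pos.2 (hw i)
  have hcw (i : ι) : c i ^ 2 = w i := Real.sq_sqrt (hw i).le
  obtain ⟨y, hy, hAy⟩ := exists_sum_sq_le_forall_le_abs_mulVec_sub
    (A := diagonal c⁻¹ * A * diagonal c) (fun i ↦ by simp [hA, (hc i).ne'])
    hc (fun i ↦ (c i)⁻¹ * m i)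
  refine ⟨fun i ↦ c i * y i, ?_, fun i ↦ ?_⟩
  · refine le_of_sq_le_sq ?_ (Finset.sum_nonneg fun i _ ↦ (hw i).le)
    calc (∑ i, |c i * y i|) ^ 2 = (∑ i, c i * |y i|) ^ 2 := by
          simp only [abs_mul, abs_of_pos (hc _)]
      _ ≤ (∑ i, c i ^ 2) * ∑ i, |y i| ^ 2 := Finset.sum_mul_sq_le_sq_mul_sq _ _ _
      _ ≤ (∑ i, w i) * ∑ i, w i := by
          simp only [sq_abs, ← hcw]
          gcongr
      _ = (∑ i, w i) ^ 2 := (sq _).symm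
  · have hrow : ((diagonal c⁻¹ * A * diagonal c) *ᵥ y) i - (c i)⁻¹ * m i =
        (c i)⁻¹ * ((A *ᵥ fun j ↦ c j * y j) i - m i) := by
      rw [← mulVec_mulVec, ← mulVec_mulVec, mulVec_diagonal, mul_sub]
      simp [funext (mulVec_diagonal c y)]
    have hi := hAy i
    rw [hrow, abs_mul, abs_of_pos (inv_pos.2 (hc i)), ← div_eq_inv_mul, le_div_iff₀ (hc i),
      ← sq, hcw] at hi
    exact hi

theorem exists_sum_abs_le_forall_mul_abs_diag_le_abs_mulVec_sub (A : Matrix ι ι ℝ)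
    (hw : ∀ i, 0 < w i) (m : ι → ℝ) :
    ∃ l : ι → ℝ, ∑ i, |l i| ≤ ∑ i, w i ∧ ∀ i, w i * |A i i| ≤ |(A *ᵥ l) i - m i| := by
  classical
  -- A row with `A i i = 0` imposes no condition, so any row with unit diagonal may replace it.
  let A' : Matrix ι ι ℝ := of fun i ↦ if A i i = 0 then Pi.single i 1 else (A i i)⁻¹ • A i
  have hA' (i : ι) : A' i i = 1 := by
    by_cases hi : A i i = 0 <;> simp [A', hi]
  obtain ⟨l, hl, hAl⟩ := exists_sum_abs_le_forall_le_abs_mulVec_sub hA' hw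
    fun i ↦ (A i i)⁻¹ * m i
  refine ⟨l, hl, fun i ↦ ?_⟩
  rcases eq_or_ne (A i i) 0 with hi | hi
  · simp [hi]
  · have hA'i : A' i = (A i i)⁻¹ • A i := if_neg hi
    have hrow : (A' *ᵥ l) i - (A i i)⁻¹ * m i = (A i i)⁻¹ * ((A *ᵥ l) i - m i) := by
      rw [mulVec, hA'i, smul_dotProduct, smul_eq_mul, ← mul_sub, mulVec]
    have hle := hAl i
    rwa [hrow, abs_mul, abs_inv, ← div_eq_inv_mul, le_div_iff₀ (abs_pos.2 hi)] at hle

end MatrixPlank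

section SymmetricConvex

variable {E : Type*} [AddCommGroup E] [Module ℝ E] {ι : Type*} {C : Set E}

theorem sum_smul_mem_smul_of_absConvex (hC : AbsConvex ℝ C) (hne : C.Nonempty) {x : ι → E}
    (hx : ∀ i, x i ∈ C) (l : ι → ℝ) (s : Finset ι) : ∑ i ∈ s, l i • x i ∈ (∑ i ∈ s, |l i|) • C := by
  classical
  induction s using Finset.induction_on with
  | empty => simp [zero_smul_set hne]
  | insert i s hi ih =>
    rw [Finset.sum_insert hi, Finset.sum_insert hi,
      hC.2.add_smul (abs_nonneg _) (Finset.sum_nonneg fun _ _ ↦ abs_nonneg _)]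
    exact add_mem_add
      (hC.1.smul_mono (abs_abs (l i)).ge (smul_mem_smul_set (hx i))) ih

theorem exists_mem_sum_smul_forall_mul_abs_le_abs_sub [Fintype ι] (hC : AbsConvex ℝ C)
    (hne : C.Nonempty) (f : ι → E →ₗ[ℝ] ℝ) {x : ι → E} (hx : ∀ i, x i ∈ C) {w : ι → ℝ}
    (hw : ∀ i, 0 < w i) (t : ι → ℝ) :
    ∃ v ∈ (∑ i, w i) • C, ∀ i, w i * |f i (x i)| ≤ |f i v - t i| := by
  obtain ⟨l, hl, hlt⟩ := exists_sum_abs_le_forall_mul_abs_diag_le_abs_mulVec_sub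
    (of fun i j ↦ f i (x j)) hw t
  have hsum : 0 ≤ ∑ i, |l i| := Finset.sum_nonneg fun i _ ↦ abs_nonneg (l i)
  refine ⟨∑ j, l j • x j, ?_, fun i ↦ ?_⟩
  · exact hC.1.smul_mono (by rwa [Real.norm_of_nonneg hsum, Real.norm_of_nonneg (hsum.trans hl)])
      (sum_smul_mem_smul_of_absConvex hC hne hx l Finset.univ)
  · simpa [mulVec, dotProduct, mul_comm] using hlt i

end SymmetricConvex

theorem exists_sign_forall_abs_le_mul_add_nonneg {a b : ℝ} (h : b ≤ |a|) :
    ∃ ε : ℝ, (ε = 1 ∨ ε = -1) ∧ ∀ r, |r| ≤ b → 0 ≤ ε * (a + r) := by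
  rcases le_total 0 a with ha | ha
  · refine ⟨1, .inl rfl, fun r hr ↦ ?_⟩
    rw [abs_of_nonneg ha] at h
    linarith [neg_abs_le r]
  · refine ⟨-1, .inr rfl, fun r hr ↦ ?_⟩
    rw [abs_of_nonpos ha] at h
    linarith [le_abs_self r]

end BallPlank

theorem ball_plank_theorem_general {E ι : Type*} [AddCommGroup E] [Module ℝ E] [TopologicalSpace E]
    [Fintype ι] {C : Set E} (hC : IsCompact C) (hCconv : Convex ℝ C) (hCne : C.Nonempty)
    (hsymm : C = -C) (f : ι → E →L[ℝ] ℝ) (t : ι → ℝ) :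
    ∃ (ε : ι → ℝ) (v : E), (∀ i, ε i = 1 ∨ ε i = -1) ∧
      (fun x ↦ v + x) '' ((1 / (Fintype.card ι + 1 : ℝ)) • C) ⊆
        C ∩ ⋂ i, {x | 0 ≤ ε i * (f i x - t i)} := by
  set k : ℝ := Fintype.card ι + 1 with hk
  have hk0 : 0 < 1 / k := by positivity
  have hCabs : AbsConvex ℝ C :=
    ⟨(balanced_iff_neg_mem hCconv).2 fun x hx ↦ by rwa [hsymm, Set.neg_mem_neg], hCconv⟩
  choose x hxC hmax using fun i ↦ hC.exists_isMaxOn hCne (f i).continuous.abs.continuousOn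
  obtain ⟨v, hv, hfv⟩ := BallPlank.exists_mem_sum_smul_forall_mul_abs_le_abs_sub hCabs hCne
    (fun i ↦ (f i : E →ₗ[ℝ] ℝ)) hxC (w := fun _ ↦ 1 / k) (fun _ ↦ hk0) t
  choose ε hε hεf using fun i ↦ BallPlank.exists_sign_forall_abs_le_mul_add_nonneg (hfv i)
  refine ⟨ε, v, hε, ?_⟩
  rintro _ ⟨_, ⟨y, hy, rfl⟩, rfl⟩
  refine ⟨?_, Set.mem_iInter.2 fun i ↦ ?_⟩
  · have hsum : (∑ _ : ι, 1 / k) + 1 / k = 1 := by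
      rw [Finset.sum_const, Finset.card_univ, nsmul_eq_mul, ← add_one_mul, ← hk]
      exact mul_one_div_cancel (by positivity)
    obtain ⟨z, hz, rfl⟩ := hv
    exact hCconv hz hy (Finset.sum_nonneg fun _ _ ↦ hk0.le) hk0.le hsum
  · have habs : |f i ((1 / k) • y)| ≤ 1 / k * |f i (x i)| := by
      rw [map_smul, smul_eq_mul, abs_mul, abs_of_pos hk0]
      exact mul_le_mul_of_nonneg_left (hmax i hy) hk0.le
    simpa [add_sub_right_comm] using hεf i _ habs

/-- **Ball's plank theorem** (slicing form). If an origin-symmetric convex body `C` in `ℝ^d`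
is sliced by `n - 1` hyperplane cuts, then one of the resulting pieces contains a
translate of `(1/n) • C`. -/
theorem ball_plank_theorem {d n : ℕ} (hn : 1 ≤ n)
    (C : Set (EuclideanSpace ℝ (Fin d)))
    (hC : IsCompact C) (hCconv : Convex ℝ C) (hCint : (interior C).Nonempty)
    (hsymm : C = -C)
    (u : Fin (n - 1) → EuclideanSpace ℝ (Fin d)) (hu : ∀ i, ‖u i‖ = 1)
    (t : Fin (n - 1) → ℝ) :
    ∃ (ε : Fin (n - 1) → ℝ) (v : EuclideanSpace ℝ (Fin d)),
      (∀ i, ε i = 1 ∨ ε i = -1) ∧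
      (fun x => v + x) '' ((1 / (n : ℝ)) • C) ⊆
        C ∩ ⋂ i, {x | 0 ≤ ε i * (⟪x, u i⟫ - t i)} := by
  simpa [real_inner_comm, Nat.cast_sub hn] using ball_plank_theorem_general hC hCconv
    (hCint.mono interior_subset) hsymm (fun i ↦ innerSL ℝ (u i)) t
end

section
/- There is an absolute constant c > 0 with the following property: for every d ≥ 1, every convex body K in E^d, and all hyperplanes H_1, ..., H_N in E^d such that K ∩ ℤ^d ⊆ H_1 ∪ ... ∪ H_N, one has N ≥ c · w(K, ℤ^d)/d − d, where w(K, ℤ^d) is the lattice width of K. -/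
open scoped RealInnerProductSpace

/-- The lattice width of a set `K ⊆ ℝ^d` with respect to the integer lattice `ℤ^d`:
the infimum over nonzero integer vectors `y` of the width of `K` in direction `y`. -/
noncomputable def latticeWidth {d : ℕ} (K : Set (EuclideanSpace ℝ (Fin d))) : ℝ :=
  sInf {w : ℝ | ∃ y : EuclideanSpace ℝ (Fin d), y ≠ 0 ∧ (∀ i, ∃ z : ℤ, y i = (z : ℝ)) ∧
    w = sSup ((fun x => ⟪x, y⟫) '' K) - sInf ((fun x => ⟪x, y⟫) '' K)}

/-!
Let `𝔹` be the unit ball. By a weak form of John's theorem there are ellipsoids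
`c + r A 𝔹 ⊆ K ⊆ c + (2d + 1) r A 𝔹`; rescale `A` so that `r = w(K, ℤ^d) / (8d + 4)`. Then every
nonzero vector of the lattice `A† ℤ^d` has length at least `2`, so functions supported in `𝔹`
satisfy Parseval's identity for the samples of their Fourier transform at the points `A⁻¹ (n - c)`,
`n ∈ ℤ^d`. The samples of norm at most `r` come from lattice points of `K`, hence lie on the images
of the given hyperplanes.

As test function take a polynomial, cut off outside `𝔹`, whose Fourier transform vanishes on these
images: the operator `∂ᵤ² + (2πt)²` corresponds on the Fourier side to multiplication by
`(2π)² (t² - ⟪u, ξ⟫²)`, so applying one such operator per hyperplane to a power of `1 - |x|²` does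
it, at the cost of two powers of `1 - |x|²` each. Only frequencies above `r` remain, so the gradient
carries at least `4π² r²` times the energy of the function. On the other hand a Bernstein
inequality, read off from the differential operator diagonalized by the orthogonal polynomials for
the weights `(1 - |x|²)^k`, bounds this ratio by `O((N + d)²)`. Hence `r = O(N + d)`.
-/

namespace Talata

open MeasureTheory MvPolynomial Metric Set Filter Topology
open scoped FourierTransform

section Indicator

variable {𝕜 E F : Type*} [NontriviallyNormedField 𝕜] [NormedAddCommGroup E] [NormedSpace 𝕜 E]
  [NormedAddCommGroup F] [NormedSpace 𝕜 F]

theorem hasFDerivAt_indicator {s : Set E} {f : E → F} {f' : E → E →L[𝕜] F} {x : E}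
    (hf : HasFDerivAt f (f' x) x) (hx : x ∈ frontier s → f x = 0 ∧ f' x = 0) :
    HasFDerivAt (s.indicator f) (s.indicator f' x) x := by
  by_cases hfr : x ∈ frontier s
  · obtain ⟨h0, h0'⟩ := hx hfr
    have hs0 : s.indicator f x = 0 := by simp [h0]
    have hs0' : s.indicator f' x = 0 := by simp [h0']
    rw [hs0', hasFDerivAt_iff_isLittleO]
    rw [h0', hasFDerivAt_iff_isLittleO] at hf
    refine (Asymptotics.isBigO_of_le _ fun y ↦ ?_).trans_isLittleO hf
    simpa [h0, hs0] using norm_indicator_le_norm_self f y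
  · rw [← mem_compl_iff, compl_frontier_eq_union_interior] at hfr
    rcases hfr with hint | hext
    · rw [indicator_of_mem (interior_subset hint)]
      refine hf.congr_of_eventuallyEq ?_
      filter_upwards [mem_interior_iff_mem_nhds.mp hint] with y hy using indicator_of_mem hy f
    · rw [indicator_of_notMem (interior_subset hext)]
      refine (hasFDerivAt_const 0 x).congr_of_eventuallyEq ?_
      filter_upwards [mem_interior_iff_mem_nhds.mp hext] with y hy using indicator_of_notMem hy f

end Indicator

section Eval

variable {ι : Type*}

theorem continuous_eval_ofLp (P : MvPolynomial ι ℝ) :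
    Continuous fun x : EuclideanSpace ℝ ι ↦ eval x.ofLp P :=
  (continuous_eval P).comp (PiLp.continuous_ofLp 2 _)

/-- The derivation of polynomials extending the directional derivative along the vector `u`. -/
noncomputable def dirDeriv (u : EuclideanSpace ℝ ι) :
    Derivation ℝ (MvPolynomial ι ℝ) (MvPolynomial ι ℝ) :=
  mkDerivation ℝ fun i ↦ C (u i)

theorem dirDeriv_X (u : EuclideanSpace ℝ ι) (i : ι) : dirDeriv u (X i) = C (u i) :=
  mkDerivation_X ℝ _ i

theorem dirDeriv_single [DecidableEq ι] (i : ι) : dirDeriv (EuclideanSpace.single i 1) = pderiv i :=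
  derivation_ext fun j ↦ by
    rw [dirDeriv_X, pderiv_X, PiLp.single_apply, Pi.single_apply]
    split_ifs <;> simp_all

theorem eq_zero_of_eventually_eval_eq_zero {P : MvPolynomial ι ℝ} {x : EuclideanSpace ℝ ι}
    (h : ∀ᶠ y in 𝓝 x, eval y.ofLp P = 0) : P = 0 := by
  have hpi : ∀ᶠ y in 𝓝 x.ofLp, eval y P = 0 :=
    (PiLp.continuous_toLp 2 _).tendsto x.ofLp |>.eventually h
  rw [nhds_pi] at hpi
  obtain ⟨I, -, t, ht, hsub⟩ := Filter.mem_pi.mp hpi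
  refine MvPolynomial.funext_set t (fun i ↦ infinite_of_mem_nhds _ (ht i)) fun y hy ↦ ?_
  rw [map_zero]
  exact hsub fun i _ ↦ hy i (mem_univ i)

theorem contDiff_eval_ofLp [Fintype ι] (P : MvPolynomial ι ℝ) {n : WithTop ℕ∞} :
    ContDiff ℝ n fun x : EuclideanSpace ℝ ι ↦ eval x.ofLp P := by
  induction P using MvPolynomial.induction_on with
  | C a => simpa using contDiff_const
  | add P Q hP hQ => simpa using hP.add hQ
  | mul_X P i hP => simpa using hP.mul (by fun_prop : ContDiff ℝ n fun x : EuclideanSpace ℝ ι ↦ x i)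

theorem fderiv_eval_ofLp_apply [Finite ι] (P : MvPolynomial ι ℝ) (x u : EuclideanSpace ℝ ι) :
    fderiv ℝ (fun x : EuclideanSpace ℝ ι ↦ eval x.ofLp P) x u = eval x.ofLp (dirDeriv u P) := by
  cases nonempty_fintype ι
  have hdiff (P : MvPolynomial ι ℝ) :
      DifferentiableAt ℝ (fun x : EuclideanSpace ℝ ι ↦ eval x.ofLp P) x :=
    (contDiff_eval_ofLp P (n := 1)).contDiffAt.differentiableAt one_ne_zero
  induction P using MvPolynomial.induction_on with
  | C a => simp [dirDeriv]
  | add P Q hP hQ =>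
    simp only [map_add]
    rw [fderiv_fun_add (hdiff P) (hdiff Q), add_apply, hP, hQ]
  | mul_X P i hP =>
    have hX := (EuclideanSpace.proj i : EuclideanSpace ℝ ι →L[ℝ] ℝ).hasFDerivAt (x := x)
    simp only [map_mul, eval_X]
    refine (congrArg (· u) ((hdiff P).hasFDerivAt.mul hX).fderiv).trans ?_
    simp [hP, dirDeriv_X]

end Eval

section Ball

variable {ι : Type*} [Fintype ι]

/-- The polynomial `1 - |x|²`, which vanishes on the unit sphere; its powers are the weights and
the cut-offs of the whole argument. -/
noncomputable def ballPoly (ι : Type*) [Fintype ι] : MvPolynomial ι ℝ := 1 - ∑ i, X i ^ 2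

theorem eval_ballPoly (x : EuclideanSpace ℝ ι) : eval x.ofLp (ballPoly ι) = 1 - ‖x‖ ^ 2 := by
  simp [ballPoly, EuclideanSpace.norm_sq_eq]

theorem ballPoly_ne_zero : ballPoly ι ≠ 0 := fun h ↦ by
  simpa [h] using eval_ballPoly (0 : EuclideanSpace ℝ ι)

theorem eval_eq_zero_of_ballPoly_dvd {P : MvPolynomial ι ℝ} (h : ballPoly ι ∣ P)
    {x : EuclideanSpace ℝ ι} (hx : ‖x‖ = 1) : eval x.ofLp P = 0 := by
  obtain ⟨Q, rfl⟩ := h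
  rw [map_mul, eval_ballPoly, hx]
  ring

theorem integrableOn_closedBall_eval_ofLp (P : MvPolynomial ι ℝ) :
    IntegrableOn (fun x : EuclideanSpace ℝ ι ↦ eval x.ofLp P) (closedBall 0 1) :=
  (continuous_eval_ofLp P).continuousOn.integrableOn_compact (isCompact_closedBall _ _)

/-- The linear functional integrating a polynomial over the closed unit ball. -/
noncomputable def ballIntegral : MvPolynomial ι ℝ →ₗ[ℝ] ℝ where
  toFun P := ∫ x in closedBall (0 : EuclideanSpace ℝ ι) 1, eval x.ofLp P
  map_add' P Q := by
    simp only [map_add]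
    exact integral_add (integrableOn_closedBall_eval_ofLp P) (integrableOn_closedBall_eval_ofLp Q)
  map_smul' a P := by simp [integral_const_mul]

theorem ballIntegral_apply (P : MvPolynomial ι ℝ) :
    ballIntegral P = ∫ x in closedBall (0 : EuclideanSpace ℝ ι) 1, eval x.ofLp P := rfl

theorem ballIntegral_mono {P Q : MvPolynomial ι ℝ}
    (h : ∀ x : EuclideanSpace ℝ ι, ‖x‖ ≤ 1 → eval x.ofLp P ≤ eval x.ofLp Q) :
    ballIntegral P ≤ ballIntegral Q :=
  setIntegral_mono_on (integrableOn_closedBall_eval_ofLp P) (integrableOn_closedBall_eval_ofLp Q)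
    measurableSet_closedBall fun x hx ↦ h x (mem_closedBall_zero_iff.mp hx)

theorem eq_zero_of_ballIntegral_eq_zero {P : MvPolynomial ι ℝ}
    (hP : ∀ x : EuclideanSpace ℝ ι, ‖x‖ ≤ 1 → 0 ≤ eval x.ofLp P) (h0 : ballIntegral P = 0) :
    P = 0 := by
  have hae : ∀ᵐ x ∂volume.restrict (closedBall (0 : EuclideanSpace ℝ ι) 1), eval x.ofLp P = 0 :=
    (setIntegral_eq_zero_iff_of_nonneg_ae
      (ae_restrict_of_forall_mem measurableSet_closedBall fun x hx ↦
        hP x (mem_closedBall_zero_iff.mp hx)) (integrableOn_closedBall_eval_ofLp P)).mp h0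
  have heqOn : EqOn (fun x : EuclideanSpace ℝ ι ↦ eval x.ofLp P) 0 (ball 0 1) :=
    Measure.eqOn_open_of_ae_eq (ae_restrict_of_ae_restrict_of_subset ball_subset_closedBall hae)
      isOpen_ball (continuous_eval_ofLp P).continuousOn continuousOn_const
  exact eq_zero_of_eventually_eval_eq_zero
    (mem_of_superset (ball_mem_nhds (0 : EuclideanSpace ℝ ι) one_pos) heqOn)

theorem eval_ballPoly_nonneg {x : EuclideanSpace ℝ ι} (hx : ‖x‖ ≤ 1) :
    0 ≤ eval x.ofLp (ballPoly ι) := by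
  rw [eval_ballPoly]
  nlinarith [norm_nonneg x]

theorem ballIntegral_pow_mul_mono {P Q : MvPolynomial ι ℝ} (k : ℕ)
    (h : ∀ x : EuclideanSpace ℝ ι, ‖x‖ ≤ 1 → eval x.ofLp P ≤ eval x.ofLp Q) :
    ballIntegral (ballPoly ι ^ k * P) ≤ ballIntegral (ballPoly ι ^ k * Q) :=
  ballIntegral_mono fun x hx ↦ by
    simpa only [map_mul, map_pow] using
      mul_le_mul_of_nonneg_left (h x hx) (pow_nonneg (eval_ballPoly_nonneg hx) k)

theorem ballIntegral_pow_mul_sq_nonneg (k : ℕ) (Q : MvPolynomial ι ℝ) :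
    0 ≤ ballIntegral (ballPoly ι ^ k * Q ^ 2) := by
  rw [← map_zero (ballIntegral (ι := ι)), ← mul_zero (ballPoly ι ^ k)]
  exact ballIntegral_pow_mul_mono k fun x _ ↦ by simpa using sq_nonneg (eval x.ofLp Q)

theorem eq_zero_of_ballIntegral_pow_mul_sq_eq_zero {k : ℕ} {Q : MvPolynomial ι ℝ}
    (h : ballIntegral (ballPoly ι ^ k * Q ^ 2) = 0) : Q = 0 := by
  have hmul : ballPoly ι ^ k * Q ^ 2 = 0 := eq_zero_of_ballIntegral_eq_zero (fun x hx ↦ by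
    simpa only [map_mul, map_pow] using
      mul_nonneg (pow_nonneg (eval_ballPoly_nonneg hx) k) (sq_nonneg _)) h
  simpa [ballPoly_ne_zero] using hmul

end Ball

section BallFun

variable {ι : Type*} [Fintype ι]

/-- The complex-valued function on Euclidean space which agrees with the polynomial `P` on the
closed unit ball and vanishes outside of it. -/
noncomputable def ballFun (P : MvPolynomial ι ℝ) : EuclideanSpace ℝ ι → ℂ :=
  (closedBall 0 1).indicator fun x ↦ (eval x.ofLp P : ℂ)

theorem ballFun_eq_zero_of_ballPoly_dvd {P : MvPolynomial ι ℝ} (hP : ballPoly ι ∣ P)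
    {x : EuclideanSpace ℝ ι} (hx : 1 ≤ ‖x‖) : ballFun P x = 0 := by
  rcases hx.eq_or_lt with h1 | h1
  · simp [ballFun, eval_eq_zero_of_ballPoly_dvd hP h1.symm]
  · simp [ballFun, h1]

theorem continuous_ballFun {P : MvPolynomial ι ℝ} (hP : ballPoly ι ∣ P) :
    Continuous (ballFun P) :=
  continuous_indicator (fun x hx ↦ by
    have hx1 : ‖x‖ = 1 := by simpa using frontier_closedBall_subset_sphere hx
    simp [eval_eq_zero_of_ballPoly_dvd hP hx1])
    (Complex.continuous_ofReal.comp (continuous_eval_ofLp P)).continuousOn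

theorem hasCompactSupport_ballFun (P : MvPolynomial ι ℝ) : HasCompactSupport (ballFun P) :=
  .intro (isCompact_closedBall 0 1) fun _ hx ↦ indicator_of_notMem hx _

theorem integrable_ballFun (P : MvPolynomial ι ℝ) : Integrable (ballFun P) :=
  (integrable_indicator_iff measurableSet_closedBall).mpr
    (integrableOn_closedBall_eval_ofLp P).ofReal

theorem integral_ballFun (P : MvPolynomial ι ℝ) : ∫ x, ballFun P x = ballIntegral P := by
  rw [ballFun, integral_indicator measurableSet_closedBall, ballIntegral_apply]
  exact integral_ofReal

theorem integral_norm_ballFun_sq (P : MvPolynomial ι ℝ) :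
    ∫ x, ‖ballFun P x‖ ^ 2 = ballIntegral (P ^ 2) := by
  rw [ballIntegral_apply, ← integral_indicator measurableSet_closedBall]
  refine integral_congr_ae (.of_forall fun x ↦ ?_)
  by_cases hx : x ∈ closedBall (0 : EuclideanSpace ℝ ι) 1 <;> simp [ballFun, hx]

theorem pow_dvd_derivation_of_pow_succ_dvd {R A : Type*} [CommSemiring R] [CommSemiring A]
    [Algebra R A] (D : Derivation R A A) {a b : A} {k : ℕ} (h : a ^ (k + 1) ∣ b) : a ^ k ∣ D b := by
  obtain ⟨c, rfl⟩ := h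
  rw [D.leibniz, D.leibniz_pow, Nat.add_sub_cancel]
  simp only [smul_eq_mul, nsmul_eq_mul]
  exact ⟨a * D c + c * ((k + 1 : ℕ) * D a), by ring⟩

theorem hasFDerivAt_ballFun {P : MvPolynomial ι ℝ} (hP : ballPoly ι ^ 2 ∣ P)
    (x : EuclideanSpace ℝ ι) :
    HasFDerivAt (ballFun P) ((closedBall 0 1).indicator (fun x : EuclideanSpace ℝ ι ↦
      Complex.ofRealCLM ∘L fderiv ℝ (fun x ↦ eval x.ofLp P) x) x) x := by
  refine hasFDerivAt_indicator (f := fun x : EuclideanSpace ℝ ι ↦ (eval x.ofLp P : ℂ))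
    (f' := fun x ↦ Complex.ofRealCLM ∘L fderiv ℝ (fun x ↦ eval x.ofLp P) x) ?_ fun hx ↦ ?_
  · exact Complex.ofRealCLM.hasFDerivAt.comp x
      ((contDiff_eval_ofLp P (n := 1)).contDiffAt.differentiableAt one_ne_zero).hasFDerivAt
  · have hx1 : ‖x‖ = 1 := by simpa using frontier_closedBall_subset_sphere hx
    refine ⟨by simp [eval_eq_zero_of_ballPoly_dvd ((dvd_pow_self _ two_ne_zero).trans hP) hx1], ?_⟩
    ext u
    have hdvd : ballPoly ι ∣ dirDeriv u P := by
      simpa using pow_dvd_derivation_of_pow_succ_dvd (dirDeriv u) (k := 1) hP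
    simp [fderiv_eval_ofLp_apply, eval_eq_zero_of_ballPoly_dvd hdvd hx1]

theorem fderiv_ballFun_apply {P : MvPolynomial ι ℝ} (hP : ballPoly ι ^ 2 ∣ P)
    (x u : EuclideanSpace ℝ ι) : fderiv ℝ (ballFun P) x u = ballFun (dirDeriv u P) x := by
  rw [(hasFDerivAt_ballFun hP x).fderiv]
  by_cases hx : x ∈ closedBall (0 : EuclideanSpace ℝ ι) 1 <;>
    simp [ballFun, hx, fderiv_eval_ofLp_apply]

theorem integrable_fderiv_ballFun {P : MvPolynomial ι ℝ} (hP : ballPoly ι ^ 2 ∣ P) :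
    Integrable (fderiv ℝ (ballFun P)) := by
  rw [funext fun x ↦ (hasFDerivAt_ballFun hP x).fderiv]
  have hcont : Continuous fun x : EuclideanSpace ℝ ι ↦
      Complex.ofRealCLM ∘L fderiv ℝ (fun x : EuclideanSpace ℝ ι ↦ eval x.ofLp P) x :=
    continuous_const.clm_comp ((contDiff_eval_ofLp P).continuous_fderiv one_ne_zero)
  exact (hcont.continuousOn.integrableOn_compact
    (isCompact_closedBall _ _)).integrable_indicator measurableSet_closedBall

theorem fourier_ballFun_dirDeriv {P : MvPolynomial ι ℝ} (hP : ballPoly ι ^ 2 ∣ P)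
    (u ξ : EuclideanSpace ℝ ι) :
    𝓕 (ballFun (dirDeriv u P)) ξ = 2 * Real.pi * Complex.I * ⟪u, ξ⟫ * 𝓕 (ballFun P) ξ := by
  have hint := integrable_fderiv_ballFun hP
  have hF := congrArg (fun L ↦ L u) (congrFun (Real.fourier_fderiv (integrable_ballFun P)
    (fun x ↦ (hasFDerivAt_ballFun hP x).differentiableAt) hint) ξ)
  simp only [Real.fourier_continuousLinearMap_apply hint,
    VectorFourier.fourierSMulRight_apply, fderiv_ballFun_apply hP] at hF
  have hinner : (-innerSL ℝ) ξ u = -⟪u, ξ⟫ := by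
    simp [real_inner_comm u ξ]
  rw [hF, hinner]
  simp only [Complex.real_smul, smul_eq_mul, Complex.ofReal_neg]
  ring

theorem ballIntegral_dirDeriv_eq_zero {P : MvPolynomial ι ℝ} (hP : ballPoly ι ^ 2 ∣ P)
    (u : EuclideanSpace ℝ ι) : ballIntegral (dirDeriv u P) = 0 := by
  have h := fourier_ballFun_dirDeriv hP u 0
  rw [inner_zero_right, Real.fourier_eq] at h
  simpa [integral_ballFun] using h

end BallFun

section Degree

variable {σ R : Type*} [CommSemiring R]

theorem totalDegree_pderiv_le (i : σ) (P : MvPolynomial σ R) :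
    (pderiv i P).totalDegree ≤ P.totalDegree - 1 := by
  classical
  refine Finset.sup_le fun m hm ↦ ?_
  have hcoeff : coeff (m + Finsupp.single i 1) P ≠ 0 := fun h ↦ by
    simp [coeff_pderiv, h] at hm
  have hle := le_totalDegree (mem_support_iff.mpr hcoeff)
  rw [Finsupp.sum_add_index' (by simp) (by simp), Finsupp.sum_single_index rfl] at hle
  omega

theorem mkDerivation_eq_sum [Fintype σ] (f : σ → MvPolynomial σ R) (P : MvPolynomial σ R) :
    mkDerivation R f P = ∑ i, f i * pderiv i P := by
  classical
  induction P using MvPolynomial.induction_on with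
  | C a => simp
  | add P Q hP hQ => simp only [map_add, mul_add, Finset.sum_add_distrib, hP, hQ]
  | mul_X P i hP =>
    simp only [Derivation.leibniz, hP, pderiv_X, mkDerivation_X, smul_eq_mul, mul_add,
      Finset.sum_add_distrib, Finset.mul_sum]
    congr 1
    · simp [Pi.single_apply, mul_comm]
    · exact Finset.sum_congr rfl fun j _ ↦ by ring

/-- The Euler derivation `P ↦ ∑ xᵢ ∂ᵢP`. -/
noncomputable def euler : Derivation R (MvPolynomial σ R) (MvPolynomial σ R) := mkDerivation R X

theorem euler_eq_sum [Fintype σ] (P : MvPolynomial σ R) : euler P = ∑ i, X i * pderiv i P :=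
  mkDerivation_eq_sum X P

theorem coeff_euler (m : σ →₀ ℕ) (P : MvPolynomial σ R) :
    coeff m (euler P) = m.degree * coeff m P := by
  classical
  induction P using MvPolynomial.induction_on' with
  | monomial a r =>
    have h : euler (monomial a r) = (a.degree : R) • monomial a r := by
      rw [euler, mkDerivation_monomial, Finsupp.degree_apply, Nat.cast_sum, Finset.sum_smul,
        Finsupp.sum, Finset.smul_sum]
      refine Finset.sum_congr rfl fun i hi ↦ ?_
      have hi1 : Finsupp.single i 1 ≤ a := by
        simpa [Nat.one_le_iff_ne_zero] using hi
      rw [X, smul_eq_mul, monomial_mul, tsub_add_cancel_of_le hi1, smul_monomial, smul_monomial,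
        smul_eq_mul, smul_eq_mul, mul_one, mul_comm]
    rw [h, coeff_smul, coeff_monomial]
    split_ifs with ham <;> simp [ham]
  | add P Q hP hQ => simp only [map_add, coeff_add, hP, hQ, mul_add]

theorem euler_mem_restrictTotalDegree {P : MvPolynomial σ R} {n : ℕ}
    (hP : P ∈ restrictTotalDegree σ R n) : euler P ∈ restrictTotalDegree σ R n := by
  rw [mem_restrictTotalDegree] at hP ⊢
  refine (totalDegree_le_of_support_subset fun m hm ↦ mem_support_iff.mpr fun h ↦ ?_).trans hP
  simp [coeff_euler, h] at hm

theorem euler_sub_smul_mem_restrictTotalDegree {R : Type*} [CommRing R]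
    {P : MvPolynomial σ R} {n : ℕ} (hP : P ∈ restrictTotalDegree σ R n) :
    euler P - (n : R) • P ∈ restrictTotalDegree σ R (n - 1) := by
  rw [mem_restrictTotalDegree] at hP ⊢
  refine Finset.sup_le fun m hm ↦ ?_
  have hmul : ((m.degree : R) - n) * coeff m P ≠ 0 := by
    simpa [coeff_euler, sub_mul] using hm
  have hle : m.degree ≤ n :=
    (le_totalDegree (mem_support_iff.mpr (right_ne_zero_of_mul hmul))).trans hP
  have hne : m.degree ≠ n := fun h ↦ hmul (by simp [h])
  change m.degree ≤ n - 1
  omega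

end Degree

section BallOperator

variable {ι : Type*} [Fintype ι]

theorem ballIntegral_C_mul (a : ℝ) (P : MvPolynomial ι ℝ) :
    ballIntegral (C a * P) = a * ballIntegral P := by
  rw [← smul_eq_C_mul, map_smul, smul_eq_mul]

theorem ballIntegral_pderiv_eq_zero {P : MvPolynomial ι ℝ} (hP : ballPoly ι ^ 2 ∣ P) (i : ι) :
    ballIntegral (pderiv i P) = 0 := by
  classical
  rw [← dirDeriv_single]
  exact ballIntegral_dirDeriv_eq_zero hP _

theorem ballIntegral_sum_pderiv_mul {F : ι → MvPolynomial ι ℝ} (hF : ∀ i, ballPoly ι ^ 2 ∣ F i)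
    (Q : MvPolynomial ι ℝ) :
    ballIntegral ((∑ i, pderiv i (F i)) * Q) = -ballIntegral (∑ i, F i * pderiv i Q) := by
  rw [eq_neg_iff_add_eq_zero, ← map_add, Finset.sum_mul, ← Finset.sum_add_distrib, map_sum]
  refine Finset.sum_eq_zero fun i _ ↦ ?_
  have h := ballIntegral_pderiv_eq_zero ((hF i).mul_right Q) i
  rwa [pderiv_mul] at h

theorem pderiv_ballPoly (i : ι) : pderiv i (ballPoly ι) = -(2 * X i) := by
  classical
  simp [ballPoly, pderiv_X, Pi.single_apply]

theorem pderiv_ballPoly_pow_succ_mul (i : ι) (k : ℕ) (P : MvPolynomial ι ℝ) :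
    pderiv i (ballPoly ι ^ (k + 1) * P) =
      ballPoly ι ^ (k + 1) * pderiv i P - C (2 * (k + 1) : ℝ) * ballPoly ι ^ k * (X i * P) := by
  rw [pderiv_mul, pderiv_pow, pderiv_ballPoly, Nat.add_sub_cancel]
  simp only [map_mul, map_add, map_natCast, map_ofNat, map_one]
  push_cast
  ring

theorem sum_X_sq : ∑ i, X i ^ 2 = (1 - ballPoly ι : MvPolynomial ι ℝ) := by
  rw [ballPoly, sub_sub_cancel]

theorem sum_pderiv_X_mul (P : MvPolynomial ι ℝ) :
    ∑ i, pderiv i (X i * P) = (Fintype.card ι : MvPolynomial ι ℝ) * P + euler P := by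
  simp [Finset.sum_add_distrib, euler_eq_sum, add_comm]

/-- The Laplacian on polynomials. -/
noncomputable def laplacian : MvPolynomial ι ℝ →ₗ[ℝ] MvPolynomial ι ℝ :=
  ∑ i, (pderiv i).toLinearMap ∘ₗ (pderiv i).toLinearMap

theorem laplacian_apply (P : MvPolynomial ι ℝ) :
    laplacian P = ∑ i, pderiv i (pderiv i P) := by
  simp [laplacian]

/-- The second order operator `Δ - E² - (2k + d) E`, with `E` the Euler derivation, whose
eigenfunctions are the orthogonal polynomials for the weight `(1 - |x|²) ^ k` on the unit ball. -/
noncomputable def ballOperator (k : ℕ) : MvPolynomial ι ℝ →ₗ[ℝ] MvPolynomial ι ℝ :=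
  laplacian - euler.toLinearMap ∘ₗ euler.toLinearMap -
    (2 * k + Fintype.card ι : ℝ) • euler.toLinearMap

theorem ballOperator_apply (k : ℕ) (P : MvPolynomial ι ℝ) :
    ballOperator k P =
      laplacian P - euler (euler P) - (2 * k + Fintype.card ι : ℝ) • euler P := rfl

theorem ballPoly_pow_mul_ballOperator (k : ℕ) (P : MvPolynomial ι ℝ) :
    ballPoly ι ^ (k + 1) * ballOperator (k + 1) P =
      ∑ i, pderiv i (ballPoly ι ^ (k + 1) * (pderiv i P - X i * euler P)) := by
  have hradial : ∑ i, X i * (pderiv i P - X i * euler P) = ballPoly ι * euler P := by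
    simp_rw [mul_sub, ← mul_assoc, ← sq, Finset.sum_sub_distrib, ← Finset.sum_mul, sum_X_sq,
      ← euler_eq_sum]
    ring
  have hdiv : ∑ i, pderiv i (pderiv i P - X i * euler P) =
      laplacian P - ((Fintype.card ι : MvPolynomial ι ℝ) * euler P + euler (euler P)) := by
    simp_rw [map_sub, Finset.sum_sub_distrib, sum_pderiv_X_mul, ← laplacian_apply]
  simp_rw [pderiv_ballPoly_pow_succ_mul, Finset.sum_sub_distrib, ← Finset.mul_sum, hradial, hdiv,
    ballOperator_apply, smul_eq_C_mul]
  simp only [map_add, map_mul, map_natCast, map_ofNat, map_one]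
  push_cast
  ring

theorem ballIntegral_ballOperator_mul {k : ℕ} (hk : 2 ≤ k) (P Q : MvPolynomial ι ℝ) :
    ballIntegral (ballPoly ι ^ k * (ballOperator k P * Q)) =
      -ballIntegral (ballPoly ι ^ k * (∑ i, pderiv i P * pderiv i Q - euler P * euler Q)) := by
  obtain ⟨k, rfl⟩ := Nat.exists_eq_add_of_le' (one_le_two.trans hk)
  rw [← mul_assoc, ballPoly_pow_mul_ballOperator, ballIntegral_sum_pderiv_mul
    fun i ↦ (pow_dvd_pow _ hk).mul_right _]
  have hdot : ∑ i, (pderiv i P - X i * euler P) * pderiv i Q =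
      ∑ i, pderiv i P * pderiv i Q - euler P * euler Q := by
    rw [euler_eq_sum Q, Finset.mul_sum, ← Finset.sum_sub_distrib]
    exact Finset.sum_congr rfl fun i _ ↦ by ring
  simp_rw [mul_assoc, ← Finset.mul_sum, hdot]

theorem ballOperator_symm {k : ℕ} (hk : 2 ≤ k) (P Q : MvPolynomial ι ℝ) :
    ballIntegral (ballPoly ι ^ k * (ballOperator k P * Q)) =
      ballIntegral (ballPoly ι ^ k * (P * ballOperator k Q)) := by
  rw [mul_comm P, ballIntegral_ballOperator_mul hk, ballIntegral_ballOperator_mul hk,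
    mul_comm (euler P)]
  simp_rw [mul_comm (pderiv _ P)]

/-- To leading order, the operator acts on polynomials of degree `n` as `-n (n + 2k + d)`. -/
theorem ballOperator_add_smul_mem_restrictTotalDegree (k : ℕ) {n : ℕ} {P : MvPolynomial ι ℝ}
    (hP : P ∈ restrictTotalDegree ι ℝ n) :
    ballOperator k P + (n * (n + 2 * k + Fintype.card ι) : ℝ) • P ∈
      restrictTotalDegree ι ℝ (n - 1) := by
  have hfactor : ballOperator k P + (n * (n + 2 * k + Fintype.card ι) : ℝ) • P =
      laplacian P - euler (euler P - (n : ℝ) • P) -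
        (n + 2 * k + Fintype.card ι : ℝ) • (euler P - (n : ℝ) • P) := by
    rw [ballOperator_apply, map_sub, Derivation.map_smul]
    module
  have hE := euler_sub_smul_mem_restrictTotalDegree hP
  rw [hfactor]
  refine sub_mem (sub_mem ?_ (euler_mem_restrictTotalDegree hE)) (Submodule.smul_mem _ _ hE)
  rw [laplacian_apply]
  refine sum_mem fun i _ ↦ ?_
  rw [mem_restrictTotalDegree] at hP ⊢
  have := totalDegree_pderiv_le i P
  have := totalDegree_pderiv_le i (pderiv i P)
  omega

theorem ballOperator_mem_restrictTotalDegree (k : ℕ) {n : ℕ} {P : MvPolynomial ι ℝ}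
    (hP : P ∈ restrictTotalDegree ι ℝ n) : ballOperator k P ∈ restrictTotalDegree ι ℝ n := by
  have hsmul := Submodule.smul_mem _ (n * (n + 2 * k + Fintype.card ι) : ℝ) hP
  rw [← Submodule.add_mem_iff_left _ hsmul]
  have h := ballOperator_add_smul_mem_restrictTotalDegree k hP
  rw [mem_restrictTotalDegree] at h ⊢
  exact h.trans (Nat.sub_le _ _)

end BallOperator

section Bernstein

variable {ι : Type*} [Fintype ι]

theorem exists_mem_forall_ballIntegral_pow_mul_sub_eq_zero (k : ℕ)
    (V : Submodule ℝ (MvPolynomial ι ℝ)) [FiniteDimensional ℝ V] (Q : MvPolynomial ι ℝ) :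
    ∃ R ∈ V, ∀ T ∈ V, ballIntegral (ballPoly ι ^ k * (T * (Q - R))) = 0 := by
  let B : LinearMap.BilinForm ℝ (MvPolynomial ι ℝ) :=
    (LinearMap.mul ℝ _).compr₂ (ballIntegral ∘ₗ LinearMap.mulLeft ℝ (ballPoly ι ^ k))
  have hB (S T : MvPolynomial ι ℝ) : B S T = ballIntegral (ballPoly ι ^ k * (S * T)) := rfl
  have hinj : Function.Injective (B.domRestrict₁₂ V V) := by
    refine (injective_iff_map_eq_zero _).mpr fun S hS ↦ ?_
    have h0 := LinearMap.congr_fun hS S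
    rw [LinearMap.domRestrict₁₂_apply, hB, ← sq] at h0
    exact Subtype.ext (eq_zero_of_ballIntegral_pow_mul_sq_eq_zero h0)
  obtain ⟨R, hR⟩ := (LinearMap.injective_iff_surjective_of_finrank_eq_finrank
    Subspace.dual_finrank_eq.symm).mp hinj ((B Q).domRestrict V)
  refine ⟨R, R.2, fun T hT ↦ ?_⟩
  have h := LinearMap.congr_fun hR ⟨T, hT⟩
  rw [LinearMap.domRestrict₁₂_apply, LinearMap.domRestrict_apply, hB, hB] at h
  rw [mul_sub, mul_sub, map_sub, mul_comm T, mul_comm T, h, sub_self]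

theorem ballIntegral_pow_mul_add_sq {k : ℕ} {R S : MvPolynomial ι ℝ}
    (h : ballIntegral (ballPoly ι ^ k * (R * S)) = 0) :
    ballIntegral (ballPoly ι ^ k * (R + S) ^ 2) =
      ballIntegral (ballPoly ι ^ k * R ^ 2) + ballIntegral (ballPoly ι ^ k * S ^ 2) := by
  have hsq : ballPoly ι ^ k * (R + S) ^ 2 = ballPoly ι ^ k * R ^ 2 + ballPoly ι ^ k * S ^ 2 +
      C 2 * (ballPoly ι ^ k * (R * S)) := by
    rw [map_ofNat]
    ring
  rw [hsq, map_add, map_add, ballIntegral_C_mul, h, mul_zero, add_zero]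

theorem ballIntegral_ballOperator_mul_self_add {k : ℕ} (hk : 2 ≤ k) {R S : MvPolynomial ι ℝ}
    (h : ballIntegral (ballPoly ι ^ k * (ballOperator k R * S)) = 0) :
    ballIntegral (ballPoly ι ^ k * (ballOperator k (R + S) * (R + S))) =
      ballIntegral (ballPoly ι ^ k * (ballOperator k R * R)) +
        ballIntegral (ballPoly ι ^ k * (ballOperator k S * S)) := by
  have hsymm := ballOperator_symm hk R S
  simp only [map_add, mul_add, add_mul]
  rw [mul_comm (ballOperator k S) R]
  linarith

/-- The spectral bound for the operator on polynomials of degree `n`, by splitting off the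
component orthogonal to lower degree, which is an eigenvector. -/
theorem neg_ballIntegral_ballOperator_mul_self_le {k : ℕ} (hk : 2 ≤ k) {n : ℕ}
    {Q : MvPolynomial ι ℝ} (hQ : Q.totalDegree ≤ n) :
    -ballIntegral (ballPoly ι ^ k * (ballOperator k Q * Q)) ≤
      n * (n + 2 * k + Fintype.card ι) * ballIntegral (ballPoly ι ^ k * Q ^ 2) := by
  induction n generalizing Q with
  | zero =>
    have hQ0 : Q = C (coeff 0 Q) := totalDegree_eq_zero_iff_eq_C.mp (Nat.le_zero.mp hQ)
    have hD : ballOperator k Q = 0 := by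
      rw [hQ0]
      simp [ballOperator_apply, laplacian_apply, derivation_C]
    simp [hD]
  | succ n ih =>
    obtain ⟨R, hR, hRperp⟩ :=
      exists_mem_forall_ballIntegral_pow_mul_sub_eq_zero k (restrictTotalDegree ι ℝ n) Q
    obtain ⟨S, rfl⟩ : ∃ S, Q = R + S := ⟨Q - R, (add_sub_cancel R Q).symm⟩
    simp only [add_sub_cancel_left] at hRperp
    have hdegR := (mem_restrictTotalDegree ..).mp hR
    have hS : S ∈ restrictTotalDegree ι ℝ (n + 1) := by
      rw [mem_restrictTotalDegree]
      simpa using (totalDegree_sub (R + S) R).trans (max_le hQ (hdegR.trans n.le_succ))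
    have heigen := hRperp _ (ballOperator_add_smul_mem_restrictTotalDegree k hS)
    have hbound := ih hdegR
    rw [add_mul, smul_mul_assoc, mul_add, map_add, mul_smul_comm, map_smul, smul_eq_mul,
      ← sq] at heigen
    have hRR := ballIntegral_pow_mul_sq_nonneg k R
    rw [ballIntegral_ballOperator_mul_self_add hk
      (hRperp _ (ballOperator_mem_restrictTotalDegree k hR)),
      ballIntegral_pow_mul_add_sq (hRperp R hR)]
    push_cast at heigen ⊢
    nlinarith [mul_nonneg (by positivity : (0 : ℝ) ≤ 2 * n + 1 + 2 * k + Fintype.card ι) hRR]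

theorem sq_eval_euler_le (Q : MvPolynomial ι ℝ) (x : EuclideanSpace ℝ ι) :
    eval x.ofLp (euler Q) ^ 2 ≤ ‖x‖ ^ 2 * eval x.ofLp (∑ i, pderiv i Q ^ 2) := by
  simpa [euler_eq_sum, EuclideanSpace.norm_sq_eq] using
    Finset.sum_mul_sq_le_sq_mul_sq Finset.univ x.ofLp fun i ↦ eval x.ofLp (pderiv i Q)

theorem ballIntegral_pow_succ_mul_sum_pderiv_sq_le {k : ℕ} (hk : 2 ≤ k) {n : ℕ}
    {Q : MvPolynomial ι ℝ} (hQ : Q.totalDegree ≤ n) :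
    ballIntegral (ballPoly ι ^ (k + 1) * ∑ i, pderiv i Q ^ 2) ≤
      n * (n + 2 * k + Fintype.card ι) * ballIntegral (ballPoly ι ^ k * Q ^ 2) := by
  refine le_trans ?_ (neg_ballIntegral_ballOperator_mul_self_le hk hQ)
  rw [ballIntegral_ballOperator_mul hk, neg_neg, pow_succ, mul_assoc]
  refine ballIntegral_pow_mul_mono k fun x _ ↦ ?_
  simp_rw [← sq]
  rw [map_mul, map_sub, map_pow, eval_ballPoly]
  linarith [sq_eval_euler_le Q x]

theorem ballIntegral_pow_succ_mul_euler {m : ℕ} (hm : 1 ≤ m) (R : MvPolynomial ι ℝ) :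
    ballIntegral (ballPoly ι ^ (m + 1) * euler R) =
      2 * (m + 1) * ballIntegral (ballPoly ι ^ m * R) -
        (Fintype.card ι + 2 * (m + 1)) * ballIntegral (ballPoly ι ^ (m + 1) * R) := by
  have h0 : ballIntegral (∑ i, pderiv i (ballPoly ι ^ (m + 1) * (X i * R))) = 0 := by
    rw [map_sum]
    exact Finset.sum_eq_zero fun i _ ↦
      ballIntegral_pderiv_eq_zero ((pow_dvd_pow _ (by omega)).mul_right _) i
  have hdiv : ∑ i, pderiv i (ballPoly ι ^ (m + 1) * (X i * R)) =
      ballPoly ι ^ (m + 1) * euler R + C (Fintype.card ι + 2 * (m + 1) : ℝ) *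
        (ballPoly ι ^ (m + 1) * R) - C (2 * (m + 1) : ℝ) * (ballPoly ι ^ m * R) := by
    simp_rw [pderiv_ballPoly_pow_succ_mul, Finset.sum_sub_distrib, ← Finset.mul_sum,
      sum_pderiv_X_mul, ← mul_assoc (X _), ← sq, ← Finset.sum_mul, sum_X_sq]
    simp only [map_add, map_mul, map_natCast, map_ofNat, map_one]
    ring
  rw [hdiv, map_sub, map_add, ballIntegral_C_mul, ballIntegral_C_mul] at h0
  linarith

theorem ballIntegral_pow_mul_sq_le {m n : ℕ} {Q : MvPolynomial ι ℝ} (hm : 2 ≤ m)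
    (hQ : Q.totalDegree ≤ n) (hn : n + Fintype.card ι ≤ m + 1) :
    ballIntegral (ballPoly ι ^ m * Q ^ 2) ≤ 6 * ballIntegral (ballPoly ι ^ (m + 1) * Q ^ 2) := by
  have hvirial := ballIntegral_pow_succ_mul_euler (one_le_two.trans hm) (Q ^ 2)
  have hbernstein := ballIntegral_pow_succ_mul_sum_pderiv_sq_le hm hQ
  set s : ℝ := m + 1 with hs
  have hamgm : 3 * s * ballIntegral (ballPoly ι ^ (m + 1) * euler (Q ^ 2)) ≤
      (3 * s) ^ 2 * ballIntegral (ballPoly ι ^ (m + 1) * Q ^ 2) +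
        ballIntegral (ballPoly ι ^ (m + 1) * ∑ i, pderiv i Q ^ 2) := by
    rw [← ballIntegral_C_mul, ← ballIntegral_C_mul, ← map_add, mul_left_comm (C _),
      mul_left_comm (C _), ← mul_add]
    refine ballIntegral_pow_mul_mono _ fun x hx ↦ ?_
    have hE := (sq_eval_euler_le Q x).trans (mul_le_of_le_one_left
      (by simpa using Finset.sum_nonneg fun i _ ↦ sq_nonneg _) (pow_le_one₀ (norm_nonneg x) hx))
    simp only [Derivation.leibniz_pow, map_add, map_mul, map_pow, eval_C, map_ofNat, smul_eq_mul,
      nsmul_eq_mul, Nat.cast_ofNat, Nat.add_one_sub_one, pow_one] at hE ⊢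
    nlinarith [sq_nonneg (3 * s * eval x.ofLp Q - eval x.ofLp (euler Q))]
  have hcast : (n : ℝ) + Fintype.card ι ≤ s := by rw [hs]; exact_mod_cast hn
  have hsn : (n : ℝ) * (n + 2 * m + Fintype.card ι) ≤ 3 * s ^ 2 := by
    nlinarith [(Nat.cast_nonneg n : (0 : ℝ) ≤ n)]
  have hlow := mul_le_mul_of_nonneg_right hsn (ballIntegral_pow_mul_sq_nonneg m Q)
  have hdim := mul_le_mul_of_nonneg_right (le_of_add_le_of_nonneg_right hcast n.cast_nonneg)
    (ballIntegral_pow_mul_sq_nonneg (m + 1) Q)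
  rw [hvirial] at hamgm
  refine le_of_mul_le_mul_left ?_ (by positivity : 0 < 3 * s ^ 2)
  nlinarith

theorem sum_pderiv_ballPoly_pow_succ_mul_sq (j : ℕ) (Q : MvPolynomial ι ℝ) :
    ∑ i, pderiv i (ballPoly ι ^ (j + 1) * Q) ^ 2 =
      ballPoly ι ^ (2 * j + 1 + 1) * ∑ i, pderiv i Q ^ 2 -
        C (2 * (j + 1) : ℝ) * (ballPoly ι ^ (2 * j + 1) * euler (Q ^ 2)) +
          C ((2 * (j + 1)) ^ 2 : ℝ) *
            (ballPoly ι ^ (2 * j) * Q ^ 2 - ballPoly ι ^ (2 * j + 1) * Q ^ 2) := by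
  have hsq (i : ι) : pderiv i (ballPoly ι ^ (j + 1) * Q) ^ 2 =
      ballPoly ι ^ (2 * j + 1 + 1) * pderiv i Q ^ 2 -
        C (2 * (j + 1) : ℝ) * (ballPoly ι ^ (2 * j + 1) * (2 * Q)) * (X i * pderiv i Q) +
          C ((2 * (j + 1)) ^ 2 : ℝ) * (ballPoly ι ^ (2 * j) * Q ^ 2) * X i ^ 2 := by
    rw [pderiv_ballPoly_pow_succ_mul, map_pow]
    ring
  have hE : euler (Q ^ 2) = 2 * Q * euler Q := by simp [Derivation.leibniz_pow, mul_assoc]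
  simp_rw [hsq, Finset.sum_add_distrib, Finset.sum_sub_distrib, ← Finset.mul_sum, sum_X_sq,
    ← euler_eq_sum, hE]
  ring

theorem ballIntegral_sum_pderiv_pow_mul_sq_le {k n : ℕ} {Q : MvPolynomial ι ℝ} (hk : 2 ≤ k)
    (hQ : Q.totalDegree ≤ n) (hn : n + Fintype.card ι ≤ 2 * k) :
    ballIntegral (∑ i, pderiv i (ballPoly ι ^ k * Q) ^ 2) ≤
      96 * k ^ 2 * ballIntegral ((ballPoly ι ^ k * Q) ^ 2) := by
  obtain ⟨j, rfl⟩ := Nat.exists_eq_add_of_le' (one_le_two.trans hk)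
  have hbernstein := ballIntegral_pow_succ_mul_sum_pderiv_sq_le (k := 2 * j + 1) (by omega) hQ
  have hvirial := ballIntegral_pow_succ_mul_euler (m := 2 * j) (by omega) (Q ^ 2)
  have hraise := ballIntegral_pow_mul_sq_le (m := 2 * j + 1) (by omega) hQ (by omega)
  have hcast : (n : ℝ) + Fintype.card ι ≤ 2 * (j + 1) := by exact_mod_cast hn
  have hJ₀ := ballIntegral_pow_mul_sq_nonneg (2 * j) Q
  have hJ₁ := ballIntegral_pow_mul_sq_nonneg (2 * j + 1) Q
  have hcoeff : (n : ℝ) * (n + 2 * (2 * j + 1) + Fintype.card ι) +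
      2 * (j + 1) * (Fintype.card ι + 2 * (2 * j + 1)) - (2 * (j + 1)) ^ 2 ≤
        16 * ((j : ℝ) + 1) ^ 2 := by
    nlinarith [(Nat.cast_nonneg n : (0 : ℝ) ≤ n), (Nat.cast_nonneg j : (0 : ℝ) ≤ j),
      (Nat.cast_nonneg (Fintype.card ι) : (0 : ℝ) ≤ Fintype.card ι)]
  rw [sum_pderiv_ballPoly_pow_succ_mul_sq, map_add, map_sub, ballIntegral_C_mul,
    ballIntegral_C_mul, map_sub, hvirial, mul_pow (_ ^ _), ← pow_mul,
    (by ring : (j + 1) * 2 = 2 * j + 1 + 1)]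
  push_cast at hbernstein ⊢
  calc _ ≤ 16 * ((j : ℝ) + 1) ^ 2 * ballIntegral (ballPoly ι ^ (2 * j + 1) * Q ^ 2) := by
        linarith [mul_le_mul_of_nonneg_right hcoeff hJ₁,
          mul_nonneg (by positivity : (0 : ℝ) ≤ 4 * (j + 1) * j) hJ₀]
    _ ≤ 16 * ((j : ℝ) + 1) ^ 2 * (6 * ballIntegral (ballPoly ι ^ (2 * j + 1 + 1) * Q ^ 2)) := by
        gcongr
    _ = _ := by ring

end Bernstein

section Helmholtz

theorem totalDegree_dirDeriv_le {ι : Type*} [Finite ι] (u : EuclideanSpace ℝ ι)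
    (P : MvPolynomial ι ℝ) : (dirDeriv u P).totalDegree ≤ P.totalDegree := by
  cases nonempty_fintype ι
  rw [dirDeriv, mkDerivation_eq_sum]
  refine totalDegree_finsetSum_le fun i _ ↦ ?_
  rw [← smul_eq_C_mul]
  exact ((totalDegree_smul_le _ _).trans (totalDegree_pderiv_le i P)).trans (Nat.sub_le _ _)

variable {ι : Type*} [Fintype ι] {u : EuclideanSpace ℝ ι} {P : MvPolynomial ι ℝ}

theorem dirDeriv_linear (u : EuclideanSpace ℝ ι) :
    dirDeriv u (∑ i, C (u i) * X i) = C (‖u‖ ^ 2) := by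
  rw [map_sum, EuclideanSpace.real_norm_sq_eq, map_sum]
  exact Finset.sum_congr rfl fun i _ ↦ by
    rw [Derivation.leibniz, dirDeriv_X, derivation_C, smul_zero, add_zero, smul_eq_mul, ← C_mul, sq]

/-- If `P` is constant along `u`, integrating along `u` against the linear form `⟪u, ·⟫` shows that
the integral of `P` vanishes. -/
theorem ballIntegral_eq_zero_of_dirDeriv_eq_zero (hu : u ≠ 0) (hP : ballPoly ι ^ 2 ∣ P)
    (h : dirDeriv u P = 0) : ballIntegral P = 0 := by
  have hdiv := ballIntegral_dirDeriv_eq_zero (hP.mul_left (∑ i, C (u i) * X i)) u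
  rw [Derivation.leibniz, h, smul_zero, zero_add, dirDeriv_linear, smul_eq_mul, mul_comm,
    ballIntegral_C_mul] at hdiv
  exact (mul_eq_zero.mp hdiv).resolve_left (by simpa using hu)

theorem eq_zero_of_dirDeriv_eq_zero (hu : u ≠ 0) (hP : ballPoly ι ∣ P) (h : dirDeriv u P = 0) :
    P = 0 := by
  refine eq_zero_of_ballIntegral_pow_mul_sq_eq_zero (k := 0) ?_
  rw [pow_zero, one_mul]
  exact ballIntegral_eq_zero_of_dirDeriv_eq_zero hu (pow_dvd_pow_of_dvd hP 2)
    (by rw [Derivation.leibniz_pow, h, smul_zero, smul_zero])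

/-- The operator `∂ᵤ² + (2πt)²`, which on the Fourier side is multiplication by
`(2π)² (t² - ⟪u, ξ⟫²)`. -/
noncomputable def helmholtz (u : EuclideanSpace ℝ ι) (t : ℝ) (P : MvPolynomial ι ℝ) :
    MvPolynomial ι ℝ :=
  dirDeriv u (dirDeriv u P) + C ((2 * Real.pi * t) ^ 2) * P

/-- The energy `(∂ᵤP)² + (2πt)² P²` of a solution is conserved along `u`. -/
theorem eq_zero_of_helmholtz_eq_zero (hu : u ≠ 0) (hP : ballPoly ι ^ 2 ∣ P) {t : ℝ}
    (h : helmholtz u t P = 0) : P = 0 := by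
  have hWP : ballPoly ι ∣ P := (dvd_pow_self _ two_ne_zero).trans hP
  have hWP' : ballPoly ι ∣ dirDeriv u P := by
    simpa using pow_dvd_derivation_of_pow_succ_dvd (dirDeriv u) (k := 1) hP
  have hconserved :
      dirDeriv u (dirDeriv u P ^ 2 + C ((2 * Real.pi * t) ^ 2) * P ^ 2) = 0 := by
    calc _ = 2 * dirDeriv u P * helmholtz u t P := by
          simp only [helmholtz, map_add, Derivation.leibniz, Derivation.leibniz_pow, derivation_C,
            smul_eq_mul, nsmul_eq_mul, Nat.cast_ofNat, Nat.add_one_sub_one, pow_one]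
          ring
      _ = 0 := by rw [h, mul_zero]
  have henergy := ballIntegral_eq_zero_of_dirDeriv_eq_zero hu
    ((pow_dvd_pow_of_dvd hWP' 2).add ((pow_dvd_pow_of_dvd hWP 2).mul_left _)) hconserved
  rw [map_add, ballIntegral_C_mul] at henergy
  have hnonneg := ballIntegral_pow_mul_sq_nonneg 0 (dirDeriv u P)
  have hnonneg' := mul_nonneg (sq_nonneg (2 * Real.pi * t)) (ballIntegral_pow_mul_sq_nonneg 0 P)
  rw [pow_zero, one_mul] at hnonneg hnonneg'
  refine eq_zero_of_dirDeriv_eq_zero hu hWP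
    (eq_zero_of_ballIntegral_pow_mul_sq_eq_zero (k := 0) ?_)
  rw [pow_zero, one_mul]
  linarith

theorem fourier_ballFun_add_C_mul (P Q : MvPolynomial ι ℝ) (a : ℝ) (ξ : EuclideanSpace ℝ ι) :
    𝓕 (ballFun (ι := ι) (P + C a * Q)) ξ = 𝓕 (ballFun P) ξ + a * 𝓕 (ballFun Q) ξ := by
  have hint (R : MvPolynomial ι ℝ) :=
    (Real.fourierIntegral_convergent_iff ξ).mpr (integrable_ballFun R)
  simp only [Real.fourier_eq]
  rw [← integral_const_mul, ← integral_add (hint P) ((hint Q).const_mul _)]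
  congr with x
  by_cases hx : x ∈ closedBall (0 : EuclideanSpace ℝ ι) 1
  · simp only [ballFun, hx, indicator_of_mem, map_add, map_mul, eval_C, Circle.smul_def,
      smul_eq_mul, Complex.ofReal_add, Complex.ofReal_mul]
    ring
  · simp [ballFun, hx]

theorem fourier_ballFun_helmholtz (hP : ballPoly ι ^ 3 ∣ P) (u ξ : EuclideanSpace ℝ ι) (t : ℝ) :
    𝓕 (ballFun (helmholtz u t P)) ξ =
      (2 * Real.pi) ^ 2 * (t ^ 2 - ⟪u, ξ⟫ ^ 2 : ℝ) * 𝓕 (ballFun P) ξ := by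
  have h2 := fourier_ballFun_dirDeriv (pow_dvd_derivation_of_pow_succ_dvd (dirDeriv u) hP) u ξ
  rw [fourier_ballFun_dirDeriv ((pow_dvd_pow _ (by norm_num)).trans hP)] at h2
  rw [helmholtz, fourier_ballFun_add_C_mul, h2]
  push_cast
  linear_combination (2 * Real.pi * ⟪u, ξ⟫ : ℂ) ^ 2 * 𝓕 (ballFun P) ξ * Complex.I_sq

theorem totalDegree_ballPoly_le : (ballPoly ι).totalDegree ≤ 2 := by
  refine (totalDegree_sub _ _).trans (max_le (by simp) (totalDegree_finsetSum_le fun i _ ↦ ?_))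
  simp

theorem totalDegree_ballPoly [Nonempty ι] : (ballPoly ι).totalDegree = 2 := by
  classical
  obtain ⟨i⟩ := ‹Nonempty ι›
  have hcoeff : coeff (Finsupp.single i 2) (ballPoly ι) ≠ 0 := by
    have h0 : (0 : ι →₀ ℕ) ≠ Finsupp.single i 2 := by simp [eq_comm]
    simp [ballPoly, coeff_sum, coeff_X_pow, Finsupp.single_left_inj, coeff_one, h0]
  exact totalDegree_ballPoly_le.antisymm
    (by simpa using le_totalDegree (mem_support_iff.mpr hcoeff))

theorem exists_fourier_ballFun_eq_zero_on_hyperplanes {κ : Type*} (s : Finset κ)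
    {v : κ → EuclideanSpace ℝ ι} (hv : ∀ j ∈ s, v j ≠ 0) (t : κ → ℝ) {k : ℕ} (hk : 1 ≤ k) :
    ∃ P : MvPolynomial ι ℝ, P ≠ 0 ∧ ballPoly ι ^ k ∣ P ∧ P.totalDegree ≤ 2 * k + 4 * s.card ∧
      ∀ j ∈ s, ∀ ξ, ⟪v j, ξ⟫ = t j → 𝓕 (ballFun P) ξ = 0 := by
  classical
  induction s using Finset.induction_on generalizing k with
  | empty =>
    refine ⟨ballPoly ι ^ k, pow_ne_zero _ ballPoly_ne_zero, dvd_rfl, ?_, by simp⟩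
    rw [Finset.card_empty, mul_zero, add_zero, mul_comm]
    exact (totalDegree_pow _ _).trans (Nat.mul_le_mul_left k totalDegree_ballPoly_le)
  | insert a s ha ih =>
    obtain ⟨P, hP0, hdvd, hdeg, hzero⟩ :=
      ih (fun j hj ↦ hv j (Finset.mem_insert_of_mem hj)) (le_add_right hk : 1 ≤ k + 2)
    have hfourier := fourier_ballFun_helmholtz ((pow_dvd_pow _ (by omega)).trans hdvd) (v a)
      (t := t a)
    refine ⟨helmholtz (v a) (t a) P, fun h ↦ hP0 ?_, ?_, ?_, ?_⟩
    · exact eq_zero_of_helmholtz_eq_zero (hv a (Finset.mem_insert_self a s))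
        ((pow_dvd_pow _ (by omega)).trans hdvd) h
    · exact (pow_dvd_derivation_of_pow_succ_dvd _ (pow_dvd_derivation_of_pow_succ_dvd _ hdvd)).add
        (((pow_dvd_pow _ (by omega)).trans hdvd).mul_left _)
    · rw [helmholtz, ← smul_eq_C_mul]
      refine (totalDegree_add _ _).trans (max_le ?_ ?_)
      · have := totalDegree_dirDeriv_le (v a) P
        have := totalDegree_dirDeriv_le (v a) (dirDeriv (v a) P)
        rw [Finset.card_insert_of_notMem ha]
        omega
      · have := totalDegree_smul_le ((2 * Real.pi * t a) ^ 2) P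
        rw [Finset.card_insert_of_notMem ha]
        omega
    · intro j hj ξ hξ
      rw [hfourier]
      obtain rfl | hj := Finset.mem_insert.mp hj
      · simp [hξ]
      · rw [hzero j hj ξ hξ, mul_zero]

end Helmholtz

section Periodization

variable {ι : Type*}

/-- The integer vector `n` as a point of `ℝ^ι`. -/
def intVec (ι : Type*) : (ι → ℤ) →+ (ι → ℝ) :=
  (Int.castAddHom ℝ).compLeft ι

theorem intVec_apply (n : ι → ℤ) (i : ι) : intVec ι n i = n i :=
  rfl

/-- The unit cube with corner `b`. It is half-open at `b`, like the fundamental domains of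
`UnitAddTorus.measurableEquivPiIoc`. -/
def unitCell (b : ι → ℝ) : Set (ι → ℝ) :=
  {x | ∀ i, x i ∈ Ioc (b i) (b i + 1)}

theorem add_mem_unitCell_add_iff {b x y : ι → ℝ} : x + y ∈ unitCell (b + y) ↔ x ∈ unitCell b := by
  simp only [unitCell, mem_ofPred_eq, Pi.add_apply, add_right_comm _ _ (1 : ℝ), mem_Ioc,
    add_lt_add_iff_right, add_le_add_iff_right]

theorem pairwise_disjoint_unitCell_intVec :
    Pairwise (Function.onFun Disjoint fun n ↦ unitCell (intVec ι n)) := by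
  refine fun m n hmn ↦ disjoint_left.mpr fun x hm hn ↦ hmn (funext fun i ↦ ?_)
  have hlt : (m i : ℝ) < n i + 1 := (hm i).1.trans_le (hn i).2
  have hgt : (n i : ℝ) < m i + 1 := (hn i).1.trans_le (hm i).2
  norm_cast at hlt hgt
  lia

theorem iUnion_unitCell_intVec : ⋃ n, unitCell (intVec ι n) = univ := by
  refine eq_univ_of_forall fun x ↦ mem_iUnion.mpr ⟨fun i ↦ ⌈x i⌉ - 1, fun i ↦ ?_⟩
  rw [intVec_apply, Int.cast_sub, Int.cast_one]
  exact ⟨by linarith [Int.ceil_lt_add_one (x i)], by linarith [Int.le_ceil (x i)]⟩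

/-- The representative in `unitCell 0` of a point of the torus. -/
noncomputable def cellRep (t : UnitAddTorus ι) : ι → ℝ :=
  (UnitAddTorus.measurableEquivPiIoc 0 t).1

theorem measurable_cellRep : Measurable (cellRep (ι := ι)) :=
  measurable_subtype_coe.comp (UnitAddTorus.measurableEquivPiIoc 0).measurable

theorem cellRep_coe {x : ι → ℝ} (hx : x ∈ unitCell 0) :
    cellRep (fun i ↦ (x i : UnitAddCircle)) = x :=
  congrArg Subtype.val ((UnitAddTorus.measurableEquivPiIoc 0).apply_symm_apply ⟨x, hx⟩)

theorem fourierChar_intCast (n : ℤ) : 𝐞 (n : ℝ) = 1 := by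
  ext
  rw [Real.fourierChar_apply, Circle.coe_one, Complex.exp_eq_one_iff]
  exact ⟨n, by push_cast; ring⟩

/-- The periodization of `g`, restricted to the translates in `S`, as a function on the torus.
It is the full periodization when the other translates of `g` vanish on `unitCell 0`. -/
noncomputable def periodization (S : Finset (ι → ℤ)) (g : (ι → ℝ) → ℂ) (t : UnitAddTorus ι) : ℂ :=
  ∑ n ∈ S, g (cellRep t + intVec ι n)

theorem periodization_coe (S : Finset (ι → ℤ)) (g : (ι → ℝ) → ℂ) {x : ι → ℝ}
    (hx : x ∈ unitCell 0) :
    periodization S g (fun i ↦ (x i : UnitAddCircle)) = ∑ n ∈ S, g (x + intVec ι n) := by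
  simp only [periodization, cellRep_coe hx]

theorem measurableSet_unitCell [Countable ι] (b : ι → ℝ) : MeasurableSet (unitCell b) :=
  MeasurableSet.univ_pi' fun _ ↦ measurableSet_Ioc

theorem exists_finset_apply_add_intVec_eq_zero [Finite ι] {E : Type*} [Zero E]
    {g : (ι → ℝ) → E} (hg : HasCompactSupport g) :
    ∃ S : Finset (ι → ℤ), ∀ x ∈ unitCell 0, ∀ n ∉ S, g (x + intVec ι n) = 0 := by
  classical
  cases nonempty_fintype ι
  obtain ⟨R, hR⟩ := hg.isCompact.isBounded.exists_norm_le
  refine ⟨Finset.Icc (fun _ ↦ -(⌈R⌉ + 1)) fun _ ↦ ⌈R⌉ + 1, fun x hx n hn ↦ ?_⟩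
  contrapose! hn
  have hbound (i : ι) : |x i + n i| ≤ R :=
    (norm_le_pi_norm (x + intVec ι n) i).trans (hR _ (subset_tsupport _ hn))
  have hcell (i : ι) : 0 < x i ∧ x i ≤ 1 := by simpa [unitCell] using hx i
  refine Finset.mem_Icc.mpr ⟨fun i ↦ ?_, fun i ↦ ?_⟩ <;>
  · rify
    linarith [abs_le.mp (hbound i), (hcell i).1, (hcell i).2, Int.le_ceil R]

variable [Fintype ι]

theorem setIntegral_unitCell_intVec {E : Type*} [NormedAddCommGroup E] [NormedSpace ℝ E]
    (φ : (ι → ℝ) → E) (n : ι → ℤ) :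
    ∫ y in unitCell (intVec ι n), φ y = ∫ x in unitCell 0, φ (x + intVec ι n) := by
  rw [← integral_indicator (measurableSet_unitCell _),
    ← integral_indicator (measurableSet_unitCell _),
    ← integral_add_right_eq_self _ (intVec ι n)]
  congr 1 with x
  have hx : x + intVec ι n ∈ unitCell (intVec ι n) ↔ x ∈ unitCell 0 := by
    simpa using add_mem_unitCell_add_iff (b := 0) (x := x) (y := intVec ι n)
  by_cases h : x ∈ unitCell 0
  · rw [indicator_of_mem h, indicator_of_mem (hx.mpr h)]
  · rw [indicator_of_notMem h, indicator_of_notMem fun h' ↦ h (hx.mp h')]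

theorem integral_eq_sum_setIntegral_unitCell {E : Type*} [NormedAddCommGroup E] [NormedSpace ℝ E]
    {φ : (ι → ℝ) → E} (hφ : Integrable φ) {S : Finset (ι → ℤ)}
    (hS : ∀ x ∈ unitCell 0, ∀ n ∉ S, φ (x + intVec ι n) = 0) :
    ∫ y, φ y = ∑ n ∈ S, ∫ x in unitCell 0, φ (x + intVec ι n) := by
  have hsum := hasSum_integral_iUnion (fun n ↦ measurableSet_unitCell (intVec ι n))
    pairwise_disjoint_unitCell_intVec hφ.integrableOn
  simp only [iUnion_unitCell_intVec, setIntegral_univ, setIntegral_unitCell_intVec] at hsum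
  exact hsum.unique (hasSum_sum_of_ne_finset_zero fun n hn ↦
    setIntegral_eq_zero_of_forall_eq_zero fun x hx ↦ hS x hx n hn)

theorem mFourier_neg_coe (n : ι → ℤ) (x : ι → ℝ) :
    UnitAddTorus.mFourier (-n) (fun i ↦ (x i : UnitAddCircle)) = 𝐞 (-(intVec ι n ⬝ᵥ x)) := by
  simp only [UnitAddTorus.mFourier, ContinuousMap.coe_mk, fourier_coe_apply, Real.fourierChar_apply,
    dotProduct, intVec_apply]
  rw [← Complex.exp_sum]
  congr 1
  push_cast
  rw [← Finset.sum_neg_distrib, Finset.mul_sum, Finset.sum_mul]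
  exact Finset.sum_congr rfl fun i _ ↦ by rw [Pi.neg_apply]; push_cast; ring

theorem fourierChar_neg_intVec_dotProduct_add (n m : ι → ℤ) (x : ι → ℝ) :
    𝐞 (-(intVec ι n ⬝ᵥ (x + intVec ι m))) = 𝐞 (-(intVec ι n ⬝ᵥ x)) := by
  have hint : -(intVec ι n ⬝ᵥ intVec ι m) = ((-(n ⬝ᵥ m) : ℤ) : ℝ) := by
    simp [dotProduct, intVec_apply]
  rw [dotProduct_add, neg_add, AddChar.map_add_eq_mul, hint, fourierChar_intCast, mul_one]

theorem integrable_fourierChar_smul {g : (ι → ℝ) → ℂ} (hg : Integrable g) (a : ι → ℝ) :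
    Integrable fun y ↦ 𝐞 (-(a ⬝ᵥ y)) • g y := by
  have hcont : Continuous fun y : ι → ℝ ↦ 𝐞 (-(a ⬝ᵥ y)) :=
    Real.continuous_fourierChar.comp (by unfold dotProduct; fun_prop)
  exact hg.mono (hcont.aestronglyMeasurable.smul hg.aestronglyMeasurable)
    (.of_forall fun y ↦ (Circle.norm_smul _ _).le)

noncomputable local instance : MeasureSpace UnitAddCircle :=
  ⟨AddCircle.haarAddCircle⟩

local instance : Measure.IsAddHaarMeasure (volume : Measure UnitAddCircle) :=
  inferInstanceAs (Measure.IsAddHaarMeasure AddCircle.haarAddCircle)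

local instance : IsProbabilityMeasure (volume : Measure UnitAddCircle) :=
  inferInstanceAs (IsProbabilityMeasure AddCircle.haarAddCircle)

theorem memLp_periodization {S : Finset (ι → ℤ)} {g : (ι → ℝ) → ℂ} (hg : Measurable g) {M : ℝ}
    (hM : ∀ y, ‖g y‖ ≤ M) : MemLp (periodization S g) 2 volume := by
  have hmeas : Measurable (periodization S g) :=
    Finset.measurable_sum _ fun n _ ↦ hg.comp (measurable_cellRep.add_const _)
  refine MemLp.of_bound hmeas.aestronglyMeasurable (S.card • M) (.of_forall fun t ↦ ?_)
  exact (norm_sum_le _ _).trans (Finset.sum_le_card_nsmul _ _ _ fun n _ ↦ hM _)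

theorem integral_norm_sq_periodization {S : Finset (ι → ℤ)} {g : (ι → ℝ) → ℂ}
    (hg : Integrable fun y ↦ ‖g y‖ ^ 2)
    (hS : ∀ x ∈ unitCell 0, ∀ n ∉ S, g (x + intVec ι n) = 0)
    (hdisj : ∀ y, ∀ n ≠ 0, g y ≠ 0 → g (y + intVec ι n) = 0) :
    ∫ t, ‖periodization S g t‖ ^ 2 = ∫ y, ‖g y‖ ^ 2 := by
  have hsum := integral_eq_sum_setIntegral_unitCell (S := S) hg fun x hx n hn ↦ by
    simp [hS x hx n hn]
  rw [UnitAddTorus.integral_preimage _ 0, hsum,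
    ← integral_finsetSum _ fun n _ ↦ (hg.comp_add_right _).integrableOn]
  refine setIntegral_congr_fun (measurableSet_unitCell 0) fun x hx ↦ ?_
  simp only [periodization_coe S g hx]
  by_cases hex : ∃ n ∈ S, g (x + intVec ι n) ≠ 0
  · obtain ⟨n, hn, hne⟩ := hex
    have hzero (m : ι → ℤ) (hmn : m ≠ n) : g (x + intVec ι m) = 0 := by
      simpa [add_assoc] using hdisj _ (m - n) (sub_ne_zero.mpr hmn) hne
    rw [Finset.sum_eq_single n (fun m _ h ↦ hzero m h) fun h ↦ absurd hn h,
      Finset.sum_eq_single n (fun m _ h ↦ by simp [hzero m h]) fun h ↦ absurd hn h]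
  · push Not at hex
    rw [Finset.sum_eq_zero hex, Finset.sum_eq_zero fun n hn ↦ by simp [hex n hn]]
    simp

theorem mFourierCoeff_periodization {S : Finset (ι → ℤ)} {g : (ι → ℝ) → ℂ} (hg : Integrable g)
    (hS : ∀ x ∈ unitCell 0, ∀ n ∉ S, g (x + intVec ι n) = 0) (n : ι → ℤ) :
    UnitAddTorus.mFourierCoeff (periodization S g) n = ∫ y, 𝐞 (-(intVec ι n ⬝ᵥ y)) • g y := by
  have hint := integrable_fourierChar_smul hg (intVec ι n)
  rw [UnitAddTorus.mFourierCoeff_eq_integral _ n 0,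
    integral_eq_sum_setIntegral_unitCell hint fun x hx m hm ↦ by rw [hS x hx m hm, smul_zero],
    ← integral_finsetSum _ fun m _ ↦ (hint.comp_add_right _).integrableOn]
  refine setIntegral_congr_fun (measurableSet_unitCell 0) fun x hx ↦ ?_
  simp only [periodization_coe S g hx, mFourier_neg_coe, fourierChar_neg_intVec_dotProduct_add,
    ← Finset.smul_sum, Circle.smul_def]

/-- Parseval's identity on the torus, for a function with disjoint integer translates. -/
theorem hasSum_norm_integral_fourierChar_sq {g : (ι → ℝ) → ℂ} (hg : Continuous g)
    (hg' : HasCompactSupport g) (hdisj : ∀ y, ∀ n ≠ 0, g y ≠ 0 → g (y + intVec ι n) = 0) :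
    HasSum (fun n ↦ ‖∫ y, 𝐞 (-(intVec ι n ⬝ᵥ y)) • g y‖ ^ 2) (∫ y, ‖g y‖ ^ 2) := by
  obtain ⟨S, hS⟩ := exists_finset_apply_add_intVec_eq_zero hg'
  obtain ⟨M, hM⟩ := hg'.exists_bound_of_continuous hg
  have hL2 : MemLp (periodization S g) 2 volume := memLp_periodization hg.measurable hM
  have hsq : Integrable fun y ↦ ‖g y‖ ^ 2 :=
    Continuous.integrable_of_hasCompactSupport (by fun_prop)
      (hg'.comp_left (g := fun z : ℂ ↦ ‖z‖ ^ 2) (by simp))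
  have hnorm : ∫ t, ‖hL2.toLp _ t‖ ^ 2 = ∫ y, ‖g y‖ ^ 2 := by
    rw [← integral_norm_sq_periodization hsq hS hdisj]
    refine integral_congr_ae ?_
    filter_upwards [hL2.coeFn_toLp] with t ht using by rw [ht]
  have hcoeff (n : ι → ℤ) : UnitAddTorus.mFourierCoeff (hL2.toLp _) n =
      ∫ y, 𝐞 (-(intVec ι n ⬝ᵥ y)) • g y := by
    rw [← mFourierCoeff_periodization (hg.integrable_of_hasCompactSupport hg') hS]
    refine integral_congr_ae ?_
    filter_upwards [hL2.coeFn_toLp] with t ht using by rw [ht]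
  simpa only [hnorm, hcoeff] using UnitAddTorus.hasSum_sq_mFourierCoeff (hL2.toLp _)

end Periodization

section Sampling

theorem exists_integral_comp_continuousLinearEquiv {E F : Type*} [NormedAddCommGroup E]
    [NormedSpace ℝ E] [MeasurableSpace E] [BorelSpace E] [NormedAddCommGroup F] [NormedSpace ℝ F]
    [MeasurableSpace F] [BorelSpace F] [FiniteDimensional ℝ F] (μ : Measure E)
    [μ.IsAddHaarMeasure] (ν : Measure F) [ν.IsAddHaarMeasure] (L : E ≃L[ℝ] F) :
    ∃ κ : ℝ, 0 < κ ∧ ∀ {V : Type} [NormedAddCommGroup V] [NormedSpace ℝ V] (f : F → V),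
      ∫ y, f (L y) ∂μ = κ • ∫ x, f x ∂ν := by
  have : (μ.map L).IsAddHaarMeasure := L.isAddHaarMeasure_map μ
  refine ⟨(μ.map L).addHaarScalarFactor ν, NNReal.coe_pos.mpr
    (Measure.addHaarScalarFactor_pos_of_isAddHaarMeasure _ _), fun f ↦ ?_⟩
  rw [← NNReal.smul_def, ← integral_smul_nnreal_measure,
    ← Measure.isAddLeftInvariant_eq_smul (μ.map L) ν]
  exact (integral_map_equiv L.toHomeomorph.toMeasurableEquiv f).symm

variable {ι : Type*} [Fintype ι]

/-- The integer vector `n` as a point of Euclidean space. -/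
noncomputable def intPoint (n : ι → ℤ) : EuclideanSpace ℝ ι :=
  WithLp.toLp 2 (intVec ι n)

/-- The point with index `n` of the lattice dual to `B (ℤ^ι)`, shifted so that the
origin of the lattice sits at `c`: these are the frequencies at which functions supported in a
fundamental domain of `B (ℤ^ι)` are sampled. -/
noncomputable def samplePoint (B : EuclideanSpace ℝ ι ≃L[ℝ] EuclideanSpace ℝ ι)
    (c : EuclideanSpace ℝ ι) (n : ι → ℤ) : EuclideanSpace ℝ ι :=
  ContinuousLinearMap.adjoint (B.symm : EuclideanSpace ℝ ι →L[ℝ] EuclideanSpace ℝ ι)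
    (intPoint n - c)

variable {B : EuclideanSpace ℝ ι ≃L[ℝ] EuclideanSpace ℝ ι}

theorem inner_apply_samplePoint (c : EuclideanSpace ℝ ι) (n : ι → ℤ) (y : ι → ℝ) :
    ⟪B (WithLp.toLp 2 y), samplePoint B c n⟫ =
      intVec ι n ⬝ᵥ y - ⟪(WithLp.toLp 2 y : EuclideanSpace ℝ ι), c⟫ := by
  rw [samplePoint, ContinuousLinearMap.adjoint_inner_right, ContinuousLinearEquiv.coe_coe,
    B.symm_apply_apply, inner_sub_right, intPoint, EuclideanSpace.inner_toLp_toLp, star_trivial]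

/-- The pullback of `G` by `B`, modulated so that its Fourier transform at the integer vectors is,
up to a constant, that of `G` at the sample points. -/
noncomputable def modulatedPullback (B : EuclideanSpace ℝ ι ≃L[ℝ] EuclideanSpace ℝ ι)
    (c : EuclideanSpace ℝ ι) (G : EuclideanSpace ℝ ι → ℂ) (y : ι → ℝ) : ℂ :=
  𝐞 ⟪(WithLp.toLp 2 y : EuclideanSpace ℝ ι), c⟫ • G (B (WithLp.toLp 2 y))

theorem continuous_modulatedPullback (c : EuclideanSpace ℝ ι) {G : EuclideanSpace ℝ ι → ℂ}
    (hG : Continuous G) : Continuous (modulatedPullback B c G) := by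
  have hL := PiLp.continuous_toLp 2 fun _ : ι ↦ ℝ
  exact (Real.continuous_fourierChar.comp (by fun_prop)).smul (hG.comp (B.continuous.comp hL))

theorem hasCompactSupport_modulatedPullback (c : EuclideanSpace ℝ ι)
    {G : EuclideanSpace ℝ ι → ℂ} (hG : HasCompactSupport G) :
    HasCompactSupport (modulatedPullback B c G) :=
  (hG.comp_homeomorph
    ((PiLp.homeomorph 2 fun _ : ι ↦ ℝ).symm.trans B.toHomeomorph)).mono fun y hy hy0 ↦
      hy (by rw [modulatedPullback, show G (B (WithLp.toLp 2 y)) = 0 from hy0, smul_zero])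

theorem modulatedPullback_add_intVec_eq_zero (hB : ∀ n : ι → ℤ, n ≠ 0 → 2 ≤ ‖B (intPoint n)‖)
    (c : EuclideanSpace ℝ ι) {G : EuclideanSpace ℝ ι → ℂ} (hG : ∀ x, 1 ≤ ‖x‖ → G x = 0)
    {y : ι → ℝ} {n : ι → ℤ} (hn : n ≠ 0) (hy : modulatedPullback B c G y ≠ 0) :
    modulatedPullback B c G (y + intVec ι n) = 0 := by
  have hlt : ‖B (WithLp.toLp 2 y)‖ < 1 := by
    contrapose! hy
    rw [modulatedPullback, hG _ hy, smul_zero]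
  have htri := norm_sub_le (B (WithLp.toLp 2 y + intPoint n)) (B (WithLp.toLp 2 y))
  rw [← map_sub, add_sub_cancel_left] at htri
  rw [modulatedPullback, hG _ (by rw [WithLp.toLp_add]; linarith! [hB n hn]), smul_zero]

/-- If the translates of the unit ball by the lattice `B (ℤ^ι)` have disjoint interiors, Parseval's
identity recovers the energy of a function supported in the ball from samples of its Fourier
transform. -/
theorem exists_hasSum_norm_fourier_samplePoint_sq
    (hB : ∀ n : ι → ℤ, n ≠ 0 → 2 ≤ ‖B (intPoint n)‖) (c : EuclideanSpace ℝ ι) :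
    ∃ κ : ℝ, 0 < κ ∧ ∀ G : EuclideanSpace ℝ ι → ℂ, Continuous G → HasCompactSupport G →
      (∀ x, 1 ≤ ‖x‖ → G x = 0) →
      HasSum (fun n ↦ κ * ‖𝓕 G (samplePoint B c n)‖ ^ 2) (∫ x, ‖G x‖ ^ 2) := by
  obtain ⟨κ, hκ, hint⟩ := exists_integral_comp_continuousLinearEquiv (volume : Measure (ι → ℝ))
    (volume : Measure (EuclideanSpace ℝ ι)) ((EuclideanSpace.equiv ι ℝ).symm.trans B)
  refine ⟨κ, hκ, fun G hG hG' hG0 ↦ ?_⟩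
  have hfourier (n : ι → ℤ) : ∫ y, 𝐞 (-(intVec ι n ⬝ᵥ y)) • modulatedPullback B c G y =
      κ • 𝓕 G (samplePoint B c n) := by
    rw [Real.fourier_eq, ← hint]
    congr 1 with y
    change _ = 𝐞 (-⟪B (WithLp.toLp 2 y), samplePoint B c n⟫) • G (B (WithLp.toLp 2 y))
    rw [modulatedPullback, smul_smul, ← AddChar.map_add_eq_mul, inner_apply_samplePoint, neg_sub',
      sub_neg_eq_add]
  have henergy : ∫ y, ‖modulatedPullback B c G y‖ ^ 2 = κ * ∫ x, ‖G x‖ ^ 2 := by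
    simp only [modulatedPullback, Circle.norm_smul]
    exact hint fun x ↦ ‖G x‖ ^ 2
  have hsum := (hasSum_norm_integral_fourierChar_sq (continuous_modulatedPullback c hG)
    (hasCompactSupport_modulatedPullback c hG') fun y n hn hy ↦
      modulatedPullback_add_intVec_eq_zero hB c hG0 hn hy).mul_left κ⁻¹
  rw [henergy, inv_mul_cancel_left₀ hκ.ne'] at hsum
  refine hsum.congr_fun fun n ↦ ?_
  rw [hfourier, norm_smul, Real.norm_of_nonneg hκ.le]
  field_simp

end Sampling

section Covering

theorem totalDegree_pow_of_isDomain {R σ : Type*} [CommRing R] [IsDomain R] {p : MvPolynomial σ R}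
    (hp : p ≠ 0) (n : ℕ) : (p ^ n).totalDegree = n * p.totalDegree := by
  induction n with
  | zero => simp
  | succ n ih => rw [pow_succ, totalDegree_mul_of_isDomain (pow_ne_zero n hp) hp, ih, add_one_mul]

variable {ι : Type*} [Fintype ι] {B : EuclideanSpace ℝ ι ≃L[ℝ] EuclideanSpace ℝ ι}
  {c : EuclideanSpace ℝ ι} {r : ℝ}

theorem mul_ballIntegral_sq_le_of_fourier_samplePoint_eq_zero
    (hB : ∀ n : ι → ℤ, n ≠ 0 → 2 ≤ ‖B (intPoint n)‖) (hr : 0 ≤ r) {P : MvPolynomial ι ℝ}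
    (hP : ballPoly ι ^ 2 ∣ P)
    (hzero : ∀ n, ‖samplePoint B c n‖ ≤ r → 𝓕 (ballFun P) (samplePoint B c n) = 0) :
    4 * Real.pi ^ 2 * r ^ 2 * ballIntegral (P ^ 2) ≤ ballIntegral (∑ i, pderiv i P ^ 2) := by
  classical
  obtain ⟨κ, hκ, hsampling⟩ := exists_hasSum_norm_fourier_samplePoint_sq hB c
  have henergy {Q : MvPolynomial ι ℝ} (hQ : ballPoly ι ∣ Q) :
      HasSum (fun n ↦ κ * ‖𝓕 (ballFun Q) (samplePoint B c n)‖ ^ 2) (ballIntegral (Q ^ 2)) := by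
    rw [← integral_norm_ballFun_sq]
    exact hsampling _ (continuous_ballFun hQ) (hasCompactSupport_ballFun Q) fun x hx ↦
      ballFun_eq_zero_of_ballPoly_dvd hQ hx
  have hgradient := hasSum_sum fun i (_ : i ∈ Finset.univ) ↦ henergy <| by
    simpa using pow_dvd_derivation_of_pow_succ_dvd (k := 1) (pderiv i) hP
  rw [← map_sum] at hgradient
  refine hasSum_le (fun n ↦ ?_)
    ((henergy ((dvd_pow_self _ two_ne_zero).trans hP)).mul_left (4 * Real.pi ^ 2 * r ^ 2)) hgradient
  set ξ := samplePoint B c n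
  have hmultiplier : ∑ i, κ * ‖𝓕 (ballFun (pderiv i P)) ξ‖ ^ 2 =
      4 * Real.pi ^ 2 * ‖ξ‖ ^ 2 * (κ * ‖𝓕 (ballFun P) ξ‖ ^ 2) := by
    rw [EuclideanSpace.real_norm_sq_eq, Finset.mul_sum, Finset.sum_mul]
    refine Finset.sum_congr rfl fun i _ ↦ ?_
    rw [← dirDeriv_single, fourier_ballFun_dirDeriv hP, EuclideanSpace.inner_single_left]
    simp only [conj_trivial, one_mul, norm_mul, Complex.norm_ofNat, Complex.norm_real,
      Complex.norm_I, Real.norm_eq_abs, mul_pow, sq_abs]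
    ring
  rw [hmultiplier]
  rcases le_or_gt ‖ξ‖ r with hle | hlt
  · rw [hzero n hle]
    simp
  · gcongr

theorem le_four_mul_of_samplePoint_mem_hyperplanes [Nonempty ι]
    (hB : ∀ n : ι → ℤ, n ≠ 0 → 2 ≤ ‖B (intPoint n)‖) (hr : 0 ≤ r) {κ : Type*} [Fintype κ]
    {v : κ → EuclideanSpace ℝ ι} (hv : ∀ j, v j ≠ 0) (t : κ → ℝ)
    (hcover : ∀ n, ‖samplePoint B c n‖ ≤ r → ∃ j, ⟪v j, samplePoint B c n⟫ = t j) :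
    r ≤ 4 * (Fintype.card κ + Fintype.card ι) := by
  have hι : 1 ≤ Fintype.card ι := Fintype.card_pos
  obtain ⟨k, hk⟩ : ∃ k, k = 2 * (Fintype.card κ + Fintype.card ι) := ⟨_, rfl⟩
  obtain ⟨P, hP0, ⟨Q, rfl⟩, hdeg, hzero⟩ := exists_fourier_ballFun_eq_zero_on_hyperplanes
    Finset.univ (fun j _ ↦ hv j) t (by lia : 1 ≤ k)
  have hQ : Q.totalDegree ≤ 4 * Fintype.card κ := by
    rw [totalDegree_mul_of_isDomain (left_ne_zero_of_mul hP0) (right_ne_zero_of_mul hP0),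
      totalDegree_pow_of_isDomain ballPoly_ne_zero, totalDegree_ballPoly, Finset.card_univ] at hdeg
    lia
  have hlower := mul_ballIntegral_sq_le_of_fourier_samplePoint_eq_zero hB hr
    (dvd_mul_of_dvd_left (pow_dvd_pow _ (by lia)) Q) fun n hn ↦
      let ⟨j, hj⟩ := hcover n hn
      hzero j (Finset.mem_univ j) _ hj
  have hupper := ballIntegral_sum_pderiv_pow_mul_sq_le (k := k) (by lia) hQ (by lia)
  have hpos : 0 < ballIntegral ((ballPoly ι ^ k * Q) ^ 2) := by
    have hnonneg := ballIntegral_pow_mul_sq_nonneg 0 (ballPoly ι ^ k * Q)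
    rw [pow_zero, one_mul] at hnonneg
    exact hnonneg.lt_of_ne' fun h ↦
      hP0 (eq_zero_of_ballIntegral_pow_mul_sq_eq_zero (k := 0) (by rwa [pow_zero, one_mul]))
  have hπ : 36 * r ^ 2 ≤ 4 * Real.pi ^ 2 * r ^ 2 := by
    gcongr
    nlinarith [Real.pi_gt_three]
  have hsq : r ^ 2 ≤ (2 * k) ^ 2 := by
    linarith [le_of_mul_le_mul_right (hlower.trans hupper) hpos, sq_nonneg (k : ℝ)]
  calc r ≤ 2 * k := le_of_sq_le_sq hsq (by positivity)
    _ = 4 * (Fintype.card κ + Fintype.card ι) := by rw [hk]; push_cast; ring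

end Covering

section John

variable {E : Type*} [NormedAddCommGroup E]

section Stretch

variable [InnerProductSpace ℝ E]

/-- For a unit vector `e`, the linear map that multiplies by `a` along `e` and by `b` orthogonally
to `e`. -/
noncomputable def stretch (a b : ℝ) (e : E) : E →L[ℝ] E :=
  b • .id ℝ E + ((a - b) • innerSL ℝ e).smulRight e

theorem stretch_apply (a b : ℝ) (e x : E) :
    stretch a b e x = b • x + ((a - b) * ⟪e, x⟫) • e := by
  simp [stretch]

theorem inner_stretch_comm (a b : ℝ) (e v x : E) :
    ⟪v, stretch a b e x⟫ = ⟪stretch a b e v, x⟫ := by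
  simp only [stretch_apply, inner_add_left, inner_add_right, real_inner_smul_left,
    real_inner_smul_right, real_inner_comm v e]
  ring

theorem norm_stretch_sq (a b : ℝ) {e : E} (he : ‖e‖ = 1) (v : E) :
    ‖stretch a b e v‖ ^ 2 = b ^ 2 * ‖v‖ ^ 2 + (a ^ 2 - b ^ 2) * ⟪e, v⟫ ^ 2 := by
  rw [stretch_apply, norm_add_sq_real, norm_smul, norm_smul, he, real_inner_smul_left,
    real_inner_smul_right, real_inner_comm e v, mul_pow, mul_one, Real.norm_eq_abs,
    Real.norm_eq_abs, sq_abs, sq_abs]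
  ring

theorem det_stretch {m : ℕ} (hE : Module.finrank ℝ E = m + 1) (a : ℝ) {b : ℝ} (hb : b ≠ 0)
    {e : E} (he : ‖e‖ = 1) : (stretch a b e).det = a * b ^ m := by
  have htransvection : (stretch a b e : E →ₗ[ℝ] E) =
      b • LinearMap.transvection (((a - b) / b) • (innerSL ℝ e : E →ₗ[ℝ] ℝ)) e := by
    ext x
    simp only [ContinuousLinearMap.coe_coe, stretch_apply, LinearMap.smul_apply,
      LinearMap.transvection.apply, smul_add, smul_smul, smul_eq_mul, innerSL_apply_apply]
    field_simp
  have := Module.finite_of_finrank_eq_succ hE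
  rw [ContinuousLinearMap.det, htransvection, LinearMap.det_smul, LinearMap.transvection.det, hE]
  simp only [LinearMap.smul_apply, ContinuousLinearMap.coe_coe, innerSL_apply_apply,
    real_inner_self_eq_norm_sq, he, smul_eq_mul]
  field_simp
  ring

end Stretch

theorem half_add_le_max {t b n α m : ℝ} (ht : 3 < t) (hb : b ^ 2 = 1 - 1 / (t - 1))
    (hα : |α| ≤ n) (hm : m ^ 2 = b ^ 2 * n ^ 2 + ((3 / 2) ^ 2 - b ^ 2) * α ^ 2) :
    α / 2 + m ≤ max n (t * α) := by
  obtain ⟨hα₁, hα₂⟩ := abs_le.mp hα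
  have hn : 0 ≤ n := (abs_nonneg α).trans hα
  have ht1 : 0 < t - 1 := by linarith
  rcases le_total n (t * α) with h | h
  · rw [max_eq_right h]
    have hα0 : 0 ≤ α := nonneg_of_mul_nonneg_right (hn.trans h) (by linarith)
    have hsq : m ^ 2 ≤ ((t - 1 / 2) * α) ^ 2 := calc
      m ^ 2 ≤ b ^ 2 * (t * α) ^ 2 + ((3 / 2) ^ 2 - b ^ 2) * α ^ 2 := by rw [hm]; gcongr
      _ = ((t - 1 / 2) * α) ^ 2 := by rw [hb]; field_simp; ring
    linarith [le_of_sq_le_sq hsq (mul_nonneg (by linarith) hα0)]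
  · rw [max_eq_left h]
    have hdiff : (n - α / 2) ^ 2 - m ^ 2 = (n + α) * ((n - t * α) / (t - 1)) := by
      rw [hm, hb]
      field_simp
      ring
    have hnonneg : 0 ≤ (n + α) * ((n - t * α) / (t - 1)) :=
      mul_nonneg (by linarith) (div_nonneg (by linarith) ht1.le)
    linarith [le_of_sq_le_sq (by linarith : m ^ 2 ≤ (n - α / 2) ^ 2) (by linarith)]

theorem one_lt_three_half_mul_pow {t b : ℝ} {m : ℕ} (ht : 2 * (m : ℝ) + 3 < t) (hb0 : 0 < b)
    (hb : b ^ 2 = 1 - 1 / (t - 1)) : 1 < 3 / 2 * b ^ m := by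
  have ht1 : 0 < t - 1 := by linarith [(Nat.cast_nonneg m : (0 : ℝ) ≤ m)]
  have hbernoulli : 1 + (m : ℝ) * (b ^ 2 - 1) ≤ (b ^ m) ^ 2 := by
    rw [pow_right_comm]
    exact one_add_mul_sub_le_pow (by linarith [sq_nonneg b]) m
  have hhalf : (m : ℝ) * (1 / (t - 1)) ≤ 1 / 2 := by
    rw [mul_one_div, div_le_div_iff₀ ht1 two_pos]
    linarith
  rw [hb] at hbernoulli
  nlinarith [pow_pos hb0 m]

section Inscribed

variable [NormedSpace ℝ E] {K : Set E}

/-- The ellipsoids inside `K`. The pair `(A, c)` encodes the image of the closed unit ball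
under `x ↦ c + A x`; degenerate ellipsoids are allowed, which makes this a closed set. -/
def inscribedEllipsoids (K : Set E) : Set ((E →L[ℝ] E) × E) :=
  {P | ∀ x, ‖x‖ ≤ 1 → P.2 + P.1 x ∈ K}

theorem isClosed_inscribedEllipsoids (hK : IsClosed K) : IsClosed (inscribedEllipsoids K) := by
  simp only [inscribedEllipsoids, ofPred_forall]
  exact isClosed_iInter fun x ↦ isClosed_iInter fun _ ↦ hK.preimage (by fun_prop)

theorem isBounded_inscribedEllipsoids (hK : Bornology.IsBounded K) :
    Bornology.IsBounded (inscribedEllipsoids K) := by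
  obtain ⟨R, hR⟩ := hK.exists_norm_le
  refine isBounded_iff_forall_norm_le.mpr ⟨2 * R, fun P hP ↦ ?_⟩
  have hcenter : ‖P.2‖ ≤ R := hR _ (by simpa using hP 0 (by simp))
  have hR0 : 0 ≤ R := (norm_nonneg _).trans hcenter
  refine max_le ?_ (by linarith)
  refine ContinuousLinearMap.opNorm_le_of_unit_norm (by positivity) fun x hx ↦ ?_
  calc ‖P.1 x‖ = ‖P.2 + P.1 x - P.2‖ := by rw [add_sub_cancel_left]
    _ ≤ ‖P.2 + P.1 x‖ + ‖P.2‖ := norm_sub_le _ _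
    _ ≤ 2 * R := by linarith [hR _ (hP x hx.le)]

theorem exists_det_ne_zero_mem_inscribedEllipsoids [FiniteDimensional ℝ E]
    (hK : (interior K).Nonempty) : ∃ P ∈ inscribedEllipsoids K, P.1.det ≠ 0 := by
  obtain ⟨c, hc⟩ := hK
  obtain ⟨ε, hε, hball⟩ := nhds_basis_closedBall.mem_iff.mp (mem_interior_iff_mem_nhds.mp hc)
  refine ⟨(ε • .id ℝ E, c), fun x hx ↦ hball ?_, ?_⟩
  · simpa [norm_smul, abs_of_pos hε] using mul_le_of_le_one_right hε.le hx
  · simp [ContinuousLinearMap.det, hε.ne']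

theorem exists_inscribedEllipsoid_abs_det_max [FiniteDimensional ℝ E] (hK : IsCompact K)
    (hK' : (interior K).Nonempty) :
    ∃ (A : E ≃L[ℝ] E) (c : E), ((A : E →L[ℝ] E), c) ∈ inscribedEllipsoids K ∧
      ∀ P ∈ inscribedEllipsoids K, |P.1.det| ≤ |(A : E →L[ℝ] E).det| := by
  have : ProperSpace E := FiniteDimensional.proper ℝ _
  have : ProperSpace (E →L[ℝ] E) := FiniteDimensional.proper ℝ _
  obtain ⟨P₀, hP₀, hdet₀⟩ := exists_det_ne_zero_mem_inscribedEllipsoids hK'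
  obtain ⟨⟨A, c⟩, hA, hmax⟩ := (isCompact_of_isClosed_isBounded
    (isClosed_inscribedEllipsoids hK.isClosed)
    (isBounded_inscribedEllipsoids hK.isBounded)).exists_isMaxOn ⟨P₀, hP₀⟩
      (ContinuousLinearMap.continuous_det.comp continuous_fst).abs.continuousOn
  have hdet : A.det ≠ 0 := abs_pos.mp ((abs_pos.mpr hdet₀).trans_le (hmax hP₀))
  refine ⟨A.toContinuousLinearEquivOfDetNeZero hdet, c, ?_⟩
  rw [ContinuousLinearMap.coe_toContinuousLinearEquivOfDetNeZero]
  exact ⟨hA, hmax⟩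

end Inscribed

variable [InnerProductSpace ℝ E] {K : Set E}

theorem norm_lt_of_forall_mem_closedBall_inner_lt {v : E} {s : ℝ}
    (h : ∀ x, ‖x‖ ≤ 1 → ⟪v, x⟫ < s) : ‖v‖ < s := by
  rcases eq_or_ne v 0 with rfl | hv
  · simpa using h 0 (by simp)
  · have hlt := h (‖v‖⁻¹ • v) (by simp [norm_smul, hv])
    rwa [real_inner_smul_right, real_inner_self_eq_norm_sq, sq, inv_mul_cancel_left₀
      (norm_ne_zero_iff.mpr hv)] at hlt

/-- Separating a point outside `K` from `K` reduces the claim to the inequality between support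
functions in `half_add_le_max`. -/
theorem stretch_mem_inscribedEllipsoids [CompleteSpace E] (hK : IsClosed K) (hconv : Convex ℝ K)
    (hball : closedBall 0 1 ⊆ K) {e : E} (he : ‖e‖ = 1) {t b : ℝ} (ht : 3 < t)
    (hb : b ^ 2 = 1 - 1 / (t - 1)) (hp : t • e ∈ K) :
    (stretch (3 / 2) b e, (1 / 2 : ℝ) • e) ∈ inscribedEllipsoids K := by
  intro x hx
  by_contra hnot
  obtain ⟨f, s, hfs, hsf⟩ := geometric_hahn_banach_closed_point hconv hK hnot
  obtain ⟨v, rfl⟩ := (InnerProductSpace.toDual ℝ E).surjective f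
  simp only [InnerProductSpace.toDual_apply_apply] at hfs hsf
  have hnorm : ‖v‖ < s := norm_lt_of_forall_mem_closedBall_inner_lt fun y hy ↦
    hfs y (hball (mem_closedBall_zero_iff.mpr hy))
  have hpoint : t * ⟪e, v⟫ < s := by
    simpa only [real_inner_smul_right, real_inner_comm e v] using hfs _ hp
  have hstretch : ⟪stretch (3 / 2) b e v, x⟫ ≤ ‖stretch (3 / 2) b e v‖ :=
    (real_inner_le_norm _ _).trans (mul_le_of_le_one_right (norm_nonneg _) hx)
  have hmax := half_add_le_max ht hb (by simpa [he] using abs_real_inner_le_norm e v)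
    (norm_stretch_sq (3 / 2) b he v)
  rw [inner_add_right, real_inner_smul_right, inner_stretch_comm, real_inner_comm e v] at hsf
  linarith [max_lt hnorm hpoint]

theorem exists_one_lt_det_mem_inscribedEllipsoids [FiniteDimensional ℝ E] (hK : IsClosed K)
    (hconv : Convex ℝ K) (hball : closedBall 0 1 ⊆ K) {p : E} (hp : p ∈ K)
    (hfar : 2 * (Module.finrank ℝ E : ℝ) + 1 < ‖p‖) :
    ∃ P ∈ inscribedEllipsoids K, 1 < P.1.det := by
  have hp0 : p ≠ 0 := norm_pos_iff.mp (by linarith [(Module.finrank ℝ E).cast_nonneg (α := ℝ)])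
  have : Nontrivial E := ⟨p, 0, hp0⟩
  obtain ⟨m, hm⟩ := Nat.exists_eq_add_one.mpr (Module.finrank_pos (R := ℝ) (M := E))
  rw [hm, Nat.cast_add_one] at hfar
  have ht : 3 < ‖p‖ := by linarith [m.cast_nonneg (α := ℝ)]
  have hpos : 0 < 1 - 1 / (‖p‖ - 1) := by
    rw [sub_pos, div_lt_one] <;> linarith
  have hb := Real.sq_sqrt hpos.le
  have he : ‖‖p‖⁻¹ • p‖ = 1 := norm_smul_inv_norm hp0
  refine ⟨_, stretch_mem_inscribedEllipsoids hK hconv hball he ht hb ?_, ?_⟩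
  · rwa [smul_inv_smul₀ (norm_ne_zero_iff.mpr hp0)]
  · rw [det_stretch hm _ (Real.sqrt_pos.mpr hpos).ne' he]
    exact one_lt_three_half_mul_pow (by linarith) (Real.sqrt_pos.mpr hpos) hb

/-- A weak form of John's theorem, by perturbing an ellipsoid of maximal volume in `K`. -/
theorem exists_ellipsoid_subset_subset_smul [FiniteDimensional ℝ E] (hK : IsCompact K)
    (hconv : Convex ℝ K) (hint : (interior K).Nonempty) :
    ∃ (A : E ≃L[ℝ] E) (c : E), (∀ x, ‖x‖ ≤ 1 → c + A x ∈ K) ∧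
      ∀ p ∈ K, ‖A.symm (p - c)‖ ≤ 2 * Module.finrank ℝ E + 1 := by
  obtain ⟨A, c, hA, hmax⟩ := exists_inscribedEllipsoid_abs_det_max hK hint
  refine ⟨A, c, hA, fun p hp ↦ not_lt.mp fun hfar ↦ ?_⟩
  obtain ⟨⟨M, a⟩, hM, hdet⟩ := exists_one_lt_det_mem_inscribedEllipsoids
    (K := (fun x ↦ c + A x) ⁻¹' K) (hK.isClosed.preimage (by fun_prop))
    ((hconv.translate_preimage_right c).linear_preimage (A : E →ₗ[ℝ] E))
    (fun x hx ↦ hA x (mem_closedBall_zero_iff.mp hx)) (p := A.symm (p - c)) (by simpa) hfar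
  have hle := hmax ((A : E →L[ℝ] E).comp M, c + A a) fun x hx ↦ by
    simpa [add_assoc] using hM x hx
  have hA0 : 0 < |(A : E →L[ℝ] E).det| := abs_pos.mpr A.toLinearEquiv.isUnit_det'.ne_zero
  have hmul : ((A : E →L[ℝ] E).comp M).det = (A : E →L[ℝ] E).det * M.det :=
    LinearMap.det_comp _ _
  rw [hmul, abs_mul, abs_of_pos (zero_lt_one.trans hdet)] at hle
  exact (lt_mul_of_one_lt_right hA0 hdet).not_ge hle

theorem exists_ellipsoid_radius_subset_subset_smul [FiniteDimensional ℝ E] (hK : IsCompact K)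
    (hconv : Convex ℝ K) (hint : (interior K).Nonempty) {r : ℝ} (hr : 0 < r) :
    ∃ (A : E ≃L[ℝ] E) (c : E), (∀ x, ‖x‖ ≤ r → c + A x ∈ K) ∧
      ∀ p ∈ K, ‖A.symm (p - c)‖ ≤ (2 * Module.finrank ℝ E + 1) * r := by
  obtain ⟨A, c, hin, hout⟩ := exists_ellipsoid_subset_subset_smul hK hconv hint
  refine ⟨(ContinuousLinearEquiv.smulLeft (Units.mk0 r hr.ne')).symm.trans A, c,
    fun x hx ↦ hin _ ?_, fun p hp ↦ ?_⟩
  · change ‖r⁻¹ • x‖ ≤ 1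
    rwa [norm_smul, norm_inv, Real.norm_of_nonneg hr.le, inv_mul_le_one₀ hr]
  · change ‖r • A.symm (p - c)‖ ≤ _
    rw [norm_smul, Real.norm_of_nonneg hr.le, mul_comm]
    gcongr
    exact hout p hp

end John

section Adjoint

variable {E F : Type*} [NormedAddCommGroup E] [InnerProductSpace ℝ E] [CompleteSpace E]
  [NormedAddCommGroup F] [InnerProductSpace ℝ F] [CompleteSpace F]

/-- The adjoint of a continuous linear equivalence, as a continuous linear equivalence. -/
noncomputable def adjointEquiv (A : E ≃L[ℝ] F) : F ≃L[ℝ] E :=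
  .equivOfInverse' (ContinuousLinearMap.adjoint (A : E →L[ℝ] F))
    (ContinuousLinearMap.adjoint (A.symm : F →L[ℝ] E))
    (by rw [← ContinuousLinearMap.adjoint_comp, A.coe_symm_comp_coe,
      ContinuousLinearMap.adjoint_id])
    (by rw [← ContinuousLinearMap.adjoint_comp, A.coe_comp_coe_symm,
      ContinuousLinearMap.adjoint_id])

theorem inner_adjointEquiv (A : E ≃L[ℝ] F) (x : E) (y : F) :
    ⟪adjointEquiv A y, x⟫ = ⟪y, A x⟫ :=
  ContinuousLinearMap.adjoint_inner_left _ _ _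

theorem samplePoint_adjointEquiv {ι : Type*} [Fintype ι]
    (A : EuclideanSpace ℝ ι ≃L[ℝ] EuclideanSpace ℝ ι) (c : EuclideanSpace ℝ ι) (n : ι → ℤ) :
    samplePoint (adjointEquiv A) c n = A.symm (intPoint n - c) := by
  change ContinuousLinearMap.adjoint (ContinuousLinearMap.adjoint _) _ = _
  rw [ContinuousLinearMap.adjoint_adjoint, ContinuousLinearEquiv.coe_coe]

end Adjoint

section Width

variable {d : ℕ} {K : Set (EuclideanSpace ℝ (Fin d))}

theorem latticeWidth_le_two_mul (hK : IsCompact K) (hne : K.Nonempty) {n : Fin d → ℤ} (hn : n ≠ 0)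
    {a m : ℝ} (h : ∀ p ∈ K, |⟪p, intPoint n⟫ - a| ≤ m) : latticeWidth K ≤ 2 * m := by
  have hmem (p) (hp : p ∈ K) := abs_le.mp (h p hp)
  have hsup : sSup ((⟪·, intPoint n⟫) '' K) ≤ a + m :=
    csSup_le (hne.image _) (forall_mem_image.mpr fun p hp ↦ by linarith [(hmem p hp).2])
  have hinf : a - m ≤ sInf ((⟪·, intPoint n⟫) '' K) :=
    le_csInf (hne.image _) (forall_mem_image.mpr fun p hp ↦ by linarith [(hmem p hp).1])
  have hn' : intPoint n ≠ 0 := fun h0 ↦ hn <| funext fun j ↦ by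
    simpa [intPoint, intVec] using congr($h0 j)
  calc latticeWidth K ≤ sSup ((⟪·, intPoint n⟫) '' K) - sInf ((⟪·, intPoint n⟫) '' K) := by
        refine csInf_le ⟨0, ?_⟩ ⟨intPoint n, hn', fun j ↦ ⟨n j, rfl⟩, rfl⟩
        rintro _ ⟨y, -, -, rfl⟩
        have hcompact : IsCompact ((⟪·, y⟫) '' K) := hK.image (by fun_prop)
        exact sub_nonneg.mpr (Real.sInf_le_sSup _ hcompact.bddBelow hcompact.bddAbove)
    _ ≤ 2 * m := by linarith

variable {A : EuclideanSpace ℝ (Fin d) ≃L[ℝ] EuclideanSpace ℝ (Fin d)}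
  {c : EuclideanSpace ℝ (Fin d)} {r ρ : ℝ}

theorem latticeWidth_le_norm_adjointEquiv (hK : IsCompact K) (hne : K.Nonempty)
    (hout : ∀ p ∈ K, ‖A.symm (p - c)‖ ≤ ρ) {n : Fin d → ℤ} (hn : n ≠ 0) :
    latticeWidth K ≤ 2 * (ρ * ‖adjointEquiv A (intPoint n)‖) := by
  refine latticeWidth_le_two_mul hK hne hn (a := ⟪c, intPoint n⟫) fun p hp ↦ ?_
  calc |⟪p, intPoint n⟫ - ⟪c, intPoint n⟫|
      = |⟪A.symm (p - c), adjointEquiv A (intPoint n)⟫| := by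
        rw [real_inner_comm _ (A.symm _), inner_adjointEquiv, A.apply_symm_apply,
          ← inner_sub_left, real_inner_comm]
    _ ≤ ‖A.symm (p - c)‖ * ‖adjointEquiv A (intPoint n)‖ := abs_real_inner_le_norm _ _
    _ ≤ ρ * ‖adjointEquiv A (intPoint n)‖ := by gcongr; exact hout p hp

variable {κ : Type*} [Fintype κ] {v : κ → EuclideanSpace ℝ (Fin d)} {t : κ → ℝ}

theorem radius_le_of_mem_hyperplanes [NeZero d] (hK : IsCompact K) (hne : K.Nonempty) (hr : 0 ≤ r)
    (hin : ∀ x, ‖x‖ ≤ r → c + A x ∈ K) (hρ : 0 < ρ) (hout : ∀ p ∈ K, ‖A.symm (p - c)‖ ≤ ρ)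
    (hwidth : 4 * ρ ≤ latticeWidth K) (hv : ∀ i, v i ≠ 0)
    (hcover : ∀ n, intPoint n ∈ K → ∃ i, ⟪intPoint n, v i⟫ = t i) :
    r ≤ 4 * (Fintype.card κ + d) := by
  have hlattice (n : Fin d → ℤ) (hn : n ≠ 0) : 2 ≤ ‖adjointEquiv A (intPoint n)‖ :=
    le_of_mul_le_mul_left (by linarith [latticeWidth_le_norm_adjointEquiv hK hne hout hn]) hρ
  have hbound := le_four_mul_of_samplePoint_mem_hyperplanes (c := c) hlattice hr
    (v := fun i ↦ adjointEquiv A (v i)) (fun i ↦ by simpa using hv i) (fun i ↦ t i - ⟪c, v i⟫)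
    fun n hn ↦ by
      rw [samplePoint_adjointEquiv] at hn ⊢
      obtain ⟨i, hi⟩ := hcover n (by simpa using hin _ hn)
      refine ⟨i, ?_⟩
      rw [inner_adjointEquiv, A.apply_symm_apply, real_inner_comm, inner_sub_left, hi]
  rwa [Fintype.card_fin] at hbound

theorem latticeWidth_le_of_mem_hyperplanes [NeZero d] (hK : IsCompact K) (hconv : Convex ℝ K)
    (hint : (interior K).Nonempty) (hv : ∀ i, v i ≠ 0)
    (hcover : ∀ n, intPoint n ∈ K → ∃ i, ⟪intPoint n, v i⟫ = t i) :
    latticeWidth K ≤ 48 * d * (Fintype.card κ + d) := by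
  rcases le_or_gt (latticeWidth K) 0 with hw | hw
  · exact hw.trans (by positivity)
  have hd : (1 : ℝ) ≤ d := Nat.one_le_cast.mpr NeZero.one_le
  obtain ⟨r, hr⟩ : ∃ r, r * (8 * d + 4) = latticeWidth K :=
    ⟨latticeWidth K / (8 * d + 4), div_mul_cancel₀ _ (by positivity)⟩
  have hr0 : 0 < r := pos_of_mul_pos_left (hr ▸ hw) (by positivity)
  obtain ⟨A, c, hin, hout⟩ := exists_ellipsoid_radius_subset_subset_smul hK hconv hint hr0
  rw [finrank_euclideanSpace_fin] at hout
  have hradius := radius_le_of_mem_hyperplanes hK (hint.mono interior_subset) hr0.le hin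
    (by positivity) hout (by linarith) hv hcover
  calc latticeWidth K = r * (8 * d + 4) := hr.symm
    _ ≤ 4 * (Fintype.card κ + d) * (12 * d) := by gcongr; linarith
    _ = 48 * d * (Fintype.card κ + d) := by ring

end Width

end Talata

/-- **Talata's theorem.** There is an absolute constant `c > 0` such that whenever the
integer points of a convex body `K ⊆ ℝ^d` are covered by `N` hyperplanes
`{x | ⟪x, v i⟫ = t i}`, one has `N ≥ c · w(K, ℤ^d)/d − d`. -/
theorem talata_lattice_points_hyperplanes :
    ∃ c : ℝ, 0 < c ∧ ∀ (d : ℕ), 1 ≤ d →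
      ∀ (K : Set (EuclideanSpace ℝ (Fin d))),
        IsCompact K → Convex ℝ K → (interior K).Nonempty →
      ∀ (N : ℕ) (v : Fin N → EuclideanSpace ℝ (Fin d)) (t : Fin N → ℝ),
        (∀ i, v i ≠ 0) →
        (∀ x ∈ K, (∀ j, ∃ z : ℤ, x j = (z : ℝ)) → ∃ i, ⟪x, v i⟫ = t i) →
        c * latticeWidth K / d - d ≤ (N : ℝ) := by
  refine ⟨1 / 48, by norm_num, fun d hd K hK hconv hint N v t hv hcover ↦ ?_⟩
  have : NeZero d := ⟨by lia⟩
  have hd0 : (0 : ℝ) < d := Nat.cast_pos.mpr hd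
  have hwidth := Talata.latticeWidth_le_of_mem_hyperplanes hK hconv hint hv
    fun n hn ↦ hcover _ hn fun j ↦ ⟨n j, rfl⟩
  rw [Fintype.card_fin] at hwidth
  rw [sub_le_iff_le_add, div_le_iff₀ hd0]
  linarith
end

section
/- Let d ≥ 2 and let B^d be the closed unit ball centered at the origin in E^d. Let P_1 and P_2 be planks of widths w_1 > 0 and w_2 > 0 with w_1 + w_2 < 2, and let P be any plank of width w_1 + w_2 having the origin as a center of symmetry (i.e., P = {x : |⟨x,u⟩| ≤ (w_1+w_2)/2} for some unit vector u). Then vol_d((P_1 ∪ P_2) ∩ B^d) ≤ vol_d(P ∩ B^d), with equality only if P_1 ∪ P_2 is itself a plank of width w_1 + w_2 with the origin as a center of symmetry. -/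
open MeasureTheory
open scoped RealInnerProductSpace

/-- `P` is a plank of width `w`: the set of points between two parallel hyperplanes
at distance `w`. -/
def IsPlank {d : ℕ} (P : Set (EuclideanSpace ℝ (Fin d))) (w : ℝ) : Prop :=
  0 < w ∧ ∃ (u c : EuclideanSpace ℝ (Fin d)), ‖u‖ = 1 ∧
    P = {x | |⟪x - c, u⟫| ≤ w / 2}

/-!
Let `K` be a plane containing the normals of both planks and let `μ_t` be the measure on `K` of
density `(t - ‖p‖²)₊ ^ (-1/2)`. By Archimedes' hat-box theorem, the image of `μ_t` under the
orthogonal projection to any line is `π` times the length on `(-√t, √t)`. Hence a slab of width `w`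
has `μ_t`-measure at most `π * w`, and the central one attains `min (π * w) (μ_t K)`, so
subadditivity gives the inequality for every `μ_t`. Abel's identity
`∫ (t - a)₊ ^ (-1/2) * (b - t)₊ ^ (-1/2) dt = π` for `a < b` exhibits the projection to `K` of the
volume of the ball as a mixture of the `μ_t` with positive weights for `t < R ^ 2`, where `R` is the
radius of the ball, and the inequality for volumes follows.

In the case of equality there is equality for almost every `μ_t` with `t < R ^ 2`. For
`w₁ + w₂ < 2 * √t` this means that no slab sticks out of `(-√t, √t)` in its own direction and that
the overlap of the slabs is `μ_t`-null. Letting `√t` decrease to `(w₁ + w₂) / 2` and increase to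
`R`, the slabs lie as close to the origin as the central slab does, and they do not overlap inside
the ball, which is only possible if they are parallel and adjacent.
-/

open Metric Module
open scoped ENNReal

/-- The kernel `t ↦ t ^ (-1/2)` of the Abel transform, extended by `0` to `t ≤ 0`; the value at
`t = 0` comes from `0⁻¹ = 0`. -/
noncomputable def invSqrt (t : ℝ) : ℝ≥0∞ :=
  ENNReal.ofReal (√t)⁻¹

@[fun_prop]
lemma measurable_invSqrt : Measurable invSqrt := by
  unfold invSqrt
  fun_prop

lemma invSqrt_of_nonpos {t : ℝ} (ht : t ≤ 0) : invSqrt t = 0 := by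
  simp [invSqrt, Real.sqrt_eq_zero_of_nonpos ht]

lemma invSqrt_pos {t : ℝ} (ht : 0 < t) : 0 < invSqrt t := by
  simp [invSqrt, ht]

lemma invSqrt_sq {t : ℝ} (ht : 0 ≤ t) : invSqrt (t ^ 2) = ENNReal.ofReal t⁻¹ := by
  rw [invSqrt, Real.sqrt_sq ht]

lemma invSqrt_mul {a : ℝ} (ha : 0 ≤ a) (b : ℝ) : invSqrt (a * b) = invSqrt a * invSqrt b := by
  rw [invSqrt, Real.sqrt_mul ha, mul_inv, ENNReal.ofReal_mul (by positivity), invSqrt, invSqrt]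

lemma image_mul_sin_Ioo {r : ℝ} (hr : 0 < r) :
    (fun θ ↦ r * Real.sin θ) '' Set.Ioo (-(Real.pi / 2)) (Real.pi / 2) = ball 0 r := by
  have h_sin : Real.sin '' Set.Ioo (-(Real.pi / 2)) (Real.pi / 2) = Set.Ioo (-1) 1 :=
    Real.sinPartialHomeomorph.image_source_eq_target
  rw [← Set.image_image (r * ·), h_sin, Set.image_mul_left_Ioo hr, Real.ball_eq_Ioo]
  simp

lemma lintegral_invSqrt_sub_sq (c : ℝ) :
    ∫⁻ y, invSqrt (c - y ^ 2) = if 0 < c then ENNReal.ofReal Real.pi else 0 := by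
  split_ifs with hc
  · set I := Set.Ioo (-(Real.pi / 2)) (Real.pi / 2)
    set r := √c
    have hr₀ : 0 < r := Real.sqrt_pos.2 hc
    have h_supp : (fun y ↦ invSqrt (c - y ^ 2)).support ⊆ ball 0 r := fun y hy ↦ by
      contrapose! hy
      rw [mem_ball_zero_iff, not_lt, Real.norm_eq_abs, Real.sqrt_le_left (abs_nonneg y),
        sq_abs] at hy
      simpa using invSqrt_of_nonpos (sub_nonpos.2 hy)
    have h_jac (θ : ℝ) (hθ : θ ∈ I) :
        ENNReal.ofReal (r * Real.cos θ) * invSqrt (c - (r * Real.sin θ) ^ 2) = 1 := by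
      have h_cos : 0 < r * Real.cos θ := mul_pos hr₀ (Real.cos_pos_of_mem_Ioo hθ)
      have h_sq : c - (r * Real.sin θ) ^ 2 = (r * Real.cos θ) ^ 2 := by
        linear_combination -r ^ 2 * Real.sin_sq_add_cos_sq θ - Real.sq_sqrt hc.le
      rw [h_sq, invSqrt_sq h_cos.le, ← ENNReal.ofReal_mul h_cos.le, mul_inv_cancel₀ h_cos.ne',
        ENNReal.ofReal_one]
    have h_mono : MonotoneOn (fun θ ↦ r * Real.sin θ) I := fun _ hx _ hy hxy ↦
      mul_le_mul_of_nonneg_left (Real.strictMonoOn_sin.monotoneOn (Set.Ioo_subset_Icc_self hx)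
        (Set.Ioo_subset_Icc_self hy) hxy) hr₀.le
    calc ∫⁻ y, invSqrt (c - y ^ 2)
        = ∫⁻ y in (fun θ ↦ r * Real.sin θ) '' I, invSqrt (c - y ^ 2) := by
          rw [image_mul_sin_Ioo hr₀, setLIntegral_eq_of_support_subset h_supp]
      _ = ∫⁻ θ in I, ENNReal.ofReal (r * Real.cos θ) * invSqrt (c - (r * Real.sin θ) ^ 2) :=
          lintegral_image_eq_lintegral_deriv_mul_of_monotoneOn measurableSet_Ioo
            (fun θ _ ↦ ((Real.hasDerivAt_sin θ).const_mul r).hasDerivWithinAt) h_mono _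
      _ = ∫⁻ _ in I, 1 := setLIntegral_congr_fun measurableSet_Ioo h_jac
      _ = ENNReal.ofReal Real.pi := by simp [I]
  · have h_zero (y : ℝ) : invSqrt (c - y ^ 2) = 0 :=
      invSqrt_of_nonpos (by linarith [sq_nonneg y])
    simp [h_zero]

lemma lintegral_invSqrt_mul_invSqrt (a b : ℝ) :
    ∫⁻ t, invSqrt (t - a) * invSqrt (b - t) = if a < b then ENNReal.ofReal Real.pi else 0 := by
  split_ifs with hab
  · have h_mul (t : ℝ) : invSqrt (t - a) * invSqrt (b - t) =
        invSqrt (((b - a) / 2) ^ 2 - (t - (a + b) / 2) ^ 2) := by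
      have h_sq : ((b - a) / 2) ^ 2 - (t - (a + b) / 2) ^ 2 = (t - a) * (b - t) := by ring
      rw [h_sq]
      rcases le_total a t with hat | hat
      · rw [invSqrt_mul (sub_nonneg.2 hat)]
      · rw [invSqrt_of_nonpos (sub_nonpos.2 hat), zero_mul, invSqrt_of_nonpos]
        exact mul_nonpos_of_nonpos_of_nonneg (by linarith) (by linarith)
    have h_pos : 0 < ((b - a) / 2) ^ 2 := pow_pos (by linarith) 2
    simp_rw [h_mul]
    rw [lintegral_sub_right_eq_self (fun y ↦ invSqrt (((b - a) / 2) ^ 2 - y ^ 2)),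
      lintegral_invSqrt_sub_sq, if_pos h_pos]
  · have h_zero (t : ℝ) : invSqrt (t - a) * invSqrt (b - t) = 0 := by
      rcases le_total t a with hta | hta
      · rw [invSqrt_of_nonpos (sub_nonpos.2 hta), zero_mul]
      · rw [invSqrt_of_nonpos (t := b - t) (by linarith), mul_zero]
    simp [h_zero]

/-- The slab of half-width `r` around the hyperplane `⟪u, x⟫ = a`. -/
def slab {E : Type*} [NormedAddCommGroup E] [InnerProductSpace ℝ E] (u : E) (a r : ℝ) : Set E :=
  (⟪u, ·⟫) ⁻¹' closedBall a r

section Slab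

variable {E : Type*} [NormedAddCommGroup E] [InnerProductSpace ℝ E] {u u₁ u₂ : E}
  {a a₁ a₂ r r₁ r₂ R : ℝ}

lemma mem_slab {x : E} : x ∈ slab u a r ↔ |⟪u, x⟫ - a| ≤ r :=
  Iff.rfl

lemma isClosed_slab : IsClosed (slab u a r) :=
  isClosed_closedBall.preimage (by fun_prop)

lemma slab_neg_left : slab (-u) a r = slab u (-a) r := by
  ext x
  rw [mem_slab, mem_slab, inner_neg_left, ← abs_neg]
  ring_nf

lemma preimage_orthogonalProjectionOnto_slab (K : Submodule ℝ E) [K.HasOrthogonalProjection]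
    (v : K) : K.orthogonalProjectionOnto ⁻¹' slab v a r = slab (v : E) a r := by
  ext x
  simp [mem_slab]

lemma volume_slab_inter_closedBall_congr [FiniteDimensional ℝ E] [MeasurableSpace E]
    [BorelSpace E] (h : ‖u₁‖ = ‖u₂‖) :
    volume (slab u₁ a r ∩ closedBall 0 R) = volume (slab u₂ a r ∩ closedBall 0 R) := by
  set f := (ℝ ∙ (u₁ - u₂))ᗮ.reflection
  have hf : f u₁ = u₂ := Submodule.reflection_sub h
  have h_meas : MeasurableSet (slab u₂ a r ∩ closedBall 0 R) :=
    (isClosed_slab.inter isClosed_closedBall).measurableSet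
  have h_preimage : f ⁻¹' (slab u₂ a r ∩ closedBall 0 R) = slab u₁ a r ∩ closedBall 0 R := by
    ext x
    simp [mem_slab, ← hf]
  rw [← h_preimage, f.measurePreserving.measure_preimage h_meas.nullMeasurableSet]

lemma exists_mem_slab_inter_slab (hu₁ : ‖u₁‖ = 1) (hu₂ : ‖u₂‖ = 1) (hr₁ : 0 < r₁) (hr₂ : 0 < r₂)
    (ha₁ : |a₁| ≤ r₂) (ha₂ : |a₂| ≤ r₁) :
    ∃ x ∈ slab u₁ a₁ r₁ ∩ slab u₂ a₂ r₂, ‖x‖ ≤ |r₂ - r₁| := by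
  wlog hr : r₁ ≤ r₂ generalizing u₁ u₂ a₁ a₂ r₁ r₂
  · rw [Set.inter_comm, abs_sub_comm]
    exact this hu₂ hu₁ hr₂ hr₁ ha₂ ha₁ (le_of_not_ge hr)
  rw [abs_of_nonneg (sub_nonneg.2 hr)]
  set s := a₁ * ((r₂ - r₁) / r₂) with hs
  have hs_le : |s| ≤ r₂ - r₁ := by
    rw [hs, abs_mul, abs_of_nonneg (div_nonneg (sub_nonneg.2 hr) hr₂.le), mul_div_left_comm]
    exact mul_le_of_le_one_right (sub_nonneg.2 hr) ((div_le_one hr₂).2 ha₁)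
  have hs_sub : |s - a₁| ≤ r₁ := by
    have : s - a₁ = -(r₁ * (a₁ / r₂)) := by rw [hs]; field_simp; ring
    rw [this, abs_neg, abs_mul, abs_div, abs_of_pos hr₁, abs_of_pos hr₂]
    exact mul_le_of_le_one_right hr₁.le ((div_le_one hr₂).2 ha₁)
  refine ⟨s • u₁, ⟨?_, ?_⟩, ?_⟩
  · simpa [mem_slab, inner_smul_right, hu₁] using hs_sub
  · have h_inner : |⟪u₂, s • u₁⟫| ≤ |s| := by
      simpa [hu₁, hu₂, norm_smul] using abs_real_inner_le_norm u₂ (s • u₁)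
    rw [mem_slab]
    linarith [abs_sub ⟪u₂, s • u₁⟫ a₂]
  · simpa [norm_smul, hu₁] using hs_le

lemma exists_inner_eq_of_ne (hu₁ : ‖u₁‖ = 1) (hu₂ : ‖u₂‖ = 1) (h_ne : u₂ ≠ u₁)
    (h_ne_neg : u₂ ≠ -u₁) (a₁ a₂ : ℝ) : ∃ q : E, ⟪u₁, q⟫ = a₁ ∧ ⟪u₂, q⟫ = a₂ := by
  obtain ⟨c, hc⟩ : ∃ c, ⟪u₁, u₂⟫ = c := ⟨_, rfl⟩
  have hc_ne_one : 1 - c ≠ 0 := fun h ↦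
    h_ne ((inner_eq_one_iff_of_norm_eq_one (𝕜 := ℝ) hu₁ hu₂).1 (by linarith)).symm
  have hc_ne_neg_one : 1 + c ≠ 0 := fun h ↦
    h_ne_neg ((inner_eq_one_iff_of_norm_eq_one (𝕜 := ℝ) hu₂ (by rwa [norm_neg])).1
      (by rw [inner_neg_right, real_inner_comm]; linarith))
  refine ⟨((1 - c) * (1 + c))⁻¹ • ((a₁ - c * a₂) • u₁ + (a₂ - c * a₁) • u₂), ?_, ?_⟩ <;>
    simp only [inner_smul_right, inner_add_right, real_inner_self_eq_norm_sq, hu₁, hu₂,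
      real_inner_comm u₁ u₂, hc] <;>
    field_simp <;> ring

lemma eq_or_eq_neg_of_slabs_disjoint_in_ball (hu₁ : ‖u₁‖ = 1) (hu₂ : ‖u₂‖ = 1) (hr₁ : 0 < r₁)
    (hr₂ : 0 < r₂) (hR : r₁ + r₂ < R) (ha₁ : |a₁| ≤ r₂) (ha₂ : |a₂| ≤ r₁)
    (h_disj : ∀ x : E, ‖x‖ < R → |⟪u₁, x⟫ - a₁| < r₁ → r₂ ≤ |⟪u₂, x⟫ - a₂|) :
    u₂ = u₁ ∨ u₂ = -u₁ := by
  by_contra! h_ne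
  obtain ⟨p, ⟨hp₁, hp₂⟩, hp⟩ := exists_mem_slab_inter_slab hu₁ hu₂ hr₁ hr₂ ha₁ ha₂
  obtain ⟨q, hq₁, hq₂⟩ := exists_inner_eq_of_ne hu₁ hu₂ h_ne.1 h_ne.2 a₁ a₂
  have hpR : ‖p‖ < R := hp.trans_lt (abs_sub_lt_iff.2 ⟨by linarith, by linarith⟩)
  -- Moving `p` towards `q` shrinks the distance to both midhyperplanes, so that `p` can be
  -- pushed into the interior of both slabs without leaving the ball.
  have h_contract {u : E} {a r t : ℝ} (hr : 0 < r) (ht : t ∈ Set.Ioo (0 : ℝ) 1)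
      (hu : p ∈ slab u a r) (hq : ⟪u, q⟫ = a) : |⟪u, p + t • (q - p)⟫ - a| < r := by
    have h_inner : ⟪u, p + t • (q - p)⟫ - a = (1 - t) * (⟪u, p⟫ - a) := by
      rw [inner_add_right, inner_smul_right, inner_sub_right, hq]
      ring
    rw [h_inner, abs_mul, abs_of_pos (by linarith [ht.2])]
    nlinarith [mem_slab.1 hu, ht.1, ht.2]
  have h_near : ∀ᶠ t in nhdsWithin (0 : ℝ) (Set.Ioi 0), ‖p + t • (q - p)‖ < R := by
    have h_cont : Continuous fun t : ℝ ↦ ‖p + t • (q - p)‖ := by fun_prop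
    exact nhdsWithin_le_nhds (h_cont.continuousAt.eventually_lt_const (by simpa using hpR))
  obtain ⟨t, htR, ht⟩ := (h_near.and (Ioo_mem_nhdsGT one_pos)).exists
  exact (h_disj _ htR (h_contract hr₁ ht hp₁ hq₁)).not_gt (h_contract hr₂ ht hp₂ hq₂)

lemma parallel_slab_union_slab_eq_of_disjoint_in_ball (hu : ‖u‖ = 1) (hr₁ : 0 < r₁) (hr₂ : 0 < r₂)
    (hR : r₁ + r₂ < R) (ha₁ : |a₁| ≤ r₂) (ha₂ : |a₂| ≤ r₁)
    (h_disj : ∀ x : E, ‖x‖ < R → |⟪u, x⟫ - a₁| < r₁ → r₂ ≤ |⟪u, x⟫ - a₂|) :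
    slab u a₁ r₁ ∪ slab u a₂ r₂ = slab u 0 (r₁ + r₂) := by
  have hr : 0 < r₁ + r₂ := add_pos hr₁ hr₂
  rw [abs_le] at ha₁ ha₂
  have h_far : r₁ + r₂ ≤ |a₁ - a₂| := by
    by_contra! h_lt
    -- The point of `[a₁, a₂]` that divides it in the ratio `r₁ : r₂`.
    set s := (r₂ * a₁ + r₁ * a₂) / (r₁ + r₂) with hs
    have hs₁ : s - a₁ = -(r₁ * ((a₁ - a₂) / (r₁ + r₂))) := by rw [hs]; field_simp; ring
    have hs₂ : s - a₂ = r₂ * ((a₁ - a₂) / (r₁ + r₂)) := by rw [hs]; field_simp; ring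
    have h_ratio : |(a₁ - a₂) / (r₁ + r₂)| < 1 := by
      rwa [abs_div, abs_of_pos hr, div_lt_one hr]
    have h_inner : ⟪u, s • u⟫ = s := by simp [inner_smul_right, hu]
    have hs₁' : |s - a₁| < r₁ := by
      rw [hs₁, abs_neg, abs_mul, abs_of_pos hr₁]
      exact mul_lt_of_lt_one_right hr₁ h_ratio
    have hs₂' : |s - a₂| < r₂ := by
      rw [hs₂, abs_mul, abs_of_pos hr₂]
      exact mul_lt_of_lt_one_right hr₂ h_ratio
    have hsR : ‖s • u‖ < R := by
      rw [norm_smul, hu, mul_one, Real.norm_eq_abs]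
      rw [abs_lt] at hs₁' hs₂' ⊢
      constructor <;> linarith
    exact (h_disj _ hsR (by rwa [h_inner])).not_gt (by rwa [h_inner])
  ext x
  simp only [Set.mem_union, mem_slab, sub_zero, abs_le]
  rcases le_abs'.1 h_far with h | h
  · obtain rfl : a₁ = -r₂ := by linarith
    obtain rfl : a₂ = r₁ := by linarith
    grind
  · obtain rfl : a₁ = r₂ := by linarith
    obtain rfl : a₂ = -r₁ := by linarith
    grind

theorem slab_union_slab_eq_of_disjoint_in_ball (hu₁ : ‖u₁‖ = 1) (hu₂ : ‖u₂‖ = 1) (hr₁ : 0 < r₁)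
    (hr₂ : 0 < r₂) (hR : r₁ + r₂ < R) (ha₁ : |a₁| ≤ r₂) (ha₂ : |a₂| ≤ r₁)
    (h_disj : ∀ x : E, ‖x‖ < R → |⟪u₁, x⟫ - a₁| < r₁ → r₂ ≤ |⟪u₂, x⟫ - a₂|) :
    slab u₁ a₁ r₁ ∪ slab u₂ a₂ r₂ = slab u₁ 0 (r₁ + r₂) := by
  rcases eq_or_eq_neg_of_slabs_disjoint_in_ball hu₁ hu₂ hr₁ hr₂ hR ha₁ ha₂ h_disj with rfl | rfl
  · exact parallel_slab_union_slab_eq_of_disjoint_in_ball hu₁ hr₁ hr₂ hR ha₁ ha₂ h_disj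
  · rw [slab_neg_left]
    refine parallel_slab_union_slab_eq_of_disjoint_in_ball hu₁ hr₁ hr₂ hR ha₁ (by rwa [abs_neg]) ?_
    intro x hxR hx
    have h_abs : |⟪u₁, x⟫ - -a₂| = |⟪-u₁, x⟫ - a₂| := by
      rw [inner_neg_left, ← abs_neg]
      ring_nf
    exact h_abs ▸ h_disj x hxR hx

end Slab

section HatBox

variable {V : Type*} [NormedAddCommGroup V] [InnerProductSpace ℝ V] [FiniteDimensional ℝ V]
  [MeasurableSpace V] [BorelSpace V] {t : ℝ}

variable (V) in
/-- The radial measure of density `(t - ‖x‖²)₊ ^ (-1/2)`. On a plane, `2 * √t` times this measure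
is the projection of the area of the sphere of radius `√t` in space, and Archimedes' hat-box theorem
says that its marginals are uniform. -/
noncomputable def hatBoxMeasure (t : ℝ) : Measure V :=
  volume.withDensity fun x ↦ invSqrt (t - ‖x‖ ^ 2)

lemma hatBoxMeasure_apply {A : Set V} (hA : MeasurableSet A) :
    hatBoxMeasure V t A = ∫⁻ x in A, invSqrt (t - ‖x‖ ^ 2) :=
  withDensity_apply _ hA

lemma measurable_hatBoxMeasure_apply {A : Set V} (hA : MeasurableSet A) :
    Measurable fun t ↦ hatBoxMeasure V t A := by
  simp_rw [hatBoxMeasure_apply hA]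
  exact Measurable.lintegral_prod_right' (f := fun p : ℝ × V ↦ invSqrt (p.1 - ‖p.2‖ ^ 2))
    (by fun_prop)

lemma hatBoxMeasure_pos_of_isOpen {O : Set V} (hO : IsOpen O) {x : V} (hx : x ∈ O)
    (hxt : ‖x‖ ^ 2 < t) : 0 < hatBoxMeasure V t O := by
  set D := O ∩ {y | ‖y‖ ^ 2 < t}
  have hD : IsOpen D := hO.inter (isOpen_lt (by fun_prop) continuous_const)
  refine lt_of_lt_of_le ?_ (measure_mono (s := D) Set.inter_subset_left)
  rw [hatBoxMeasure_apply hD.measurableSet, setLIntegral_pos_iff (by fun_prop)]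
  refine (hD.measure_pos volume ⟨x, hx, hxt⟩).trans_le (measure_mono fun y hy ↦ ⟨?_, hy⟩)
  exact (invSqrt_pos (sub_pos.2 hy.2)).ne'

lemma exists_measurePreserving_coordinates (hV : finrank ℝ V = 2) {u : V} (hu : ‖u‖ = 1) :
    ∃ e : V → ℝ × ℝ, MeasurePreserving e ∧
      ∀ x, (e x).1 = ⟪u, x⟫ ∧ ‖x‖ ^ 2 = (e x).1 ^ 2 + (e x).2 ^ 2 := by
  have h_orth : Orthonormal ℝ (({0} : Set (Fin 2)).domRestrict fun _ ↦ u) :=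
    orthonormal_subsingleton_iff.2 fun _ ↦ hu
  obtain ⟨b, hb⟩ := h_orth.exists_orthonormalBasis_extension_of_card_eq (by simpa using hV)
  refine ⟨_, (volume_preserving_finTwoArrow ℝ).comp
    ((PiLp.volume_preserving_ofLp (Fin 2)).comp b.measurePreserving_repr), fun x ↦ ⟨?_, ?_⟩⟩
  · simp [b.repr_apply_apply, hb 0 rfl]
  · rw [← b.repr.norm_map x, EuclideanSpace.norm_sq_eq]
    simp

theorem map_inner_hatBoxMeasure (hV : finrank ℝ V = 2) {u : V} (hu : ‖u‖ = 1) (t : ℝ) :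
    (hatBoxMeasure V t).map (⟪u, ·⟫) =
      ENNReal.ofReal Real.pi • volume.restrict (ball 0 √t) := by
  obtain ⟨e, he, he_apply⟩ := exists_measurePreserving_coordinates hV hu
  ext A hA
  have h_preimage : (⟪u, ·⟫) ⁻¹' A = e ⁻¹' (A ×ˢ Set.univ) := by
    ext x
    simp [← (he_apply x).1]
  have h_marginal (a : ℝ) : ∫⁻ y, invSqrt (t - a ^ 2 - y ^ 2) =
      (ball 0 √t).indicator (fun _ ↦ ENNReal.ofReal Real.pi) a := by
    have h_ball : 0 < t - a ^ 2 ↔ a ∈ ball 0 √t := by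
      rw [mem_ball_zero_iff, Real.norm_eq_abs, Real.lt_sqrt (abs_nonneg a), sq_abs, sub_pos]
    classical simp only [lintegral_invSqrt_sub_sq, h_ball, Set.indicator_apply]
  rw [Measure.map_apply (by fun_prop) hA, hatBoxMeasure_apply (hA.preimage (by fun_prop)),
    h_preimage]
  calc ∫⁻ x in e ⁻¹' (A ×ˢ Set.univ), invSqrt (t - ‖x‖ ^ 2)
      = ∫⁻ p in A ×ˢ Set.univ, invSqrt (t - p.1 ^ 2 - p.2 ^ 2) := by
        rw [← he.setLIntegral_comp_preimage (hA.prod .univ) (by fun_prop)]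
        simp only [fun x ↦ (he_apply x).2, sub_sub]
    _ = ∫⁻ a in A, ∫⁻ y, invSqrt (t - a ^ 2 - y ^ 2) := by
        rw [Measure.volume_eq_prod, setLIntegral_prod _ (by fun_prop), Measure.restrict_univ]
    _ = ∫⁻ a in A, (ball 0 √t).indicator (fun _ ↦ ENNReal.ofReal Real.pi) a := by
        simp_rw [h_marginal]
    _ = (ENNReal.ofReal Real.pi • volume.restrict (ball 0 √t)) A := by
        rw [lintegral_indicator_const measurableSet_ball, Measure.smul_apply, smul_eq_mul,
          Measure.restrict_apply hA, Measure.restrict_apply measurableSet_ball, Set.inter_comm]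

lemma hatBoxMeasure_slab (hV : finrank ℝ V = 2) {u : V} (hu : ‖u‖ = 1) (a r t : ℝ) :
    hatBoxMeasure V t (slab u a r) =
      ENNReal.ofReal Real.pi * volume (closedBall a r ∩ ball 0 √t) := by
  rw [slab, ← Measure.map_apply (by fun_prop) measurableSet_closedBall,
    map_inner_hatBoxMeasure hV hu, Measure.smul_apply, smul_eq_mul,
    Measure.restrict_apply measurableSet_closedBall]

lemma measurePreserving_orthogonalProjectionOnto_prod (K : Submodule ℝ V) :
    MeasurePreserving fun x ↦ (K.orthogonalProjectionOnto x, Kᗮ.orthogonalProjectionOnto x) := by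
  convert (WithLp.volume_preserving_ofLp K Kᗮ).comp
    K.orthogonalDecomposition.measurePreserving <;> simp

theorem pi_mul_volume_preimage_orthogonalProjectionOnto_inter_ball (K : Submodule ℝ V) {A : Set K}
    (hA : MeasurableSet A) {R : ℝ} (hR : 0 ≤ R) :
    ENNReal.ofReal Real.pi * volume (K.orthogonalProjectionOnto ⁻¹' A ∩ ball 0 R) =
      ∫⁻ t, hatBoxMeasure K t A * hatBoxMeasure Kᗮ (R ^ 2 - t) Set.univ := by
  set S : Set (K × Kᗮ) := {p | ‖p.1‖ ^ 2 < R ^ 2 - ‖p.2‖ ^ 2}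
  have hS : MeasurableSet S := measurableSet_lt (by fun_prop) (by fun_prop)
  have h_preimage : K.orthogonalProjectionOnto ⁻¹' A ∩ ball 0 R =
      (fun x ↦ (K.orthogonalProjectionOnto x, Kᗮ.orthogonalProjectionOnto x)) ⁻¹'
        (S ∩ A ×ˢ Set.univ) := by
    ext x
    simp only [S, Set.mem_inter_iff, Set.mem_preimage, mem_ball_zero_iff, Set.mem_prod,
      Set.mem_univ, and_true, Set.mem_ofPred_eq, lt_sub_iff_add_lt,
      ← K.norm_sq_eq_add_norm_sq_projection x, sq_lt_sq₀ (norm_nonneg x) hR]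
    rw [and_comm]
  rw [h_preimage, (measurePreserving_orthogonalProjectionOnto_prod K).measure_preimage
    (hS.inter (hA.prod .univ)).nullMeasurableSet]
  have h_abel (p : K × Kᗮ) : S.indicator (fun _ ↦ ENNReal.ofReal Real.pi) p =
      ∫⁻ t, invSqrt (t - ‖p.1‖ ^ 2) * invSqrt (R ^ 2 - t - ‖p.2‖ ^ 2) := by
    simp_rw [sub_right_comm (R ^ 2) _ (‖p.2‖ ^ 2), lintegral_invSqrt_mul_invSqrt,
      Set.indicator_apply, S, Set.mem_ofPred_eq]
  have h_prod (t : ℝ) :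
      ∫⁻ p : K × Kᗮ in A ×ˢ Set.univ, invSqrt (t - ‖p.1‖ ^ 2) * invSqrt (R ^ 2 - t - ‖p.2‖ ^ 2) =
        hatBoxMeasure K t A * hatBoxMeasure Kᗮ (R ^ 2 - t) Set.univ := by
    rw [Measure.volume_eq_prod, ← Measure.prod_restrict, hatBoxMeasure_apply hA,
      hatBoxMeasure_apply .univ]
    exact lintegral_prod_mul (f := fun x : K ↦ invSqrt (t - ‖x‖ ^ 2))
      (g := fun x : Kᗮ ↦ invSqrt (R ^ 2 - t - ‖x‖ ^ 2)) (by fun_prop) (by fun_prop)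
  have h_meas : Measurable fun q : (K × Kᗮ) × ℝ ↦
      invSqrt (q.2 - ‖q.1.1‖ ^ 2) * invSqrt (R ^ 2 - q.2 - ‖q.1.2‖ ^ 2) := by
    fun_prop
  simp_rw [← h_prod]
  rw [← lintegral_lintegral_swap h_meas.aemeasurable]
  simp_rw [← h_abel]
  rw [lintegral_indicator_const hS, Measure.restrict_apply hS]

lemma hatBoxMeasure_slab_le (hV : finrank ℝ V = 2) {u : V} (hu : ‖u‖ = 1) (a r t : ℝ) :
    hatBoxMeasure V t (slab u a r) ≤ ENNReal.ofReal Real.pi * ENNReal.ofReal (2 * r) := by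
  rw [hatBoxMeasure_slab hV hu, ← Real.volume_closedBall a r]
  gcongr
  exact Set.inter_subset_left

lemma hatBoxMeasure_slab_zero_of_le_sqrt (hV : finrank ℝ V = 2) {u : V} (hu : ‖u‖ = 1) {r t : ℝ}
    (hr : r ≤ √t) :
    hatBoxMeasure V t (slab u 0 r) = ENNReal.ofReal Real.pi * ENNReal.ofReal (2 * r) := by
  refine (hatBoxMeasure_slab_le hV hu 0 r t).antisymm ?_
  rw [hatBoxMeasure_slab hV hu, ← Real.volume_ball 0 r]
  gcongr
  exact Set.subset_inter ball_subset_closedBall (ball_subset_ball hr)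

lemma hatBoxMeasure_slab_zero_of_sqrt_le (hV : finrank ℝ V = 2) {u : V} (hu : ‖u‖ = 1) {r t : ℝ}
    (hr : √t ≤ r) : hatBoxMeasure V t (slab u 0 r) = hatBoxMeasure V t Set.univ := by
  rw [hatBoxMeasure_slab hV hu, Set.inter_eq_right.2
    (ball_subset_closedBall.trans (closedBall_subset_closedBall hr))]
  rw [← Set.preimage_univ (f := (⟪u, ·⟫)), ← Measure.map_apply (by fun_prop) .univ,
    map_inner_hatBoxMeasure hV hu, Measure.smul_apply, Measure.restrict_apply_univ, smul_eq_mul]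

theorem hatBoxMeasure_slab_union_slab_le (hV : finrank ℝ V = 2) {u u₁ u₂ : V} (hu : ‖u‖ = 1)
    (hu₁ : ‖u₁‖ = 1) (hu₂ : ‖u₂‖ = 1) (a₁ a₂ : ℝ) {r₁ r₂ : ℝ} (hr₁ : 0 ≤ r₁) (hr₂ : 0 ≤ r₂)
    (t : ℝ) : hatBoxMeasure V t (slab u₁ a₁ r₁ ∪ slab u₂ a₂ r₂) ≤
      hatBoxMeasure V t (slab u 0 (r₁ + r₂)) := by
  rcases le_total (r₁ + r₂) √t with h | h
  · calc hatBoxMeasure V t (slab u₁ a₁ r₁ ∪ slab u₂ a₂ r₂)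
        ≤ hatBoxMeasure V t (slab u₁ a₁ r₁) + hatBoxMeasure V t (slab u₂ a₂ r₂) :=
          measure_union_le _ _
      _ ≤ ENNReal.ofReal Real.pi * ENNReal.ofReal (2 * r₁) +
            ENNReal.ofReal Real.pi * ENNReal.ofReal (2 * r₂) :=
          add_le_add (hatBoxMeasure_slab_le hV hu₁ _ _ _) (hatBoxMeasure_slab_le hV hu₂ _ _ _)
      _ = hatBoxMeasure V t (slab u 0 (r₁ + r₂)) := by
          rw [hatBoxMeasure_slab_zero_of_le_sqrt hV hu h, ← mul_add,
            ← ENNReal.ofReal_add (by positivity) (by positivity), ← mul_add]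
  · exact hatBoxMeasure_slab_zero_of_sqrt_le hV hu h ▸ measure_mono (Set.subset_univ _)

lemma abs_add_le_of_le_volume_closedBall_inter_ball {a r s : ℝ} (hr : 0 < r)
    (h : ENNReal.ofReal (2 * r) ≤ volume (closedBall a r ∩ ball 0 s)) : |a| + r ≤ s := by
  have h_subset : closedBall a r ∩ ball 0 s ⊆ Set.Icc (max (a - r) (-s)) (min (a + r) s) := by
    rw [Real.closedBall_eq_Icc, Real.ball_eq_Ioo, zero_sub, zero_add, ← Set.Icc_inter_Icc]
    exact Set.inter_subset_inter_right _ Set.Ioo_subset_Icc_self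
  have h_le := h.trans (measure_mono h_subset)
  rw [Real.volume_Icc, ENNReal.ofReal_le_ofReal_iff', or_iff_left (by linarith)] at h_le
  grind

lemma abs_add_le_sqrt_of_hatBoxMeasure_slab_eq (hV : finrank ℝ V = 2) {u : V} (hu : ‖u‖ = 1)
    {a r t : ℝ} (hr : 0 < r)
    (h : hatBoxMeasure V t (slab u a r) = ENNReal.ofReal Real.pi * ENNReal.ofReal (2 * r)) :
    |a| + r ≤ √t := by
  have h_pi : ENNReal.ofReal Real.pi ≠ 0 := (ENNReal.ofReal_pos.2 Real.pi_pos).ne'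
  rw [hatBoxMeasure_slab hV hu, ENNReal.mul_right_inj h_pi ENNReal.ofReal_ne_top] at h
  exact abs_add_le_of_le_volume_closedBall_inter_ball hr h.ge

lemma eq_and_eq_and_eq_zero_of_add_add_eq {x y a b c : ℝ≥0∞} (hx : x ≠ ∞) (hy : y ≠ ∞)
    (ha : a ≤ x) (hb : b ≤ y) (h : x + y + c = a + b) : a = x ∧ b = y ∧ c = 0 := by
  have h_le : x + y ≤ a + b := h ▸ le_self_add
  obtain rfl : a = x := ha.antisymm <|
    (ENNReal.add_le_add_iff_right hy).1 (h_le.trans (add_le_add_right hb a))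
  obtain rfl : b = y := hb.antisymm ((ENNReal.add_le_add_iff_left hx).1 h_le)
  exact ⟨rfl, rfl, by simpa [hx, hy] using h⟩

theorem abs_add_le_sqrt_and_inter_null_of_hatBoxMeasure_union_eq (hV : finrank ℝ V = 2)
    {u u₁ u₂ : V} (hu : ‖u‖ = 1) (hu₁ : ‖u₁‖ = 1) (hu₂ : ‖u₂‖ = 1) {a₁ a₂ r₁ r₂ t : ℝ}
    (hr₁ : 0 < r₁) (hr₂ : 0 < r₂) (ht : r₁ + r₂ ≤ √t)
    (h : hatBoxMeasure V t (slab u₁ a₁ r₁ ∪ slab u₂ a₂ r₂) =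
      hatBoxMeasure V t (slab u 0 (r₁ + r₂))) :
    |a₁| + r₁ ≤ √t ∧ |a₂| + r₂ ≤ √t ∧
      hatBoxMeasure V t (slab u₁ a₁ r₁ ∩ slab u₂ a₂ r₂) = 0 := by
  have h_add := measure_union_add_inter (μ := hatBoxMeasure V t) (slab u₁ a₁ r₁)
    (isClosed_slab (u := u₂) (a := a₂) (r := r₂)).measurableSet
  rw [h, hatBoxMeasure_slab_zero_of_le_sqrt hV hu ht, mul_add 2,
    ENNReal.ofReal_add (by positivity) (by positivity), mul_add] at h_add
  obtain ⟨h₁, h₂, h_inter⟩ := eq_and_eq_and_eq_zero_of_add_add_eq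
    (ENNReal.mul_ne_top ENNReal.ofReal_ne_top ENNReal.ofReal_ne_top)
    (ENNReal.mul_ne_top ENNReal.ofReal_ne_top ENNReal.ofReal_ne_top)
    (hatBoxMeasure_slab_le hV hu₁ a₁ r₁ t) (hatBoxMeasure_slab_le hV hu₂ a₂ r₂ t) h_add
  exact ⟨abs_add_le_sqrt_of_hatBoxMeasure_slab_eq hV hu₁ hr₁ h₁,
    abs_add_le_sqrt_of_hatBoxMeasure_slab_eq hV hu₂ hr₂ h₂, h_inter⟩

theorem slab_union_slab_eq_of_dense_hatBoxMeasure_eq (hV : finrank ℝ V = 2) {u u₁ u₂ : V}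
    (hu : ‖u‖ = 1) (hu₁ : ‖u₁‖ = 1) (hu₂ : ‖u₂‖ = 1) {a₁ a₂ r₁ r₂ R : ℝ} (hr₁ : 0 < r₁)
    (hr₂ : 0 < r₂) (hR : r₁ + r₂ < R) {D : Set ℝ} (hD : Dense D)
    (h : ∀ t ∈ D, t < R ^ 2 → hatBoxMeasure V t (slab u₁ a₁ r₁ ∪ slab u₂ a₂ r₂) =
      hatBoxMeasure V t (slab u 0 (r₁ + r₂))) :
    slab u₁ a₁ r₁ ∪ slab u₂ a₂ r₂ = slab u₁ 0 (r₁ + r₂) := by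
  have hr : 0 < r₁ + r₂ := add_pos hr₁ hr₂
  have h_tight {s s' : ℝ} (hs : r₁ + r₂ ≤ s) (hs' : s < s') (hR' : s' ≤ R) :
      ∃ t, s < √t ∧ √t < s' ∧ |a₁| + r₁ ≤ √t ∧ |a₂| + r₂ ≤ √t ∧
        hatBoxMeasure V t (slab u₁ a₁ r₁ ∩ slab u₂ a₂ r₂) = 0 := by
    obtain ⟨t, htD, hst, hts'⟩ := hD.exists_between
      (pow_lt_pow_left₀ hs' (hr.le.trans hs) two_ne_zero)
    have hst' : s < √t := Real.lt_sqrt_of_sq_lt hst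
    refine ⟨t, hst', (Real.sqrt_lt' ((hr.trans_le hs).trans hs')).2 hts', ?_⟩
    refine abs_add_le_sqrt_and_inter_null_of_hatBoxMeasure_union_eq hV hu hu₁ hu₂ hr₁ hr₂
      (hs.trans hst'.le) ?_
    exact h t htD (hts'.trans_le (pow_le_pow_left₀ ((hr.le.trans hs).trans hs'.le) hR' 2))
  have ha₁ : |a₁| + r₁ ≤ r₁ + r₂ := le_of_forall_gt_imp_ge_of_dense fun s hs ↦ by
    obtain ⟨t, -, hts, ht, -⟩ := h_tight le_rfl (lt_min hs hR) (min_le_right s R)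
    exact ht.trans (hts.le.trans (min_le_left s R))
  have ha₂ : |a₂| + r₂ ≤ r₁ + r₂ := le_of_forall_gt_imp_ge_of_dense fun s hs ↦ by
    obtain ⟨t, -, hts, -, ht, -⟩ := h_tight le_rfl (lt_min hs hR) (min_le_right s R)
    exact ht.trans (hts.le.trans (min_le_left s R))
  refine slab_union_slab_eq_of_disjoint_in_ball hu₁ hu₂ hr₁ hr₂ hR (by linarith) (by linarith) ?_
  intro x hxR hx₁
  by_contra! hx₂
  obtain ⟨t, hst, -, -, -, h_null⟩ := h_tight (le_max_right ‖x‖ _) (max_lt hxR hR) le_rfl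
  have hxt : ‖x‖ ^ 2 < t := (Real.lt_sqrt (norm_nonneg x)).1 ((le_max_left _ _).trans_lt hst)
  have h_open : IsOpen ((⟪u₁, ·⟫) ⁻¹' ball a₁ r₁ ∩ (⟪u₂, ·⟫) ⁻¹' ball a₂ r₂) :=
    (isOpen_ball.preimage (by fun_prop)).inter (isOpen_ball.preimage (by fun_prop))
  refine (hatBoxMeasure_pos_of_isOpen h_open ⟨hx₁, hx₂⟩ hxt).ne' (measure_mono_null ?_ h_null)
  exact Set.inter_subset_inter (Set.preimage_mono ball_subset_closedBall)
    (Set.preimage_mono ball_subset_closedBall)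

end HatBox

section Planks

variable {E : Type*} [NormedAddCommGroup E] [InnerProductSpace ℝ E]

lemma exists_submodule_finrank_eq_two (hE : 2 ≤ finrank ℝ E) {x : E} (hx : x ≠ 0) (y : E) :
    ∃ K : Submodule ℝ E, finrank ℝ K = 2 ∧ x ∈ K ∧ y ∈ K := by
  obtain ⟨z, h_indep, hy⟩ :
      ∃ z, LinearIndependent ℝ ![x, z] ∧ y ∈ Submodule.span ℝ (Set.range ![x, z]) := by
    by_cases h_indep : LinearIndependent ℝ ![x, y]
    · exact ⟨y, h_indep, Submodule.subset_span ⟨1, rfl⟩⟩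
    · rw [LinearIndependent.pair_iff' hx] at h_indep
      push Not at h_indep
      obtain ⟨c, rfl⟩ := h_indep
      obtain ⟨z, hz⟩ := exists_linearIndependent_pair_of_one_lt_finrank hE hx
      exact ⟨z, hz, Submodule.smul_mem _ _ (Submodule.subset_span ⟨0, rfl⟩)⟩
  exact ⟨Submodule.span ℝ (Set.range ![x, z]), by simpa using finrank_span_eq_card h_indep,
    Submodule.subset_span ⟨0, rfl⟩, hy⟩

variable [FiniteDimensional ℝ E] [MeasurableSpace E] [BorelSpace E]

lemma volume_inter_closedBall_eq_volume_inter_ball [Nontrivial E] (A : Set E) (R : ℝ) :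
    volume (A ∩ closedBall 0 R) = volume (A ∩ ball 0 R) := by
  rw [← ball_union_sphere]
  exact measure_congr <| ae_eq_set_inter ae_eq_rfl <| union_ae_eq_left_of_ae_eq_empty <|
    ae_eq_empty.2 <| Measure.addHaar_sphere volume 0 R

variable {R : ℝ}

theorem ae_hatBoxMeasure_eq_of_volume_preimage_eq (K : Submodule ℝ E) {A C : Set K}
    (hA : MeasurableSet A) (hC : MeasurableSet C) (hR : 0 ≤ R)
    (h_le : ∀ t, hatBoxMeasure K t A ≤ hatBoxMeasure K t C)
    (h : volume (K.orthogonalProjectionOnto ⁻¹' A ∩ ball 0 R) =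
      volume (K.orthogonalProjectionOnto ⁻¹' C ∩ ball 0 R)) :
    ∀ᵐ t, t < R ^ 2 → hatBoxMeasure K t A = hatBoxMeasure K t C := by
  set g : ℝ → ℝ≥0∞ := fun t ↦ hatBoxMeasure Kᗮ (R ^ 2 - t) Set.univ
  have hg : Measurable g := (measurable_hatBoxMeasure_apply .univ).comp (by fun_prop)
  have h_integral {B : Set K} (hB : MeasurableSet B) :=
    pi_mul_volume_preimage_orthogonalProjectionOnto_inter_ball K hB hR
  have h_meas {B : Set K} (hB : MeasurableSet B) : Measurable fun t ↦ hatBoxMeasure K t B * g t :=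
    (measurable_hatBoxMeasure_apply hB).mul hg
  have h_finite {B : Set K} (hB : MeasurableSet B) : ∫⁻ t, hatBoxMeasure K t B * g t ≠ ∞ := by
    rw [← h_integral hB]
    exact ENNReal.mul_ne_top ENNReal.ofReal_ne_top
      (measure_ne_top_of_subset Set.inter_subset_right measure_ball_lt_top.ne)
  have h_eq : (fun t ↦ hatBoxMeasure K t A * g t) =ᵐ[volume] fun t ↦ hatBoxMeasure K t C * g t :=
    ae_eq_of_ae_le_of_lintegral_le (.of_forall fun t ↦ mul_le_mul_left (h_le t) (g t))
      (h_finite hA) (h_meas hC).aemeasurable (by rw [← h_integral hA, ← h_integral hC, h])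
  filter_upwards [h_eq, ae_lt_top (h_meas hC) (h_finite hC)] with t h_eq_t h_lt_top ht
  have hg_pos : 0 < g t := hatBoxMeasure_pos_of_isOpen isOpen_univ (Set.mem_univ 0) (by simpa)
  rcases eq_or_ne (hatBoxMeasure K t C) 0 with h_zero | h_pos
  · exact (h_le t).antisymm (h_zero ▸ zero_le)
  · have hg_top : g t ≠ ∞ := fun hg_top ↦ by simp [hg_top, h_pos] at h_lt_top
    exact (ENNReal.mul_left_inj hg_pos.ne' hg_top).1 h_eq_t

theorem two_planks_in_ball_general (hE : 2 ≤ finrank ℝ E) {u u₁ u₂ : E} (hu : ‖u‖ = 1)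
    (hu₁ : ‖u₁‖ = 1) (hu₂ : ‖u₂‖ = 1) (a₁ a₂ : ℝ) {r₁ r₂ : ℝ} (hr₁ : 0 < r₁) (hr₂ : 0 < r₂)
    (hR : 0 ≤ R) :
    volume ((slab u₁ a₁ r₁ ∪ slab u₂ a₂ r₂) ∩ closedBall 0 R) ≤
      volume (slab u 0 (r₁ + r₂) ∩ closedBall 0 R) ∧
    (r₁ + r₂ < R → volume ((slab u₁ a₁ r₁ ∪ slab u₂ a₂ r₂) ∩ closedBall 0 R) =
      volume (slab u 0 (r₁ + r₂) ∩ closedBall 0 R) →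
      slab u₁ a₁ r₁ ∪ slab u₂ a₂ r₂ = slab u₁ 0 (r₁ + r₂)) := by
  have : Nontrivial E := nontrivial_of_finrank_pos (R := ℝ) (by lia)
  obtain ⟨K, hK, hu₁K, hu₂K⟩ :=
    exists_submodule_finrank_eq_two hE (norm_ne_zero_iff.1 (hu₁ ▸ one_ne_zero)) u₂
  lift u₁ to K using hu₁K
  lift u₂ to K using hu₂K
  set A := slab u₁ a₁ r₁ ∪ slab u₂ a₂ r₂
  set C := slab u₁ 0 (r₁ + r₂)
  have hA : MeasurableSet A := (isClosed_slab.union isClosed_slab).measurableSet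
  have hC : MeasurableSet C := isClosed_slab.measurableSet
  have h_le (t : ℝ) : hatBoxMeasure K t A ≤ hatBoxMeasure K t C :=
    hatBoxMeasure_slab_union_slab_le hK hu₁ hu₁ hu₂ a₁ a₂ hr₁.le hr₂.le t
  have h_pi : ENNReal.ofReal Real.pi ≠ 0 := (ENNReal.ofReal_pos.2 Real.pi_pos).ne'
  rw [volume_slab_inter_closedBall_congr (hu.trans hu₁.symm),
    ← preimage_orthogonalProjectionOnto_slab, ← preimage_orthogonalProjectionOnto_slab,
    ← preimage_orthogonalProjectionOnto_slab, ← Set.preimage_union]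
  simp only [volume_inter_closedBall_eq_volume_inter_ball]
  refine ⟨?_, fun hrR h_eq ↦ ?_⟩
  · rw [← ENNReal.mul_le_mul_iff_right h_pi ENNReal.ofReal_ne_top,
      pi_mul_volume_preimage_orthogonalProjectionOnto_inter_ball K hA hR,
      pi_mul_volume_preimage_orthogonalProjectionOnto_inter_ball K hC hR]
    exact lintegral_mono fun t ↦ mul_le_mul_left (h_le t) _
  · have h_dense := Measure.dense_of_ae
      (ae_hatBoxMeasure_eq_of_volume_preimage_eq K hA hC hR h_le h_eq)
    exact congrArg _ (slab_union_slab_eq_of_dense_hatBoxMeasure_eq hK hu₁ hu₁ hu₂ hr₁ hr₂ hrR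
      h_dense fun t ht ↦ ht)

end Planks

lemma setOf_abs_inner_le_eq_slab {E : Type*} [NormedAddCommGroup E] [InnerProductSpace ℝ E]
    (u : E) (r : ℝ) : {x | |⟪x, u⟫| ≤ r} = slab u 0 r := by
  ext x
  simp [mem_slab, real_inner_comm]

lemma IsPlank.exists_eq_slab {d : ℕ} {P : Set (EuclideanSpace ℝ (Fin d))} {w : ℝ}
    (h : IsPlank P w) : 0 < w ∧ ∃ u a, ‖u‖ = 1 ∧ P = slab u a (w / 2) := by
  obtain ⟨hw, u, c, hu, rfl⟩ := h
  refine ⟨hw, u, ⟪u, c⟫, hu, ?_⟩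
  ext x
  simp [mem_slab, real_inner_comm, inner_sub_left]

/-- **Two planks covering part of a ball.** For planks `P₁, P₂` of widths `w₁, w₂` with
`w₁ + w₂ < 2`, the volume of `(P₁ ∪ P₂) ∩ B^d` is at most that of `P ∩ B^d` for a plank
`P` of width `w₁ + w₂` centred at the origin; equality holds only if `P₁ ∪ P₂` is itself
such a plank. -/
theorem two_planks_in_ball {d : ℕ} (hd : 2 ≤ d)
    (P₁ P₂ : Set (EuclideanSpace ℝ (Fin d))) (w₁ w₂ : ℝ)
    (h₁ : IsPlank P₁ w₁) (h₂ : IsPlank P₂ w₂) (hw : w₁ + w₂ < 2)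
    (P : Set (EuclideanSpace ℝ (Fin d)))
    (u : EuclideanSpace ℝ (Fin d)) (hu : ‖u‖ = 1)
    (hP : P = {x | |⟪x, u⟫| ≤ (w₁ + w₂) / 2}) :
    volume ((P₁ ∪ P₂) ∩ Metric.closedBall 0 1) ≤ volume (P ∩ Metric.closedBall 0 1) ∧
    (volume ((P₁ ∪ P₂) ∩ Metric.closedBall 0 1) = volume (P ∩ Metric.closedBall 0 1) →
      ∃ u' : EuclideanSpace ℝ (Fin d), ‖u'‖ = 1 ∧
        P₁ ∪ P₂ = {x | |⟪x, u'⟫| ≤ (w₁ + w₂) / 2}) := by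
  obtain ⟨hw₁, u₁, a₁, hu₁, rfl⟩ := h₁.exists_eq_slab
  obtain ⟨hw₂, u₂, a₂, hu₂, rfl⟩ := h₂.exists_eq_slab
  simp only [hP, setOf_abs_inner_le_eq_slab, add_div]
  obtain ⟨h_le, h_eq⟩ := two_planks_in_ball_general (by simpa) hu hu₁ hu₂ a₁ a₂ (half_pos hw₁)
    (half_pos hw₂) zero_le_one
  exact ⟨h_le, fun h ↦ ⟨u₁, hu₁, h_eq (by linarith) h⟩⟩
end

section
/- Let d ≥ 3 and let B^d be the closed unit ball centered at the origin in E^d. Let P_1, P_2, P_3 be planks of widths w_1, w_2, w_3 > 0 with w_1 + w_2 + w_3 < 2, and let P be any plank of width w_1 + w_2 + w_3 having the origin as a center of symmetry (i.e., P = {x : |⟨x,u⟩| ≤ (w_1+w_2+w_3)/2} for some unit vector u). Then vol_d((P_1 ∪ P_2 ∪ P_3) ∩ B^d) ≤ vol_d(P ∩ B^d). -/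
open MeasureTheory
open scoped RealInnerProductSpace

/-!
Choose a three-dimensional subspace `L` containing the normals of the planks and, by rotation
invariance of the volume, the normal of the comparison plank of width `W`. Remove from the ball the
solid cylinder of radius `W / 2` around `Lᗮ`. The comparison plank contains the whole removed part.
The slices of the rest parallel to `L` are spherical shells, all with inner radius `W / 2`.
By Archimedes' hat-box theorem, a plank of width `w` with normal in `L` cuts out of such a shell a
volume at most proportional to `w`, with equality when the two bounding planes meet or touch the
inner ball. So the comparison plank attains the bound obtained by adding up those of the given
planks.
-/

open Module Metric Set

theorem exists_submodule_ge_finrank_eq {K V : Type*} [DivisionRing K] [AddCommGroup V] [Module K V]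
    [FiniteDimensional K V] (W : Submodule K V) {n : ℕ} (hWn : finrank K W ≤ n)
    (hnV : n ≤ finrank K V) : ∃ L : Submodule K V, W ≤ L ∧ finrank K L = n := by
  induction n, hWn using Nat.le_induction with
  | base => exact ⟨W, le_rfl, rfl⟩
  | succ n _ ih =>
    obtain ⟨L, hWL, hL⟩ := ih (Nat.le_of_succ_le hnV)
    obtain ⟨v, hv⟩ := L.exists_of_finrank_lt (by lia)
    have hvL : v ∉ L := by simpa using hv 1 one_ne_zero
    refine ⟨L ⊔ K ∙ v, hWL.trans le_sup_left, ?_⟩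
    have hv0 : v ≠ 0 := fun h ↦ hvL (h ▸ L.zero_mem)
    have hdim := Submodule.finrank_sup_add_finrank_inf_eq L (K ∙ v)
    rw [(Submodule.disjoint_span_singleton_of_notMem hvL).eq_bot, finrank_bot,
      finrank_span_singleton hv0, hL] at hdim
    simpa using hdim

variable {E : Type*} [NormedAddCommGroup E] [InnerProductSpace ℝ E]

theorem norm_sq_add_orthogonal (L : Submodule ℝ E) (y : L) (z : Lᗮ) :
    ‖(y + z : E)‖ ^ 2 = ‖y‖ ^ 2 + ‖z‖ ^ 2 := by
  simpa only [sq, Submodule.coe_norm] using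
    norm_add_sq_eq_norm_sq_add_norm_sq_of_inner_eq_zero (𝕜 := ℝ) _ _
      (Submodule.inner_right_of_mem_orthogonal y.2 z.2)

/-- The plank of width `w` with unit normal vector `u` that is symmetric about `c`. -/
def plank (u c : E) (w : ℝ) : Set E :=
  {x | |⟪x - c, u⟫| ≤ w / 2}

/-- The solid cylinder of radius `h` with axis `Lᗮ`, i.e. the preimage of a ball of `L` under the
orthogonal projection. -/
def solidCylinder (L : Submodule ℝ E) [L.HasOrthogonalProjection] (h : ℝ) : Set E :=
  {x | ‖L.orthogonalProjectionOnto x‖ ≤ h}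

theorem mem_plank_iff {u c : E} {w : ℝ} {x : E} :
    x ∈ plank u c w ↔ ⟪x, u⟫ ∈ Icc (⟪c, u⟫ - w / 2) (⟪c, u⟫ + w / 2) := by
  rw [plank, mem_ofPred_eq, inner_sub_left, ← Real.dist_eq, ← mem_closedBall,
    Real.closedBall_eq_Icc]

theorem solidCylinder_subset_plank {L : Submodule ℝ E} [L.HasOrthogonalProjection]
    {v : L} (hv : ‖v‖ = 1) (w : ℝ) :
    solidCylinder L (w / 2) ⊆ plank (v : E) 0 w := by
  intro x hx
  calc |⟪x - 0, (v : E)⟫| = |⟪L.orthogonalProjectionOnto x, v⟫| := by simp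
    _ ≤ ‖L.orthogonalProjectionOnto x‖ * ‖v‖ := abs_real_inner_le_norm _ _
    _ ≤ w / 2 := by rw [hv, mul_one]; exact hx

variable [FiniteDimensional ℝ E] [MeasurableSpace E] [BorelSpace E]

theorem measurePreserving_add_orthogonal (L : Submodule ℝ E) :
    MeasurePreserving fun p : L × Lᗮ ↦ (p.1 + p.2 : E) :=
  L.orthogonalDecomposition.symm.measurePreserving.comp (WithLp.volume_preserving_toLp L Lᗮ)

theorem measurePreserving_smul_add_orthogonal {u : E} (hu : ‖u‖ = 1) :
    MeasurePreserving fun p : ℝ × (ℝ ∙ u)ᗮ ↦ (p.1 • u + p.2 : E) :=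
  (measurePreserving_add_orthogonal (ℝ ∙ u)).comp <|
    (LinearIsometryEquiv.toSpanUnitSingleton u hu).measurePreserving.prod (.id volume)

theorem volume_setOf_norm_sq_le (hE : finrank ℝ E = 2) (c : ℝ) :
    volume {x : E | ‖x‖ ^ 2 ≤ c} = ENNReal.ofReal Real.pi * ENNReal.ofReal c := by
  have : Nontrivial E := nontrivial_of_finrank_pos (R := ℝ) (by lia)
  rcases lt_or_ge c 0 with hc | hc
  · have hempty : {x : E | ‖x‖ ^ 2 ≤ c} = ∅ :=
      eq_empty_of_forall_notMem fun x hx ↦ (hc.trans_le (sq_nonneg ‖x‖)).not_ge hx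
    rw [hempty, measure_empty, ENNReal.ofReal_of_nonpos hc.le, mul_zero]
  · have hball : {x : E | ‖x‖ ^ 2 ≤ c} = closedBall 0 √c := by
      ext x
      simp [Real.le_sqrt (norm_nonneg x) hc]
    rw [hball, InnerProductSpace.volume_closedBall_of_dim_even (k := 1) hE, hE,
      ← ENNReal.ofReal_pow c.sqrt_nonneg, Real.sq_sqrt hc, mul_comm]
    simp

theorem volume_setOf_norm_sq_mem_Ioc (hE : finrank ℝ E = 2) (a b : ℝ) :
    volume {x : E | ‖x‖ ^ 2 ∈ Ioc a b} =
      ENNReal.ofReal Real.pi * (ENNReal.ofReal b - ENNReal.ofReal a) := by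
  rcases le_total b a with hba | hab
  · rw [Ioc_eq_empty hba.not_gt, tsub_eq_zero_of_le (ENNReal.ofReal_le_ofReal hba)]
    simp
  · have hdiff : {x : E | ‖x‖ ^ 2 ∈ Ioc a b} = {x | ‖x‖ ^ 2 ≤ b} \ {x | ‖x‖ ^ 2 ≤ a} := by
      ext x
      simp [and_comm]
    have hsub : {x : E | ‖x‖ ^ 2 ≤ a} ⊆ {x | ‖x‖ ^ 2 ≤ b} := fun x hx ↦ le_trans hx hab
    have hmeas : MeasurableSet {x : E | ‖x‖ ^ 2 ≤ a} := measurableSet_le (by fun_prop) (by fun_prop)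
    have hfin : volume {x : E | ‖x‖ ^ 2 ≤ a} ≠ ⊤ := by
      rw [volume_setOf_norm_sq_le hE]
      finiteness
    rw [hdiff, measure_sdiff hsub hmeas.nullMeasurableSet hfin, volume_setOf_norm_sq_le hE,
      volume_setOf_norm_sq_le hE, ENNReal.mul_sub fun _ _ ↦ ENNReal.ofReal_ne_top]

theorem volume_shell_inter_slab (hE : finrank ℝ E = 3) {u : E} (hu : ‖u‖ = 1) (a b : ℝ) {s : Set ℝ}
    (hs : MeasurableSet s) :
    volume {x : E | ⟪x, u⟫ ∈ s ∧ ‖x‖ ^ 2 ∈ Ioc a b} =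
      ∫⁻ t in s, ENNReal.ofReal Real.pi *
        (ENNReal.ofReal (b - t ^ 2) - ENNReal.ofReal (a - t ^ 2)) := by
  have hmeas : MeasurableSet {x : E | ⟪x, u⟫ ∈ s ∧ ‖x‖ ^ 2 ∈ Ioc a b} :=
    (measurableSet_preimage (f := fun x : E ↦ ⟪x, u⟫) (by fun_prop) hs).inter <|
      measurableSet_preimage (f := fun x : E ↦ ‖x‖ ^ 2) (by fun_prop) measurableSet_Ioc
  have hmp := measurePreserving_smul_add_orthogonal hu
  have hplane : finrank ℝ (ℝ ∙ u)ᗮ = 2 :=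
    have : Fact (finrank ℝ E = 2 + 1) := ⟨hE⟩
    Submodule.finrank_orthogonal_span_singleton (norm_pos_iff.1 (by simp [hu]))
  have hinner (t : ℝ) (y : (ℝ ∙ u)ᗮ) : ⟪t • u + y, u⟫ = t := by
    rw [inner_add_left, real_inner_smul_left, real_inner_self_eq_norm_sq, hu,
      Submodule.mem_orthogonal_singleton_iff_inner_left.1 y.2]
    simp
  have hnorm (t : ℝ) (y : (ℝ ∙ u)ᗮ) : ‖t • u + (y : E)‖ ^ 2 = t ^ 2 + ‖y‖ ^ 2 := by
    simpa [norm_smul, hu] using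
      norm_sq_add_orthogonal (ℝ ∙ u) ⟨t • u, Submodule.mem_span_singleton.2 ⟨t, rfl⟩⟩ y
  rw [← hmp.measure_preimage hmeas.nullMeasurableSet, Measure.volume_eq_prod,
    Measure.prod_apply (hmp.measurable hmeas), ← lintegral_indicator hs]
  refine lintegral_congr fun t ↦ ?_
  by_cases ht : t ∈ s
  · rw [indicator_of_mem ht, ← volume_setOf_norm_sq_mem_Ioc hplane]
    congr 1
    ext y
    simp [hinner, hnorm, ht, sub_lt_iff_lt_add', le_sub_iff_add_le']
  · simp [ht, hinner]

theorem volume_shell_inter_slab_le (hE : finrank ℝ E = 3) {u : E} (hu : ‖u‖ = 1) (a b : ℝ)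
    {s : Set ℝ} (hs : MeasurableSet s) :
    volume {x : E | ⟪x, u⟫ ∈ s ∧ ‖x‖ ^ 2 ∈ Ioc a b} ≤
      ENNReal.ofReal Real.pi * ENNReal.ofReal (b - a) * volume s := by
  rw [volume_shell_inter_slab hE hu a b hs, ← setLIntegral_const]
  gcongr with t
  rw [tsub_le_iff_right, show b - t ^ 2 = b - a + (a - t ^ 2) by ring]
  exact ENNReal.ofReal_add_le

theorem volume_shell_inter_slab_eq (hE : finrank ℝ E = 3) {u : E} (hu : ‖u‖ = 1) {a : ℝ} (b : ℝ)
    {s : Set ℝ} (hs : MeasurableSet s) (hsa : ∀ t ∈ s, t ^ 2 ≤ a) :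
    volume {x : E | ⟪x, u⟫ ∈ s ∧ ‖x‖ ^ 2 ∈ Ioc a b} =
      ENNReal.ofReal Real.pi * ENNReal.ofReal (b - a) * volume s := by
  rw [volume_shell_inter_slab hE hu a b hs, ← setLIntegral_const]
  refine setLIntegral_congr_fun hs fun t ht ↦ ?_
  simp only [← ENNReal.ofReal_sub _ (sub_nonneg.2 (hsa t ht)), sub_sub_sub_cancel_right]

/-- For a unit vector `u` of a three-dimensional `L`, a bound for the density of the distribution
of `⟪·, u⟫` on the ball of radius `r` minus `solidCylinder L h`, attained on all of `[-h, h]`.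
The integrand is the area of a planar annulus with squared radii `r ^ 2 - ‖z‖ ^ 2 - t ^ 2` and
`h ^ 2 - t ^ 2`, which does not depend on `t`; it is truncated to `0` where the slice through `z`
is empty. -/
noncomputable def ballDiffSolidCylinderDensity (L : Submodule ℝ E) (h r : ℝ) : ENNReal :=
  ∫⁻ z : Lᗮ, ENNReal.ofReal Real.pi * ENNReal.ofReal (r ^ 2 - ‖z‖ ^ 2 - h ^ 2)

theorem measurableSet_solidCylinder (L : Submodule ℝ E) (h : ℝ) :
    MeasurableSet (solidCylinder L h) :=
  measurableSet_le (by fun_prop) (by fun_prop)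

theorem volume_plank_zero_inter_closedBall_eq {u v : E} (huv : ‖u‖ = ‖v‖) (w r : ℝ) :
    volume (plank u 0 w ∩ closedBall 0 r) = volume (plank v 0 w ∩ closedBall 0 r) := by
  let ρ := (ℝ ∙ (u - v))ᗮ.reflection
  have hρ : ρ u = v := Submodule.reflection_sub huv
  have hpre : ρ ⁻¹' (plank v 0 w ∩ closedBall 0 r) = plank u 0 w ∩ closedBall 0 r := by
    ext x
    simp [plank, ← hρ]
  rw [← hpre, ρ.measurePreserving.measure_preimage_emb ρ.toHomeomorph.measurableEmbedding]

section SolidCylinder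

variable {L : Submodule ℝ E} {h r : ℝ}

theorem volume_ball_diff_solidCylinder_inter (hh : 0 ≤ h) (hr : 0 ≤ r) (u : L)
    {s : Set ℝ} (hs : MeasurableSet s) :
    volume ({x : E | ⟪x, (u : E)⟫ ∈ s} ∩ (closedBall 0 r \ solidCylinder L h)) =
      ∫⁻ z : Lᗮ, volume {y : L | ⟪y, u⟫ ∈ s ∧ ‖y‖ ^ 2 ∈ Ioc (h ^ 2) (r ^ 2 - ‖z‖ ^ 2)} := by
  have hmeas : MeasurableSet ({x : E | ⟪x, (u : E)⟫ ∈ s} ∩ (closedBall 0 r \ solidCylinder L h)) :=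
    (measurableSet_preimage (f := fun x : E ↦ ⟪x, (u : E)⟫) (by fun_prop) hs).inter <|
      measurableSet_closedBall.diff (measurableSet_solidCylinder L h)
  have hmp := measurePreserving_add_orthogonal L
  rw [← hmp.measure_preimage hmeas.nullMeasurableSet, Measure.volume_eq_prod,
    Measure.prod_apply_symm (hmp.measurable hmeas)]
  refine lintegral_congr fun z ↦ congrArg volume ?_
  ext y
  have hinner : ⟪(y + z : E), (u : E)⟫ = ⟪y, u⟫ := by
    rw [inner_add_left, Submodule.inner_left_of_mem_orthogonal u.2 z.2, add_zero,
      Submodule.coe_inner]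
  have hproj : L.orthogonalProjectionOnto (y + z : E) = y := by simp
  have hball : ‖(y + z : E)‖ ≤ r ↔ ‖y‖ ^ 2 ≤ r ^ 2 - ‖z‖ ^ 2 := by
    rw [← sq_le_sq₀ (norm_nonneg _) hr, norm_sq_add_orthogonal, le_sub_iff_add_le]
  have hcyl : h < ‖y‖ ↔ h ^ 2 < ‖y‖ ^ 2 := (sq_lt_sq₀ hh (norm_nonneg _)).symm
  simp only [solidCylinder, mem_preimage, mem_inter_iff, mem_sdiff, mem_ofPred_eq,
    mem_closedBall_zero_iff, mem_Ioc, not_le, hinner, hproj, hball, hcyl]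
  tauto

theorem volume_plank_inter_ball_diff_solidCylinder_le (hL : finrank ℝ L = 3) (hh : 0 ≤ h)
    (hr : 0 ≤ r) {u : L} (hu : ‖u‖ = 1) (c : E) (w : ℝ) :
    volume (plank (u : E) c w ∩ (closedBall 0 r \ solidCylinder L h)) ≤
      ballDiffSolidCylinderDensity L h r * ENNReal.ofReal w := by
  let I := Icc (⟪c, (u : E)⟫ - w / 2) (⟪c, (u : E)⟫ + w / 2)
  have hplank : plank (u : E) c w = {x | ⟪x, (u : E)⟫ ∈ I} := ext fun _ ↦ mem_plank_iff
  have hI : volume I = ENNReal.ofReal w := by simp [I, Real.volume_Icc]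
  rw [hplank, volume_ball_diff_solidCylinder_inter hh hr u measurableSet_Icc,
    ballDiffSolidCylinderDensity, ← lintegral_mul_const _ (by fun_prop), ← hI]
  exact lintegral_mono fun z ↦ volume_shell_inter_slab_le hL hu _ _ measurableSet_Icc

theorem volume_plank_zero_inter_ball_diff_solidCylinder (hL : finrank ℝ L = 3) {w : ℝ} (hw : 0 ≤ w)
    (hr : 0 ≤ r) {v : L} (hv : ‖v‖ = 1) :
    volume (plank (v : E) 0 w ∩ (closedBall 0 r \ solidCylinder L (w / 2))) =
      ballDiffSolidCylinderDensity L (w / 2) r * ENNReal.ofReal w := by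
  let I := Icc (-(w / 2)) (w / 2)
  have hplank : plank (v : E) 0 w = {x | ⟪x, (v : E)⟫ ∈ I} := by
    ext x
    simp [mem_plank_iff, I]
  have hI : volume I = ENNReal.ofReal w := by simp [I, Real.volume_Icc]
  rw [hplank, volume_ball_diff_solidCylinder_inter (by positivity) hr v measurableSet_Icc,
    ballDiffSolidCylinderDensity, ← lintegral_mul_const _ (by fun_prop), ← hI]
  exact lintegral_congr fun z ↦ volume_shell_inter_slab_eq hL hv _ measurableSet_Icc
    fun t ht ↦ sq_le_sq' ht.1 ht.2

variable {ι : Type*} [Countable ι] {w : ι → ℝ} {W : ℝ}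

theorem volume_iUnion_plank_inter_closedBall_le_of_finrank_eq_three (hL : finrank ℝ L = 3)
    {u : ι → L} (hu : ∀ i, ‖u i‖ = 1) (c : ι → E) (hw : ∀ i, 0 ≤ w i) (hW : HasSum w W)
    {v : L} (hv : ‖v‖ = 1) (hr : 0 ≤ r) :
    volume ((⋃ i, plank (u i : E) (c i) (w i)) ∩ closedBall 0 r) ≤
      volume (plank (v : E) 0 W ∩ closedBall 0 r) := by
  have hW0 : 0 ≤ W := hW.nonneg hw
  let C := solidCylinder L (W / 2)
  let D := ballDiffSolidCylinderDensity L (W / 2) r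
  have hcover : (⋃ i, plank (u i : E) (c i) (w i)) ∩ closedBall 0 r ⊆
      closedBall 0 r ∩ C ∪ ⋃ i, plank (u i : E) (c i) (w i) ∩ (closedBall 0 r \ C) := by
    rw [← iUnion_inter]
    grind
  have hcore : plank (v : E) 0 W ∩ closedBall 0 r ∩ C = closedBall 0 r ∩ C := by
    grind [solidCylinder_subset_plank hv W]
  calc volume ((⋃ i, plank (u i : E) (c i) (w i)) ∩ closedBall 0 r)
    _ ≤ volume (closedBall 0 r ∩ C) +
          ∑' i, volume (plank (u i : E) (c i) (w i) ∩ (closedBall 0 r \ C)) :=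
      (measure_mono hcover).trans <| (measure_union_le _ _).trans <| by
        gcongr
        exact measure_iUnion_le _
    _ ≤ volume (closedBall 0 r ∩ C) + ∑' i, D * ENNReal.ofReal (w i) := by
      gcongr with i
      exact volume_plank_inter_ball_diff_solidCylinder_le hL (by positivity) hr (hu i) _ _
    _ = volume (closedBall 0 r ∩ C) + D * ENNReal.ofReal W := by
      rw [ENNReal.tsum_mul_left, ← ENNReal.ofReal_tsum_of_nonneg hw hW.summable, hW.tsum_eq]
    _ = volume (plank (v : E) 0 W ∩ closedBall 0 r ∩ C) +
          volume ((plank (v : E) 0 W ∩ closedBall 0 r) \ C) := by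
      rw [hcore, inter_sdiff_assoc, volume_plank_zero_inter_ball_diff_solidCylinder hL hW0 hr hv]
    _ = volume (plank (v : E) 0 W ∩ closedBall 0 r) :=
      measure_inter_add_sdiff _ (measurableSet_solidCylinder L _)

theorem three_planks_in_ball_general (hE : 3 ≤ finrank ℝ E) {u : ι → E} (hu : ∀ i, ‖u i‖ = 1)
    (hspan : finrank ℝ (Submodule.span ℝ (range u)) ≤ 3) (c : ι → E) (hw : ∀ i, 0 ≤ w i)
    (hW : HasSum w W) {v : E} (hv : ‖v‖ = 1) (hr : 0 ≤ r) :
    volume ((⋃ i, plank (u i) (c i) (w i)) ∩ closedBall 0 r) ≤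
      volume (plank v 0 W ∩ closedBall 0 r) := by
  obtain ⟨L, huL, hL⟩ := exists_submodule_ge_finrank_eq _ hspan hE
  have : Nontrivial L := nontrivial_of_finrank_pos (R := ℝ) (by lia)
  obtain ⟨v', hv'⟩ := exists_norm_eq L zero_le_one
  rw [volume_plank_zero_inter_closedBall_eq (v := (v' : E)) (hv.trans hv'.symm)]
  exact volume_iUnion_plank_inter_closedBall_le_of_finrank_eq_three hL
    (u := fun i ↦ ⟨u i, huL (Submodule.subset_span (mem_range_self i))⟩) hu c hw hW hv' hr

end SolidCylinder

/-- **Three planks covering part of a ball.** For planks `P₁, P₂, P₃` of widths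
`w₁, w₂, w₃` with `w₁ + w₂ + w₃ < 2` in `ℝ^d`, `d ≥ 3`, the volume of
`(P₁ ∪ P₂ ∪ P₃) ∩ B^d` is at most that of `P ∩ B^d` for a plank `P` of width
`w₁ + w₂ + w₃` centred at the origin. -/
theorem three_planks_in_ball {d : ℕ} (hd : 3 ≤ d)
    (P₁ P₂ P₃ : Set (EuclideanSpace ℝ (Fin d))) (w₁ w₂ w₃ : ℝ)
    (h₁ : IsPlank P₁ w₁) (h₂ : IsPlank P₂ w₂) (h₃ : IsPlank P₃ w₃)
    (hw : w₁ + w₂ + w₃ < 2)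
    (P : Set (EuclideanSpace ℝ (Fin d)))
    (u : EuclideanSpace ℝ (Fin d)) (hu : ‖u‖ = 1)
    (hP : P = {x | |⟪x, u⟫| ≤ (w₁ + w₂ + w₃) / 2}) :
    volume ((P₁ ∪ P₂ ∪ P₃) ∩ Metric.closedBall 0 1) ≤
      volume (P ∩ Metric.closedBall 0 1) := by
  obtain ⟨hw₁, u₁, c₁, hu₁, rfl⟩ := h₁
  obtain ⟨hw₂, u₂, c₂, hu₂, rfl⟩ := h₂
  obtain ⟨hw₃, u₃, c₃, hu₃, rfl⟩ := h₃
  have hplanks := three_planks_in_ball_general (u := ![u₁, u₂, u₃]) (w := ![w₁, w₂, w₃])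
    (by simpa using hd) (by simp [Fin.forall_fin_succ, hu₁, hu₂, hu₃])
    ((finrank_range_le_card _).trans_eq (Fintype.card_fin 3)) ![c₁, c₂, c₃]
    (by simp [Fin.forall_fin_succ, hw₁.le, hw₂.le, hw₃.le]) (hasSum_fintype _) hu zero_le_one
  have hunion (A : Fin 3 → Set (EuclideanSpace ℝ (Fin d))) : ⋃ i, A i = A 0 ∪ A 1 ∪ A 2 := by
    ext x
    simp [Fin.exists_fin_succ, or_assoc]
  rw [hunion] at hplanks
  simpa [Fin.sum_univ_three, plank, hP] using hplanks
end
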